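/- arXiv:2207.06365 — 2 statements merged into one kernel-verified Lean document; each statement's English description precedes it below -/
import Mathlib

section
/- Let k, t ≥ 2 be coprime integers and let 1 ≤ r, s ≤ t. Then as n → ∞, D_k^×(r,t;n) − D_k^×(s,t;n) = F_k(t;n) · ( ψ_{k,t}(r) − ψ_{k,t}(s) + O(n^{-1/2} · log n) ); that is, there exist C > 0 and N such that for all n ≥ N, |(D_k^×(r,t;n) − D_k^×(s,t;n))/F_k(t;n) − (ψ_{k,t}(r) − ψ_{k,t}(s))| ≤ C · n^{-1/2} · log n. Consequently, if ψ_{k,t}(r) > ψ_{k,t}(s), then D_k^×(r,t;n) > D_k^×(s,t;n) for all sufficiently large n. -/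
/-!
The proof is the circle method. Write `p_k(n)` for the number of partitions of `n` into parts not
divisible by `k`, and `ν_r(N)` for the number of divisors `m ≡ r (mod t)` of `N` with `k ∤ m`.
Counting, for each `m` and `j`, the partitions in which `m` occurs at least `j` times gives
`D_k^×(r,t;n) = ∑ ν_r(N) p_k(n - N)` (`Dkx_eq`), so that at `q = e^{-z}` the generating function
of the difference is `(L_r(z) - L_s(z)) P_k(q)` with `L_r = ∑ ν_r(N) q^N` and `P_k = ∑ p_k(n) q^n`
(`dd_gen`). Cauchy's formula on `z = x + iy`, `|y| ≤ π` (`dd_integral`), then reduces the theorem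
to the behaviour of the two factors. Throughout `A = π²(1 - 1/k)/6`, `N = √(An)` and `x = A/N`.

* The factor `P_k`. It is `φ(q^k)/φ(q)` with `φ` Euler's function, and the modularity of the
  Dedekind eta function gives `P_k(e^{-z}) = k^{-1/2} e^{A/z} (1 + O(z))` for `|y| ≤ x`
  (`Pk_transform`, `Pk_major`). For `x ≤ |y| ≤ π` it is smaller than `P_k(e^{-x})` by a factor
  `e^{-c/x}` (`Pk_minor`). The latter is elementary: the Euler factor of part `j` gains
  `exp(-c' (1 - cos jy))`, and the `j = O(1/x)` not divisible by `k` contain `≫ 1/x`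
  pairs whose phases `jy` cannot both be close to `2πℤ`.

* The factor `L_r - L_s`. By inclusion-exclusion `L_r` is the sum of `1/(e^{mz} - 1)` over
  `m ≡ r (mod t)` minus the sum of `1/(e^{lkz} - 1)` over `l ≡ r̄ (mod t)` (`LL_decomp`). In
  the difference of two such sums the function `1/(e^u - 1) - 1/u`, which has integrable derivative,
  contributes `O(1)`, while the poles `1/u` add up to a telescoping series for a difference of
  digamma values (`gg_tsum_asymp`, `tendsto_digamma_sub`). Hence
  `L_r(z) - L_s(z) = (ψ_{k,t}(r) - ψ_{k,t}(s))/(tz) + O(1)` for `|y| ≤ x` (`LL_asymp`), while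
  the trivial bound `O(x^{-2})` suffices elsewhere (`LL_crude`).

The main term left is `∫ e^{A/z + nz} dy/z` over `|y| ≤ x`; the substitution `z = x(1 + iv)` turns
it into `e^{2N} ∫ e^{-Nv²/(1+iv)} dv/(1+iv)`, which is `e^{2N} √(π/N) (1 + O(1/N))`, the terms of
first order being odd in `v` (`saddle`). Since `2N = π√(2Kn/3)`, this is the front factor `F_k(t;n)`
up to constants (`Fkt_eq`), and the resulting relative error is `O(n^{-1/2})`; the logarithm in the
theorem is not needed and is only used through `log n ≥ 1`.
-/

open scoped Real

/-- The digamma function `ψ(x) = Γ'(x)/Γ(x)`. -/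
noncomputable def digamma (x : ℝ) : ℝ := deriv Real.Gamma x / Real.Gamma x

/-- `Dkx k t r n` is the number of parts congruent to `r` mod `t`, counted with
multiplicity, among all partitions of `n` into parts not divisible by `k`. -/
noncomputable def Dkx (k t r n : ℕ) : ℕ :=
  ∑ p : n.Partition,
    if ∀ i ∈ p.parts, ¬ k ∣ i then (p.parts.filter (fun i => i % t = r % t)).card else 0

/-- The front factor `F_k(t;n)`. -/
noncomputable def Fkt (k t n : ℕ) : ℝ :=
  (3 : ℝ) ^ ((1 : ℝ)/4) * Real.exp (π * Real.sqrt (2 * (1 - 1/(k : ℝ)) * n / 3)) /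
    ((2 : ℝ) ^ ((3 : ℝ)/4) * (1 - 1/(k : ℝ)) ^ ((1 : ℝ)/4) * (n : ℝ) ^ ((1 : ℝ)/4)
      * π * (t : ℝ) * Real.sqrt k)

/-- The second-order bias term `ψ_{k,t}(r) = -ψ(r/t) + (1/k)ψ(r̄/t)`. -/
noncomputable def psikt (k t r rbar : ℕ) : ℝ :=
  -digamma ((r : ℝ)/(t : ℝ)) + (1/(k : ℝ)) * digamma ((rbar : ℝ)/(t : ℝ))

/-! ### Counting parts through divisors -/

/-- The number of partitions of `n` into parts not divisible by `k`. -/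
def rp (k n : ℕ) : ℕ := (Nat.Partition.restricted n (fun i => ¬ k ∣ i)).card

/-- Removing `j` copies of `m` is a bijection from the partitions of `n` in which `m` occurs at least
`j` times onto the partitions of `n - j * m`. -/
lemma card_count_ge {k m j n : ℕ} (hm : 1 ≤ m) (hkm : ¬ k ∣ m) (h : j * m ≤ n) :
    ((Nat.Partition.restricted n (fun i => ¬ k ∣ i)).filter
      (fun p => j ≤ p.parts.count m)).card = rp k (n - j * m) := by
  unfold rp
  refine Finset.card_bij'
    (fun p _ => if hp : j ≤ p.parts.count m then
      (⟨p.parts - Multiset.replicate j m, fun {i} hi => p.parts_pos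
        (Multiset.mem_of_le (Multiset.sub_le_self _ _) hi), by
          have h1 := Multiset.sub_add_cancel (Multiset.le_count_iff_replicate_le.1 hp)
          have h2 := congrArg Multiset.sum h1
          simp [p.parts_sum] at h2
          omega⟩ : (n - j * m).Partition) else Nat.Partition.indiscrete _)
    (fun q _ => (⟨q.parts + Multiset.replicate j m, fun {i} hi => by
        rcases Multiset.mem_add.1 hi with hi | hi
        · exact q.parts_pos hi
        · rw [Multiset.eq_of_mem_replicate hi]; omega, by
          simp [q.parts_sum]; omega⟩ : n.Partition)) ?_ ?_ ?_ ?_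
  · intro p hp
    simp only [Finset.mem_filter, Nat.Partition.restricted, Finset.mem_univ, true_and] at hp ⊢
    rw [dif_pos hp.2]
    intro i hi
    exact hp.1 i (Multiset.mem_of_le (Multiset.sub_le_self _ _) hi)
  · intro q hq
    simp only [Finset.mem_filter, Nat.Partition.restricted, Finset.mem_univ, true_and] at hq ⊢
    refine ⟨fun i hi => ?_, by simp⟩
    rcases Multiset.mem_add.1 hi with hi | hi
    · exact hq i hi
    · rw [Multiset.eq_of_mem_replicate hi]; exact hkm
  · intro p hp
    simp only [Finset.mem_filter] at hp
    ext1
    simp only [dif_pos hp.2]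
    exact Multiset.sub_add_cancel (Multiset.le_count_iff_replicate_le.1 hp.2)
  · intro q hq
    ext1
    simp

/-- The total number of parts congruent to `r` is a convolution: the multiplicity of `m` in a partition
is the number of `j ≥ 1` with `j ≤` multiplicity, so each pair `(m, j)` contributes the number of
partitions of `n - N`, where `N = j * m`. -/
lemma Dkx_eq (k t r n : ℕ) : Dkx k t r n =
    ∑ x ∈ Finset.HasAntidiagonal.antidiagonal n, (∑ m ∈ x.1.divisors,
      if ¬ k ∣ m ∧ m % t = r % t then 1 else 0) * rp k x.2 := by
  have key : ∀ m ∈ Finset.Icc 1 n, ∑ p ∈ Nat.Partition.restricted n (fun i => ¬ k ∣ i),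
      p.parts.count m = ∑ N ∈ (Finset.Icc 1 n).filter (m ∣ ·),
        if ¬ k ∣ m then rp k (n - N) else 0 := by
    intro m hm
    rw [Finset.mem_Icc] at hm
    by_cases hkm : k ∣ m
    · simp only [hkm, not_true_eq_false, if_false, Finset.sum_const_zero]
      refine Finset.sum_eq_zero fun p hp => ?_
      simp only [Nat.Partition.restricted, Finset.mem_filter] at hp
      exact Multiset.count_eq_zero.2 fun h => hp.2 m h hkm
    simp only [hkm, not_false_eq_true, if_true]
    have hc : ∀ p : n.Partition, p.parts.count m * m ≤ n := by
      intro p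
      have h1 := Multiset.sub_add_cancel
        (Multiset.le_count_iff_replicate_le.1 (le_refl (p.parts.count m)))
      have h2 := congrArg Multiset.sum h1
      simp only [Multiset.sum_add, p.parts_sum, Multiset.sum_replicate, smul_eq_mul] at h2
      omega
    calc ∑ p ∈ Nat.Partition.restricted n (fun i => ¬ k ∣ i), p.parts.count m
        = ∑ p ∈ Nat.Partition.restricted n (fun i => ¬ k ∣ i),
            ∑ j ∈ (Finset.Icc 1 n).filter (fun j => j * m ≤ n),
              if j ≤ p.parts.count m then 1 else 0 := by
          refine Finset.sum_congr rfl fun p _ => ?_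
          rw [← Finset.card_filter]
          refine (show p.parts.count m = (Finset.Icc 1 (p.parts.count m)).card by simp).trans ?_
          congr 1
          ext j
          simp only [Finset.mem_Icc, Finset.mem_filter]
          have := hc p
          constructor
          · rintro ⟨h1, h2⟩
            have h3 : j * m ≤ n := (Nat.mul_le_mul_right m h2).trans this
            exact ⟨⟨⟨h1, by nlinarith⟩, h3⟩, h2⟩
          · rintro ⟨⟨⟨h1, _⟩, _⟩, h2⟩
            exact ⟨h1, h2⟩
      _ = ∑ j ∈ (Finset.Icc 1 n).filter (fun j => j * m ≤ n), rp k (n - j * m) := by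
          rw [Finset.sum_comm]
          refine Finset.sum_congr rfl fun j hj => ?_
          rw [← card_count_ge hm.1 hkm (Finset.mem_filter.1 hj).2, Finset.card_filter]
      _ = _ := by
          refine Finset.sum_bij' (fun j _ => j * m) (fun N _ => N / m) ?_ ?_ ?_ ?_ ?_
          · intro j hj
            simp only [Finset.mem_filter, Finset.mem_Icc] at hj ⊢
            exact ⟨⟨Nat.mul_pos hj.1.1 hm.1, hj.2⟩, Dvd.intro_left j rfl⟩
          · intro N hN
            simp only [Finset.mem_filter, Finset.mem_Icc] at hN ⊢
            obtain ⟨⟨h1, h2⟩, d, rfl⟩ := hN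
            rw [Nat.mul_div_cancel_left _ hm.1]
            refine ⟨⟨Nat.pos_of_mul_pos_left h1, ?_⟩, by rwa [mul_comm]⟩
            nlinarith
          · intro j hj
            exact Nat.mul_div_cancel _ hm.1
          · intro N hN
            exact Nat.div_mul_cancel (Finset.mem_filter.1 hN).2
          · intro j hj; rfl
  have h1 : Dkx k t r n = ∑ m ∈ Finset.Icc 1 n, if m % t = r % t then
      ∑ p ∈ Nat.Partition.restricted n (fun i => ¬ k ∣ i), p.parts.count m else 0 := by
    unfold Dkx Nat.Partition.restricted
    rw [← Finset.sum_filter]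
    simp_rw [← Finset.sum_filter]
    rw [Finset.sum_comm]
    refine Finset.sum_congr (by ext; simp) fun p _ => ?_
    rw [← Multiset.sum_count_eq_card (s := (Finset.Icc 1 n).filter (fun m => m % t = r % t))]
    · refine Finset.sum_congr rfl fun m hm => ?_
      exact (Multiset.count_filter_of_pos (p := fun i => i % t = r % t) (Finset.mem_filter.1 hm).2)
    · intro a ha
      rw [Multiset.mem_filter] at ha
      rw [Finset.mem_filter, Finset.mem_Icc]
      exact ⟨⟨p.parts_pos ha.1, p.le_of_mem_parts ha.1⟩, ha.2⟩
  have h2 : ∀ N ∈ Finset.Icc 1 n, N.divisors = (Finset.Icc 1 n).filter (· ∣ N) := by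
    intro N hN
    rw [Finset.mem_Icc] at hN
    ext d
    simp only [Nat.mem_divisors, Finset.mem_filter, Finset.mem_Icc]
    constructor
    · rintro ⟨h, _⟩
      exact ⟨⟨Nat.pos_of_dvd_of_pos h hN.1, (Nat.le_of_dvd hN.1 h).trans hN.2⟩, h⟩
    · rintro ⟨_, h⟩
      exact ⟨h, by omega⟩
  rw [h1, Finset.Nat.sum_antidiagonal_eq_sum_range_succ_mk]
  have h3 : ∑ N ∈ Finset.range n.succ, (∑ m ∈ N.divisors,
      if ¬ k ∣ m ∧ m % t = r % t then 1 else 0) * rp k (n - N) =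
      ∑ N ∈ Finset.Icc 1 n, (∑ m ∈ N.divisors,
      if ¬ k ∣ m ∧ m % t = r % t then 1 else 0) * rp k (n - N) := by
    symm
    refine Finset.sum_subset (fun x => by simp only [Finset.mem_Icc, Finset.mem_range]; omega) fun N hN hN' => ?_
    have : N = 0 := by
      simp at hN hN'
      by_contra h
      exact absurd (hN' (by omega)) (by omega)
    simp [this]
  rw [h3]
  have h4 : ∀ N ∈ Finset.Icc 1 n, (∑ m ∈ N.divisors,
      if ¬ k ∣ m ∧ m % t = r % t then 1 else 0) * rp k (n - N) = ∑ m ∈ Finset.Icc 1 n,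
      if m ∣ N then (if ¬ k ∣ m ∧ m % t = r % t then 1 else 0) * rp k (n - N) else 0 := by
    intro N hN
    rw [h2 N hN, Finset.sum_mul, Finset.sum_filter]
  rw [Finset.sum_congr rfl h4, Finset.sum_comm,
    Finset.sum_congr rfl (fun m hm => by rw [key m hm])]
  refine Finset.sum_congr rfl fun m _ => ?_
  by_cases hk : k ∣ m <;> by_cases hr : m % t = r % t <;> simp [hk, hr, Finset.sum_filter]

/-! ### The generating function of `k`-regular partitions as an Euler product -/

/-- The power series `f` converges absolutely at `q`, with sum `s`. This is what allows the identities
for partition generating functions, available for formal power series, to be evaluated at `q`. -/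
def EvalsTo (f : PowerSeries ℂ) (q s : ℂ) : Prop :=
  Summable (fun n => ‖f.coeff n * q ^ n‖) ∧ ∑' n, f.coeff n * q ^ n = s

lemma EvalsTo.mul {f g : PowerSeries ℂ} {q a b : ℂ} (hf : EvalsTo f q a) (hg : EvalsTo g q b) :
    EvalsTo (f * g) q (a * b) := by
  have e : ∀ n, (f * g).coeff n * q ^ n = ∑ x ∈ Finset.HasAntidiagonal.antidiagonal n,
      (f.coeff x.1 * q ^ x.1) * (g.coeff x.2 * q ^ x.2) := by
    intro n
    rw [PowerSeries.coeff_mul, Finset.sum_mul]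
    refine Finset.sum_congr rfl fun x hx => ?_
    rw [← Finset.HasAntidiagonal.mem_antidiagonal.1 hx, pow_add]
    ring
  constructor
  · simp_rw [e]
    exact summable_norm_sum_mul_antidiagonal_of_summable_norm
      (f := fun n => f.coeff n * q ^ n) (g := fun n => g.coeff n * q ^ n) hf.1 hg.1
  · simp_rw [e]
    rw [← hf.2, ← hg.2]
    exact (tsum_mul_tsum_eq_tsum_sum_antidiagonal_of_summable_norm
      (f := fun n => f.coeff n * q ^ n) (g := fun n => g.coeff n * q ^ n) hf.1 hg.1).symm

lemma EvalsTo.one (q : ℂ) : EvalsTo 1 q 1 := by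
  have e : ∀ n, (1 : PowerSeries ℂ).coeff n * q ^ n = if n = 0 then 1 else 0 := by
    intro n
    rw [PowerSeries.coeff_one]
    split_ifs with h <;> simp [h]
  constructor
  · refine summable_of_ne_finset_zero (s := {0}) fun n hn => ?_
    rw [e, if_neg (by simpa using hn), norm_zero]
  · simp_rw [e]; simp

lemma EvalsTo.prod {ι : Type*} (s : Finset ι) (f : ι → PowerSeries ℂ) (q : ℂ) (a : ι → ℂ)
    (h : ∀ i ∈ s, EvalsTo (f i) q (a i)) : EvalsTo (∏ i ∈ s, f i) q (∏ i ∈ s, a i) := by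
  classical
  induction s using Finset.induction_on with
  | empty => simpa using EvalsTo.one q
  | insert i s hi ih =>
    rw [Finset.prod_insert hi, Finset.prod_insert hi]
    exact (h i (Finset.mem_insert_self _ _)).mul
      (ih fun j hj => h j (Finset.mem_insert_of_mem hj))

open scoped PowerSeries.WithPiTopology in
lemma tsum_X_pow (i : ℕ) : (∑' j : ℕ, (PowerSeries.X ^ ((i + 1) * j) : PowerSeries ℂ)) =
    PowerSeries.mk (fun n => if (i + 1) ∣ n then (1 : ℂ) else 0) := by
  refine HasSum.tsum_eq ?_
  rw [PowerSeries.WithPiTopology.hasSum_iff_hasSum_coeff]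
  intro n
  rw [PowerSeries.coeff_mk]
  simp_rw [PowerSeries.coeff_X_pow]
  by_cases h : (i + 1) ∣ n
  · obtain ⟨d, rfl⟩ := h
    rw [if_pos (Dvd.intro _ rfl)]
    have : (fun j => if (i + 1) * d = (i + 1) * j then (1 : ℂ) else 0) =
        fun j => if j = d then 1 else 0 := by
      ext j
      congr 1
      simp [eq_comm]
    rw [this]
    exact hasSum_ite_eq d 1
  · rw [if_neg h]
    have : (fun j => if n = (i + 1) * j then (1 : ℂ) else 0) = fun j => 0 := by
      ext j
      rw [if_neg]
      rintro rfl
      exact h (Dvd.intro _ rfl)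
    rw [this]
    exact hasSum_zero

lemma EvalsTo.geom (i : ℕ) {q : ℂ} (hq : ‖q‖ < 1) :
    EvalsTo (PowerSeries.mk (fun n => if (i + 1) ∣ n then (1 : ℂ) else 0)) q
      (1 - q ^ (i + 1))⁻¹ := by
  have hq' : ‖q ^ (i + 1)‖ < 1 := by
    rw [norm_pow]; exact pow_lt_one₀ (norm_nonneg _) hq (by omega)
  have hinj : Function.Injective (fun j : ℕ => (i + 1) * j) := fun a b h => by simpa using h
  have hs : HasSum (fun n => (if (i + 1) ∣ n then (1 : ℂ) else 0) * q ^ n)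
      (1 - q ^ (i + 1))⁻¹ := by
    rw [← hinj.hasSum_iff]
    · have := hasSum_geometric_of_norm_lt_one hq'
      have e : ((fun n => (if (i + 1) ∣ n then (1 : ℂ) else 0) * q ^ n) ∘ fun j => (i + 1) * j) =
          fun j => (q ^ (i + 1)) ^ j := by
        ext j
        simp [pow_mul]
      rw [e]
      exact this
    · intro n hn
      rw [if_neg, zero_mul]
      rintro ⟨d, rfl⟩
      exact hn ⟨d, rfl⟩
  constructor
  · simp_rw [PowerSeries.coeff_mk]
    refine Summable.of_nonneg_of_le (fun _ => norm_nonneg _) (fun n => ?_)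
      (summable_geometric_of_lt_one (norm_nonneg _) hq)
    rw [norm_mul, norm_pow]
    split_ifs <;> simp
  · simp_rw [PowerSeries.coeff_mk]
    exact hs.tsum_eq

/-- The number of partitions of `n` into parts that are at most `M` and not divisible by `k`. -/
def rpT (k M n : ℕ) : ℕ := (Nat.Partition.restricted n (fun i => ¬ k ∣ i ∧ i ≤ M)).card

lemma rpT_le (k M n : ℕ) : rpT k M n ≤ rp k n := by
  refine Finset.card_le_card fun p hp => ?_
  simp only [Nat.Partition.restricted, Finset.mem_filter] at hp ⊢
  exact ⟨hp.1, fun i hi => (hp.2 i hi).1⟩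

lemma rpT_eq {k M n : ℕ} (h : n ≤ M) : rpT k M n = rp k n := by
  unfold rpT rp
  congr 1
  ext p
  simp only [Nat.Partition.restricted, Finset.mem_filter]
  exact ⟨fun hp => ⟨hp.1, fun i hi => (hp.2 i hi).1⟩,
    fun hp => ⟨hp.1, fun i hi => ⟨hp.2 i hi, (p.le_of_mem_parts hi).trans h⟩⟩⟩

/-- The Euler factor at `q` of the part `m + 1`, which is `1` when `k ∣ m + 1` as that part is then
not allowed. -/
noncomputable def ef (k : ℕ) (q : ℂ) (m : ℕ) : ℂ := if ¬ k ∣ m + 1 then (1 - q ^ (m + 1))⁻¹ else 1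

open scoped PowerSeries.WithPiTopology in
lemma evalsTo_rpT (k M : ℕ) {q : ℂ} (hq : ‖q‖ < 1) :
    EvalsTo (PowerSeries.mk fun n => (rpT k M n : ℂ)) q (∏ m ∈ Finset.range M, ef k q m) := by
  have h1 := Nat.Partition.hasProd_powerSeriesMk_card_restricted ℂ (fun i => ¬ k ∣ i ∧ i ≤ M)
  have h2 : HasProd (fun i ↦ if ¬ k ∣ (i + 1) ∧ i + 1 ≤ M then
      ∑' j : ℕ, (PowerSeries.X ^ ((i + 1) * j) : PowerSeries ℂ) else 1)
      (∏ i ∈ Finset.range M, if ¬ k ∣ (i + 1) ∧ i + 1 ≤ M then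
      ∑' j : ℕ, (PowerSeries.X ^ ((i + 1) * j) : PowerSeries ℂ) else 1) := by
    refine hasProd_prod_of_ne_finset_one fun b hb => ?_
    rw [if_neg]
    rintro ⟨_, h⟩
    exact hb (Finset.mem_range.2 h)
  have h3 := h1.unique h2
  unfold rpT
  rw [h3]
  refine EvalsTo.prod _ _ _ _ fun i hi => ?_
  have hi' : i + 1 ≤ M := Finset.mem_range.1 hi
  unfold ef
  by_cases h : k ∣ i + 1
  · simp only [h, not_true_eq_false, false_and, if_false]
    exact EvalsTo.one q
  · simp only [h, not_false_eq_true, hi', and_self, if_true]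
    rw [tsum_X_pow]
    exact EvalsTo.geom i hq

lemma norm_ef_le (k m : ℕ) {q : ℂ} (hq : ‖q‖ < 1) : ‖ef k q m‖ ≤ (1 - ‖q‖ ^ (m + 1))⁻¹ := by
  have hq' : ‖q‖ ^ (m + 1) < 1 := pow_lt_one₀ (norm_nonneg _) hq (by omega)
  unfold ef
  by_cases h : ¬ k ∣ m + 1
  · rw [if_pos h, norm_inv]
    refine inv_anti₀ (by linarith) ?_
    have := norm_sub_norm_le 1 (q ^ (m + 1))
    rwa [norm_one, norm_pow] at this
  · rw [if_neg h, norm_one]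
    refine (one_le_inv₀ (by linarith)).2 ?_
    have : 0 ≤ ‖q‖ ^ (m + 1) := by positivity
    linarith

lemma prod_bounded {ρ : ℝ} (h0 : 0 ≤ ρ) (h1 : ρ < 1) : ∃ B : ℝ, ∀ M : ℕ,
    ∏ m ∈ Finset.range M, (1 - ρ ^ (m + 1))⁻¹ ≤ B := by
  have hs : Summable (fun m : ℕ => -ρ ^ (m + 1)) :=
    ((summable_nat_add_iff 1).2 (summable_geometric_of_lt_one h0 h1)).neg
  have hm : Multipliable (fun m : ℕ => 1 + -ρ ^ (m + 1)) :=
    multipliable_one_add_of_summable (by simpa using hs.abs)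
  have hlt : ∀ m : ℕ, ρ ^ (m + 1) < 1 := fun m => pow_lt_one₀ h0 h1 (by omega)
  have hne : ∏' m : ℕ, (1 + -ρ ^ (m + 1)) ≠ 0 := by
    refine tprod_one_add_ne_zero_of_summable (fun i => ?_) (by simpa using hs.abs)
    have := hlt i
    linarith
  have ht := hm.hasProd.tendsto_prod_nat.inv₀ hne
  obtain ⟨B, hB⟩ := ht.bddAbove_range
  refine ⟨B, fun M => ?_⟩
  have := hB ⟨M, rfl⟩
  simpa [Finset.prod_inv_distrib, sub_eq_add_neg] using this

/-- The partial sums are sums of truncated counts, hence bounded by a convergent Euler product. -/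
lemma rp_summable (k : ℕ) {ρ : ℝ} (h0 : 0 ≤ ρ) (h1 : ρ < 1) :
    Summable (fun n => (rp k n : ℝ) * ρ ^ n) := by
  obtain ⟨B, hB⟩ := prod_bounded h0 h1
  refine summable_of_sum_range_le (c := B) (fun n => by positivity) fun R => ?_
  have hq : ‖(ρ : ℂ)‖ < 1 := by simpa [abs_of_nonneg h0] using h1
  have he := evalsTo_rpT k R hq
  have hn : ∀ n, ‖(PowerSeries.mk fun n => (rpT k R n : ℂ)).coeff n * (ρ : ℂ) ^ n‖ =
      (rpT k R n : ℝ) * ρ ^ n := by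
    intro n
    simp [PowerSeries.coeff_mk, abs_of_nonneg h0]
  have hs : Summable (fun n => (rpT k R n : ℝ) * ρ ^ n) := by
    have := he.1
    simp_rw [hn] at this
    exact this
  calc ∑ n ∈ Finset.range R, (rp k n : ℝ) * ρ ^ n
      = ∑ n ∈ Finset.range R, (rpT k R n : ℝ) * ρ ^ n := by
        refine Finset.sum_congr rfl fun n hn => ?_
        rw [rpT_eq (Finset.mem_range.1 hn).le]
    _ ≤ ∑' n, (rpT k R n : ℝ) * ρ ^ n := hs.sum_le_tsum _ (fun n _ => by positivity)
    _ = ‖∏ m ∈ Finset.range R, ef k ρ m‖ := by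
        rw [← he.2]
        have : ∑' n, (PowerSeries.mk fun n => (rpT k R n : ℂ)).coeff n * (ρ : ℂ) ^ n =
            ((∑' n, (rpT k R n : ℝ) * ρ ^ n : ℝ) : ℂ) := by
          push_cast
          simp [PowerSeries.coeff_mk]
        rw [this, Complex.norm_real, Real.norm_of_nonneg (tsum_nonneg fun n => by positivity)]
    _ ≤ ∏ m ∈ Finset.range R, (1 - ρ ^ (m + 1))⁻¹ := by
        rw [norm_prod]
        refine Finset.prod_le_prod (fun _ _ => norm_nonneg _) fun m _ => ?_
        have := norm_ef_le k m hq
        simpa [abs_of_nonneg h0] using this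
    _ ≤ B := hB R

/-- The generating function of partitions into parts not divisible by `k`; it converges for
`‖q‖ < 1`. -/
noncomputable def Pk (k : ℕ) (q : ℂ) : ℂ := ∑' n, (rp k n : ℂ) * q ^ n

/-- The Euler product, obtained from the truncated products by dominated convergence. -/
lemma tendsto_prod_ef (k : ℕ) {q : ℂ} (hq : ‖q‖ < 1) :
    Filter.Tendsto (fun M => ∏ m ∈ Finset.range M, ef k q m) Filter.atTop (nhds (Pk k q)) := by
  have e : ∀ M, ∏ m ∈ Finset.range M, ef k q m = ∑' n, (rpT k M n : ℂ) * q ^ n := by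
    intro M
    rw [← (evalsTo_rpT k M hq).2]
    simp [PowerSeries.coeff_mk]
  simp_rw [e]
  refine tendsto_tsum_of_dominated_convergence (rp_summable k (norm_nonneg q) hq) (fun n => ?_)
    (Filter.Eventually.of_forall fun M n => ?_)
  · refine tendsto_const_nhds.congr' ?_
    filter_upwards [Filter.eventually_ge_atTop n] with M hM
    rw [rpT_eq hM]
  · rw [norm_mul, norm_pow, Complex.norm_natCast]
    gcongr
    exact rpT_le k M n

/-! ### The modular transformation -/

/-- Euler's function `φ(q) = ∏ (1 - q ^ n)` over `n ≥ 1`. -/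
noncomputable def phi (q : ℂ) : ℂ := ∏' n : ℕ, (1 - q ^ (n + 1))

/-- The finite form of `P_k(q) φ(q) = φ(q^k)`: in each block of `k` consecutive indices only the
multiple of `k` survives. -/
lemma prod_ef_mul {k : ℕ} (hk : 1 ≤ k) {q : ℂ} (hq : ‖q‖ < 1) (M : ℕ) :
    (∏ m ∈ Finset.range (k * M), ef k q m) * (∏ m ∈ Finset.range (k * M), (1 - q ^ (m + 1))) =
      ∏ m ∈ Finset.range M, (1 - (q ^ k) ^ (m + 1)) := by
  rw [← Finset.prod_mul_distrib]
  have hne : ∀ m : ℕ, 1 - q ^ (m + 1) ≠ 0 := by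
    intro m h
    have h1 : ‖q ^ (m + 1)‖ < 1 := by
      rw [norm_pow]; exact pow_lt_one₀ (norm_nonneg _) hq (by omega)
    rw [← sub_eq_zero.1 h, norm_one] at h1
    exact lt_irrefl _ h1
  induction M with
  | zero => simp
  | succ M ih =>
    rw [Finset.prod_range_succ, ← ih, mul_add, mul_one, Finset.prod_range_add]
    congr 1
    rw [Finset.prod_eq_single (k - 1)]
    · have : k * M + (k - 1) + 1 = k * (M + 1) := by rw [mul_add]; omega
      rw [ef, this, if_neg (by simp), one_mul, pow_mul]
    · intro b hb hb'
      have hb := Finset.mem_range.1 hb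
      rw [ef, if_pos, inv_mul_cancel₀ (hne _)]
      intro h
      rw [add_assoc, Nat.dvd_add_right (Dvd.intro _ rfl)] at h
      have := Nat.le_of_dvd (by omega) h
      omega
    · intro h
      exact absurd (Finset.mem_range.2 (by omega)) h

lemma tendsto_phi {q : ℂ} (hq : ‖q‖ < 1) : Filter.Tendsto
    (fun M => ∏ m ∈ Finset.range M, (1 - q ^ (m + 1))) Filter.atTop (nhds (phi q)) :=
  (ModularForm.multipliable_one_sub_pow hq).hasProd.tendsto_prod_nat

lemma Pk_mul_phi {k : ℕ} (hk : 1 ≤ k) {q : ℂ} (hq : ‖q‖ < 1) :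
    Pk k q * phi q = phi (q ^ k) := by
  have hq' : ‖q ^ k‖ < 1 := by
    rw [norm_pow]; exact pow_lt_one₀ (norm_nonneg _) hq (by omega)
  have hM : Filter.Tendsto (fun M => k * M) Filter.atTop Filter.atTop :=
    Filter.tendsto_id.const_mul_atTop' (by omega)
  have h1 := ((tendsto_prod_ef k hq).comp hM).mul ((tendsto_phi hq).comp hM)
  refine tendsto_nhds_unique h1 ?_
  refine (tendsto_phi hq').congr fun M => ?_
  exact (prod_ef_mul hk hq M).symm

open Complex in
lemma eta_exp (z : ℂ) : ModularForm.eta (I * z / (2 * π)) = cexp (-z / 24) * phi (cexp (-z)) := by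
  have hpi : (π : ℂ) ≠ 0 := by exact_mod_cast Real.pi_ne_zero
  unfold ModularForm.eta phi ModularForm.eta_q
  have e : ∀ h : ℝ, Function.Periodic.qParam h (I * z / (2 * π)) = cexp (-z / h) := by
    intro h
    unfold Function.Periodic.qParam
    congr 1
    have : 2 * (π : ℂ) * I * (I * z / (2 * π)) = I * I * z := by field_simp
    rw [this, I_mul_I]
    ring
  rw [e, e]
  simp

open Complex in
lemma phi_transform {z : ℂ} (hz : 0 < z.re) :
    cexp (-z / 24) * phi (cexp (-z)) = (sqrt I)⁻¹ * ((2 * π * I / z) ^ (1 / 2 : ℂ) *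
      (cexp (-(4 * π ^ 2 / z) / 24) * phi (cexp (-(4 * π ^ 2 / z))))) := by
  have hpi : (π : ℂ) ≠ 0 := by exact_mod_cast Real.pi_ne_zero
  have hz0 : z ≠ 0 := by rintro rfl; simp at hz
  have him : 0 < (2 * π * I / z).im := by
    have : 2 * π * I / z = ((2 * π : ℝ) : ℂ) * (I * z⁻¹) := by push_cast; field_simp
    rw [this, Complex.im_ofReal_mul, Complex.I_mul_im, Complex.inv_re]
    have := Complex.normSq_pos.2 hz0
    positivity
  have h := ModularForm.eta_comp_eq_csqrt_I_inv him
  simp only [Function.comp_apply, Pi.smul_apply, Pi.mul_apply, smul_eq_mul] at h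
  have e1 : -1 / (2 * π * I / z) = I * z / (2 * π) := by
    field_simp
    rw [I_sq]
  have e2 : 2 * π * I / z = I * (4 * π ^ 2 / z) / (2 * π) := by
    field_simp
    norm_num
  rw [e1, eta_exp] at h
  have e3 : ∀ w : ℂ, sqrt w = w ^ (1 / 2 : ℂ) := fun w => by simp [Complex.sqrt]
  rw [h, ← eta_exp, ← e2, e3 (2 * π * I / z)]

open Complex in
lemma phi_ne_zero {q : ℂ} (hq : ‖q‖ < 1) : phi q ≠ 0 := by
  unfold phi
  simp_rw [sub_eq_add_neg]
  refine tprod_one_add_ne_zero_of_summable (fun i h => ?_) ?_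
  · have h1 : ‖q ^ (i + 1)‖ < 1 := by
      rw [norm_pow]; exact pow_lt_one₀ (norm_nonneg _) hq (by omega)
    rw [← sub_eq_add_neg, sub_eq_zero] at h
    rw [← h, norm_one] at h1
    exact lt_irrefl _ h1
  · simpa using (summable_nat_add_iff 1).2 (summable_geometric_of_lt_one (norm_nonneg _) hq)

lemma norm_exp_lt_one {z : ℂ} (hz : 0 < z.re) : ‖Complex.exp (-z)‖ < 1 := by
  rw [Complex.norm_exp]
  simpa using hz

lemma re_div_pos {c : ℝ} (hc : 0 < c) {z : ℂ} (hz : 0 < z.re) : 0 < ((c : ℂ) / z).re := by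
  have hz0 : z ≠ 0 := by rintro rfl; simp at hz
  have := Complex.normSq_pos.2 hz0
  rw [div_eq_mul_inv, Complex.re_ofReal_mul, Complex.inv_re]
  positivity

/-- The modular transformation of the generating function. -/
lemma Pk_transform {k : ℕ} (hk : 1 ≤ k) {z : ℂ} (hz : 0 < z.re) :
    Pk k (Complex.exp (-z)) = (√(k : ℝ) : ℂ)⁻¹ * Complex.exp ((π ^ 2 * (1 - 1 / k) / 6 : ℝ) / z) *
      (Complex.exp (((k - 1) / 24 : ℝ) * z) * phi (Complex.exp (-((4 * π ^ 2 / k : ℝ) / z))) /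
        phi (Complex.exp (-((4 * π ^ 2 : ℝ) / z)))) := by
  have hz0 : z ≠ 0 := by rintro rfl; simp at hz
  have hk0 : (0 : ℝ) < k := by exact_mod_cast hk
  have hkc : (k : ℂ) ≠ 0 := by exact_mod_cast hk0.ne'
  have hkz : 0 < (k * z).re := by
    rw [← Complex.ofReal_natCast, Complex.re_ofReal_mul]; positivity
  have h1 := phi_transform hz
  have h2 := phi_transform hkz
  have h3 := Pk_mul_phi hk (norm_exp_lt_one hz)
  rw [← Complex.exp_nat_mul, mul_neg] at h3
  set φ1 := phi (Complex.exp (-z)) with hφ1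
  set φk := phi (Complex.exp (-(k * z)))
  have hφ1' : φ1 ≠ 0 := phi_ne_zero (norm_exp_lt_one hz)
  have hψ1 : phi (Complex.exp (-((4 * π ^ 2 : ℝ) / z))) ≠ 0 :=
    phi_ne_zero (norm_exp_lt_one (re_div_pos (by positivity) hz))
  have e1 : (4 * π ^ 2 / (k * z) : ℂ) = (4 * π ^ 2 / k : ℝ) / z := by push_cast; field_simp
  have e2 : (4 * π ^ 2 / z : ℂ) = (4 * π ^ 2 : ℝ) / z := by push_cast; rfl
  rw [e1] at h2
  rw [e2] at h1
  set ψ1 := phi (Complex.exp (-((4 * π ^ 2 : ℝ) / z)))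
  set ψk := phi (Complex.exp (-((4 * π ^ 2 / k : ℝ) / z)))
  have e3 : (2 * π * Complex.I / z : ℂ) ^ (1 / 2 : ℂ) =
      (√(k : ℝ) : ℂ) * (2 * π * Complex.I / (k * z)) ^ (1 / 2 : ℂ) := by
    have hw : (2 * π * Complex.I / (k * z) : ℂ) ≠ 0 := by
      have hpi : (π : ℂ) ≠ 0 := by exact_mod_cast Real.pi_ne_zero
      have := mul_ne_zero hkc hz0
      have h4 := mul_ne_zero (mul_ne_zero two_ne_zero hpi) Complex.I_ne_zero
      exact div_ne_zero h4 this
    have hw2 : (2 * π * Complex.I / z : ℂ) = (k : ℝ) * (2 * π * Complex.I / (k * z)) := by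
      push_cast; field_simp
    rw [hw2, Complex.cpow_def_of_ne_zero (mul_ne_zero (by exact_mod_cast hk0.ne') hw),
      Complex.cpow_def_of_ne_zero hw, Complex.log_ofReal_mul hk0 hw, add_mul, Complex.exp_add]
    congr 1
    rw [Real.sqrt_eq_rpow, Real.rpow_def_of_pos hk0]
    push_cast
    rfl
  have hS : (Complex.sqrt Complex.I)⁻¹ ≠ 0 := by
    intro h
    rw [h, zero_mul] at h1
    exact mul_ne_zero (Complex.exp_ne_zero _) hφ1' h1
  rw [e3] at h1
  set Rk := (2 * π * Complex.I / (k * z) : ℂ) ^ (1 / 2 : ℂ) with hRk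
  have hR : Rk ≠ 0 := by
    intro h
    rw [h, mul_zero, zero_mul, mul_zero] at h1
    exact mul_ne_zero (Complex.exp_ne_zero _) hφ1' h1
  have hsk : (√(k : ℝ) : ℂ) ≠ 0 := by exact_mod_cast (Real.sqrt_pos.2 hk0).ne'
  have r1 : Complex.exp ((π ^ 2 * (1 - 1 / k) / 6 : ℝ) / z) *
      Complex.exp (-((4 * π ^ 2 : ℝ) / z) / 24) =
      Complex.exp (-((4 * π ^ 2 / k : ℝ) / z) / 24) := by
    rw [← Complex.exp_add]; congr 1; push_cast; field_simp; ring
  have r2 : Complex.exp (-(k * z) / 24) * Complex.exp (((k - 1) / 24 : ℝ) * z) =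
      Complex.exp (-z / 24) := by
    rw [← Complex.exp_add]; congr 1; push_cast; ring
  have hX := Complex.exp_ne_zero (-((4 * π ^ 2 : ℝ) / z) / 24)
  rw [← r1] at h2
  rw [← r2] at h1
  set X := Complex.exp (-((4 * π ^ 2 : ℝ) / z) / 24)
  set Ek := Complex.exp (-(k * z) / 24)
  set G := Complex.exp (((k - 1) / 24 : ℝ) * z)
  set eA := Complex.exp ((π ^ 2 * (1 - 1 / k) / 6 : ℝ) / z)
  set sk := (√(k : ℝ) : ℂ)
  set S := (Complex.sqrt Complex.I)⁻¹
  have key : (S * Rk * X) * (Pk k (Complex.exp (-z)) * sk * ψ1) = (S * Rk * X) * (eA * G * ψk) := by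
    linear_combination (Pk k (Complex.exp (-z))) * (-h1) + G * h2 + Ek * G * h3
  have key2 := mul_left_cancel₀ (mul_ne_zero (mul_ne_zero hS hR) hX) key
  field_simp
  linear_combination key2

/-! ### The generating function near the real axis -/

open Asymptotics Filter Topology in
lemma isBigO_mul_sub_one {l : Filter ℂ} {f g : ℂ → ℂ} (hl : l ≤ 𝓝 0)
    (hf : (fun z => f z - 1) =O[l] (fun z => z)) (hg : (fun z => g z - 1) =O[l] (fun z => z)) :
    (fun z => f z * g z - 1) =O[l] (fun z => z) := by
  have h1 : (fun z : ℂ => z) =O[l] (fun _ => (1 : ℂ)) := by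
    have : Tendsto (fun z : ℂ => z) l (𝓝 0) := hl
    exact this.isBigO_one ℂ
  have h2 := hf.mul (hg.trans h1)
  simp only [mul_one] at h2
  exact (h2.add (hf.add hg)).congr (fun z => by ring) (fun z => rfl)

open Asymptotics Filter Topology in
lemma isBigO_comp_sub_one {l : Filter ℂ} {F u : ℂ → ℂ} (hl : l ≤ 𝓝 0)
    (hF : DifferentiableAt ℂ F 0) (hF0 : F 0 = 1) (hu : u =O[l] (fun z => z)) :
    (fun z => F (u z) - 1) =O[l] (fun z => z) := by
  have h1 := hF.isBigO_sub
  have h2 : Tendsto u l (𝓝 0) := hu.trans_tendsto hl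
  have h3 := h1.comp_tendsto h2
  refine IsBigO.trans ?_ hu
  refine h3.congr (fun z => ?_) (fun z => ?_) <;> simp [hF0]

/-- The cone `|arg z| ≤ π/4`, without the origin; the major arc is a segment inside it. -/
def cone : Set ℂ := {z | 0 < z.re ∧ |z.im| ≤ z.re}

lemma cone_norm {z : ℂ} (hz : z ∈ cone) : ‖z‖ ^ 2 ≤ 2 * z.re ^ 2 := by
  rw [Complex.sq_norm, Complex.normSq_apply]
  have := abs_le.1 hz.2
  nlinarith [sq_abs z.im, abs_nonneg z.im, hz.2, hz.1]

lemma cone_norm' {z : ℂ} (hz : z ∈ cone) : ‖z‖ ≤ 2 * z.re := by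
  have := cone_norm hz
  have h := hz.1
  by_contra! hc
  nlinarith

/-- The terms `e^{-c/z}` produced by the modular transformation vanish at least linearly at `0`
within the cone; linear decay is all that is used. -/
lemma norm_exp_neg_div_le {c : ℝ} (hc : 0 < c) {z : ℂ} (hz : z ∈ cone) :
    ‖Complex.exp (-((c : ℂ) / z))‖ ≤ 2 / c * ‖z‖ := by
  have hz0 : z ≠ 0 := by rintro rfl; simp [cone] at hz
  have hn : 0 < ‖z‖ := norm_pos_iff.2 hz0
  have h2 : (2 : ℝ)⁻¹ * (c / ‖z‖) ≤ ((c : ℂ) / z).re := by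
    rw [show (c : ℂ) / z = c * z⁻¹ from div_eq_mul_inv _ _, Complex.re_ofReal_mul,
      Complex.inv_re, Complex.normSq_eq_norm_sq]
    have := cone_norm' hz
    rw [show c * (z.re / ‖z‖ ^ 2) = (2 : ℝ)⁻¹ * (c / ‖z‖) * (2 * z.re / ‖z‖) by field_simp]
    refine le_mul_of_one_le_right (by positivity) ?_
    rw [le_div_iff₀ hn]
    linarith
  rw [Complex.norm_exp, Complex.neg_re]
  have h3 : 0 < (2 : ℝ)⁻¹ * (c / ‖z‖) := by positivity
  calc Real.exp (-((c : ℂ) / z).re) ≤ Real.exp (-((2 : ℝ)⁻¹ * (c / ‖z‖))) :=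
        Real.exp_le_exp.2 (neg_le_neg h2)
    _ = (Real.exp ((2 : ℝ)⁻¹ * (c / ‖z‖)))⁻¹ := Real.exp_neg _
    _ ≤ ((2 : ℝ)⁻¹ * (c / ‖z‖))⁻¹ := by
        refine inv_anti₀ h3 ?_
        have := Real.add_one_le_exp ((2 : ℝ)⁻¹ * (c / ‖z‖))
        linarith
    _ = _ := by field_simp

lemma phi_zero : phi 0 = 1 := by simp [phi]

lemma phi_diff : DifferentiableAt ℂ phi 0 := by
  have := ModularForm.differentiableOn_tprod_one_sub_pow
  exact this.differentiableAt (Metric.ball_mem_nhds _ one_pos)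

open Asymptotics Filter Topology in
/-- Near the real axis `Pk k (e^{-z})` is `e^{A/z}/√k` up to a factor `1 + O(z)`. -/
lemma Pk_major {k : ℕ} (hk : 1 ≤ k) : ∃ C > (0 : ℝ), ∃ x0 > (0 : ℝ), ∀ z ∈ cone, z.re < x0 →
    ‖Pk k (Complex.exp (-z)) -
      (√(k : ℝ) : ℂ)⁻¹ * Complex.exp ((π ^ 2 * (1 - 1 / k) / 6 : ℝ) / z)‖ ≤
      C * ‖z‖ * ‖Complex.exp ((π ^ 2 * (1 - 1 / k) / 6 : ℝ) / z)‖ := by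
  have hk0 : (0 : ℝ) < k := by exact_mod_cast hk
  set l : Filter ℂ := 𝓝[cone] 0
  have hl : l ≤ 𝓝 0 := nhdsWithin_le_nhds
  have hQ : ∀ c : ℝ, 0 < c → (fun z : ℂ => Complex.exp (-((c : ℂ) / z))) =O[l] (fun z => z) := by
    intro c hc
    refine IsBigO.of_bound (2 / c) ?_
    filter_upwards [self_mem_nhdsWithin] with z hz
    exact norm_exp_neg_div_le hc hz
  have h1 := isBigO_comp_sub_one hl phi_diff phi_zero (hQ (4 * π ^ 2 / k) (by positivity))
  have h2 := isBigO_comp_sub_one (F := fun z => (phi z)⁻¹) hl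
    (phi_diff.inv (by simp [phi_zero])) (by simp [phi_zero]) (hQ (4 * π ^ 2) (by positivity))
  have h3 := isBigO_comp_sub_one (F := fun z => Complex.exp (((k - 1) / 24 : ℝ) * z)) hl
    (by fun_prop) (by simp) (isBigO_refl (fun z : ℂ => z) l)
  have h4 := isBigO_mul_sub_one hl (isBigO_mul_sub_one hl h3 h1) h2
  obtain ⟨C, hC, hb⟩ := h4.exists_pos
  rw [IsBigOWith, Metric.nhdsWithin_basis_ball.eventually_iff] at hb
  obtain ⟨ε, hε, hb⟩ := hb
  refine ⟨(√(k : ℝ))⁻¹ * C, by positivity, ε / 2, by positivity, fun z hz hzx => ?_⟩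
  have hb := hb (x := z) ⟨by
    rw [Metric.mem_ball, dist_zero_right]
    linarith [cone_norm' hz], hz⟩
  rw [Pk_transform hk hz.1]
  have : ∀ a b c : ℂ, a * b * c - a * b = a * b * (c - 1) := fun a b c => by ring
  rw [this, norm_mul, norm_mul, norm_inv, Complex.norm_real,
    Real.norm_of_nonneg (Real.sqrt_nonneg _)]
  rw [← div_eq_mul_inv] at hb
  calc _ ≤ (√(k : ℝ))⁻¹ * ‖Complex.exp ((π ^ 2 * (1 - 1 / k) / 6 : ℝ) / z)‖ * (C * ‖z‖) := by
        gcongr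
    _ = _ := by ring

/-! ### The generating function away from the real axis -/

/-- If `2a - b` stays away from `2πℤ`, then so does `a` or `b`. -/
lemma one_sub_cos_sub_le (a b : ℝ) :
    1 - Real.cos (2 * a - b) ≤ 5 * ((1 - Real.cos a) + (1 - Real.cos b)) := by
  have h : ∀ x : ℝ, 1 - Real.cos x = 2 * Real.sin (x / 2) ^ 2 := by
    intro x
    have h1 := Real.cos_two_mul (x / 2)
    have h2 := Real.sin_sq_add_cos_sq (x / 2)
    rw [mul_div_cancel₀ x two_ne_zero] at h1
    linarith
  rw [h, h, h]
  set α := a / 2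
  set β := b / 2
  have : (2 * a - b) / 2 = 2 * α - β := by simp only [α, β]; ring
  rw [this, Real.sin_sub, Real.sin_two_mul]
  have hA := Real.sin_sq_add_cos_sq α
  have hB := Real.sin_sq_add_cos_sq β
  have hC := Real.sin_sq_add_cos_sq (2 * α)
  set p := Real.sin α
  set q := Real.sin β
  set P := Real.cos α
  set Q := Real.cos β
  set R := Real.cos (2 * α)
  have h1 : (2 * p * P * Q - R * q) ^ 2 + (2 * P * Q * q + R * p) ^ 2 =
    ((2 * P * Q) ^ 2 + R ^ 2) * (p ^ 2 + q ^ 2) := by ring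
  have h2 : P ^ 2 ≤ 1 := by nlinarith [sq_nonneg p]
  have h3 : Q ^ 2 ≤ 1 := by nlinarith [sq_nonneg q]
  have h4 : R ^ 2 ≤ 1 := by nlinarith [sq_nonneg (Real.sin (2 * α))]
  have h5 : (2 * P * Q) ^ 2 + R ^ 2 ≤ 5 := by nlinarith [sq_nonneg P, sq_nonneg Q, mul_le_mul h2 h3 (sq_nonneg _) zero_le_one]
  have h6 : 0 ≤ p ^ 2 + q ^ 2 := by positivity
  nlinarith [sq_nonneg (2 * P * Q * q + R * p), mul_le_mul_of_nonneg_right h5 h6]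

/-- The Euler factor of the part `j = m + 1` is smaller off the positive axis than on it, since
`|1 - a e^{iθ}|² = (1 - a)² + 2a(1 - cos θ)` with `a = e^{-jx}` and `θ = -jy`. -/
lemma ef_norm_le (k : ℕ) {x : ℝ} (hx : 0 < x) (y : ℝ) (m : ℕ) :
    ‖ef k (Complex.exp (-(x + y * Complex.I))) m‖ ≤ ‖ef k (Complex.exp (-(x : ℂ))) m‖ *
      Real.exp (-(if ¬ k ∣ m + 1 then
        Real.exp (-((m + 1 : ℕ) * x)) * (1 - Real.cos ((m + 1 : ℕ) * y)) / 8 else 0)) := by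
  unfold ef
  split_ifs with h
  · simp
  set a := Real.exp (-((m + 1 : ℕ) * x)) with ha
  set g := 1 - Real.cos ((m + 1 : ℕ) * y) with hg
  have ha0 : 0 < a := Real.exp_pos _
  have ha1 : a < 1 := by
    rw [ha, Real.exp_lt_one_iff]
    have : (0 : ℝ) < (m + 1 : ℕ) * x := by positivity
    linarith
  have hg0 : 0 ≤ g := by have := Real.cos_le_one ((m + 1 : ℕ) * y); linarith
  have hg2 : g ≤ 2 := by have := Real.neg_one_le_cos ((m + 1 : ℕ) * y); linarith
  have e1 : Complex.exp (-(x : ℂ)) ^ (m + 1) = (a : ℂ) := by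
    rw [← Complex.exp_nat_mul, ha]; push_cast; congr 1; ring
  have e2 : ‖1 - Complex.exp (-(x + y * Complex.I)) ^ (m + 1)‖ ^ 2 = (1 - a) ^ 2 + 2 * a * g := by
    have : Complex.exp (-(x + y * Complex.I)) ^ (m + 1) =
        (a : ℂ) * Complex.exp ((-((m + 1 : ℕ) * y) : ℝ) * Complex.I) := by
      rw [← Complex.exp_nat_mul, ha, Complex.ofReal_exp, ← Complex.exp_add]
      push_cast; congr 1; ring
    rw [this, Complex.exp_mul_I, ← Complex.ofReal_cos, ← Complex.ofReal_sin, Complex.sq_norm,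
      Complex.normSq_apply, Real.cos_neg, Real.sin_neg]
    simp only [Complex.sub_re, Complex.sub_im, Complex.mul_re, Complex.mul_im, Complex.add_re,
      Complex.add_im, Complex.ofReal_re, Complex.ofReal_im, Complex.one_re, Complex.one_im,
      Complex.I_re, Complex.I_im]
    have := Real.sin_sq_add_cos_sq ((m + 1 : ℕ) * y)
    rw [hg]
    linear_combination a ^ 2 * this
  rw [e1]
  have e3 : ‖(1 - (a : ℂ))⁻¹‖ = (1 - a)⁻¹ := by
    rw [norm_inv]
    norm_cast
    rw [Real.norm_of_nonneg (by linarith)]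
  rw [e3, norm_inv, Real.exp_neg, ← mul_inv]
  refine inv_anti₀ (mul_pos (by linarith) (Real.exp_pos _)) ?_
  refine le_of_sq_le_sq ?_ (norm_nonneg _)
  rw [e2, mul_pow, ← Real.exp_nat_mul]
  set v := a * g / 4 with hv
  have hv0 : 0 ≤ v := by positivity
  have hv1 : v ≤ 1 / 2 := by rw [hv]; nlinarith
  have : ((2 : ℕ) : ℝ) * (a * g / 8) = v := by rw [hv]; push_cast; ring
  rw [this]
  have h1 : Real.exp v ≤ 1 + 2 * v := by
    have h2 := Real.one_sub_le_exp_neg v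
    have h3 : Real.exp v * Real.exp (-v) = 1 := by rw [← Real.exp_add]; simp
    have h4 := Real.exp_pos v
    have h5 : Real.exp v * (1 - v) ≤ 1 :=
      (mul_le_mul_of_nonneg_left h2 h4.le).trans_eq h3
    have h6 : 1 ≤ (1 + 2 * v) * (1 - v) := by nlinarith
    by_contra! hc
    have : (1 + 2 * v) * (1 - v) < Real.exp v * (1 - v) := by
      apply mul_lt_mul_of_pos_right hc; linarith
    linarith
  have h7 : (1 - a) ^ 2 ≤ 1 := by nlinarith
  have h8 : 0 ≤ (1 - a) ^ 2 := sq_nonneg _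
  calc (1 - a) ^ 2 * Real.exp v ≤ (1 - a) ^ 2 * (1 + 2 * v) := by gcongr
    _ ≤ _ := by
      rw [hv]; nlinarith [mul_nonneg ha0.le hg0, mul_le_mul_of_nonneg_right h7 (mul_nonneg ha0.le hg0)]

/-- The gain over the positive axis collected from the Euler factors of any finite set of allowed
parts. -/
lemma Pk_norm_le (k : ℕ) {x : ℝ} (hx : 0 < x) (y : ℝ) (S : Finset ℕ)
    (hS : ∀ j ∈ S, 1 ≤ j ∧ ¬ k ∣ j) :
    ‖Pk k (Complex.exp (-(x + y * Complex.I)))‖ ≤ ‖Pk k (Complex.exp (-(x : ℂ)))‖ *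
      Real.exp (-∑ j ∈ S, Real.exp (-(j * x)) * (1 - Real.cos (j * y)) / 8) := by
  have h1 := (tendsto_prod_ef k (norm_exp_lt_one (z := x + y * Complex.I) (by simpa using hx))).norm
  have h2 := (tendsto_prod_ef k (norm_exp_lt_one (z := x) (by simpa using hx))).norm
  refine le_of_tendsto_of_tendsto h1 (h2.mul_const _) ?_
  obtain ⟨B, hB⟩ := S.bddAbove
  filter_upwards [Filter.eventually_ge_atTop (B + 1)] with M hM
  rw [norm_prod, norm_prod]
  set w : ℕ → ℝ := fun m => if ¬ k ∣ m then
        Real.exp (-((m : ℕ) * x)) * (1 - Real.cos ((m : ℕ) * y)) / 8 else 0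
  have hw : ∀ m, 0 ≤ w m := by
    intro m
    simp only [w]
    split_ifs
    · exact le_rfl
    · have := Real.cos_le_one (m * y)
      have := Real.exp_pos (-(m * x))
      exact div_nonneg (mul_nonneg this.le (by linarith)) (by norm_num)
  calc _ ≤ ∏ m ∈ Finset.range M, (‖ef k (Complex.exp (-(x : ℂ))) m‖ * Real.exp (-w (m + 1))) :=
        Finset.prod_le_prod (fun _ _ => norm_nonneg _) fun m _ => ef_norm_le k hx y m
    _ = (∏ m ∈ Finset.range M, ‖ef k (Complex.exp (-(x : ℂ))) m‖) *
        Real.exp (-∑ m ∈ Finset.range M, w (m + 1)) := by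
      rw [Finset.prod_mul_distrib, ← Real.exp_sum, Finset.sum_neg_distrib]
    _ ≤ _ := by
      refine mul_le_mul_of_nonneg_left ?_ (Finset.prod_nonneg fun _ _ => norm_nonneg _)
      refine Real.exp_le_exp.2 (neg_le_neg ?_)
      calc _ = ∑ j ∈ S, w j := Finset.sum_congr rfl fun j hj => by
            simp only [w]; rw [if_pos (hS j hj).2]
        _ ≤ ∑ j ∈ (Finset.range M).image (· + 1), w j := by
          refine Finset.sum_le_sum_of_subset_of_nonneg (fun j hj => ?_) fun _ _ _ => hw _
          have := hB hj
          have := (hS j hj).1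
          exact Finset.mem_image.2 ⟨j - 1, Finset.mem_range.2 (by omega), by omega⟩
        _ = _ := Finset.sum_image fun _ _ _ _ h => by simpa using h

/-- A multiplier `D ≡ 1` modulo `k` moving `y` well away from the multiples of `2π`. -/
lemma exists_mult {k : ℕ} (hk : 2 ≤ k) {x y : ℝ} (hx : 0 < x) (hx1 : x ≤ 1) (hxy : x ≤ |y|)
    (hy : |y| ≤ π) : ∃ D : ℕ, 1 ≤ D ∧ D % k = 1 ∧ 1 / k ≤ D * |y| ∧ D * |y| ≤ π ∧ D * x ≤ 2 := by
  have hk0 : (2 : ℝ) ≤ k := by exact_mod_cast hk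
  by_cases h : 1 / k ≤ |y|
  · refine ⟨1, le_rfl, Nat.mod_eq_of_lt (by omega), ?_, ?_, ?_⟩ <;> simp only [Nat.cast_one, one_mul]
    · exact h
    · exact hy
    · linarith
  · push Not at h
    have hy0 : 0 < |y| := by linarith
    set u := k * |y| with hu
    have hu0 : 0 < u := by positivity
    have hu1 : u < 1 := by rw [lt_div_iff₀ (by linarith)] at h; linarith
    -- adding `f` steps of length `k|y| < 1` brings `D|y|` between `1/k` and `2`
    set f := ⌊1 / u⌋₊ with hf
    have hf1 : (f : ℝ) ≤ 1 / u := Nat.floor_le (by positivity)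
    have hf2 : 1 / u < f + 1 := Nat.lt_floor_add_one _
    have hf3 : 1 ≤ f := by
      rw [hf]; apply Nat.le_floor; rw [Nat.cast_one, le_div_iff₀ hu0]; linarith
    have hf3' : (1 : ℝ) ≤ f := by exact_mod_cast hf3
    rw [le_div_iff₀ hu0] at hf1
    rw [div_lt_iff₀ hu0] at hf2
    have hD : ((1 + k * f : ℕ) : ℝ) * |y| = |y| + f * u := by push_cast; rw [hu]; ring
    have hyk : |y| ≤ 1 / 2 := by
      refine h.le.trans ?_
      exact one_div_le_one_div_of_le (by norm_num) hk0
    have h12 : (1 : ℝ) / k ≤ 1 / 2 := one_div_le_one_div_of_le (by norm_num) hk0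
    have hD2 : ((1 + k * f : ℕ) : ℝ) * |y| ≤ 2 := by rw [hD]; linarith
    refine ⟨1 + k * f, by omega, ?_, ?_, ?_, ?_⟩
    · rw [Nat.add_mul_mod_self_left, Nat.mod_eq_of_lt (by omega)]
    · rw [hD]; nlinarith
    · have := Real.pi_gt_three; linarith
    · refine le_trans ?_ hD2; gcongr

/-- Away from the real axis the generating function is exponentially smaller than on it. With the
multiplier `D` of `exists_mult`, take the parts `j₁ = ki + D` and `j₂ = 2ki + D` for `i < 1/x`, none
of which is divisible by `k`. As `2j₁ - j₂ = D` and `Dy` is far from `2πℤ`, one of `j₁y`, `j₂y` is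
far from `2πℤ`, so the gain in the exponent is `≫ 1/x`. -/
lemma Pk_minor {k : ℕ} (hk : 2 ≤ k) : ∃ c > (0 : ℝ), ∀ x y : ℝ, 0 < x → x ≤ 1 → x ≤ |y| →
    |y| ≤ π → ‖Pk k (Complex.exp (-(x + y * Complex.I)))‖ ≤
      ‖Pk k (Complex.exp (-(x : ℂ)))‖ * Real.exp (-(c / x)) := by
  have hk0 : (2 : ℝ) ≤ k := by exact_mod_cast hk
  have h12 : (1 : ℝ) / k ≤ 1 / 2 := one_div_le_one_div_of_le (by norm_num) hk0
  have hk1 : (0 : ℝ) < 1 / k := by positivity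
  set g0 := 1 - Real.cos (1 / k) with hg0
  have hg0' : 0 < g0 := by
    have : Real.cos (1 / k) < Real.cos 0 := by
      apply Real.cos_lt_cos_of_nonneg_of_le_pi le_rfl _ hk1
      have := Real.pi_gt_three; linarith
    rw [Real.cos_zero] at this
    linarith
  refine ⟨Real.exp (-(2 * k + 2)) * g0 / 160, by positivity, fun x y hx hx1 hxy hy => ?_⟩
  obtain ⟨D, hD1, hDk, hDy, hDy', hDx⟩ := exists_mult hk hx hx1 hxy hy
  have hgD : g0 ≤ 1 - Real.cos (D * y) := by
    rw [hg0, ← Real.cos_abs (D * y), abs_mul, Nat.abs_cast]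
    have := Real.cos_le_cos_of_nonneg_of_le_pi hk1.le hDy' hDy
    linarith
  set I := ⌊1 / x⌋₊ with hI
  have hI1 : (I : ℝ) ≤ 1 / x := Nat.floor_le (by positivity)
  have hI2 : 1 / x < I + 1 := Nat.lt_floor_add_one _
  have hI3 : 1 ≤ I := by
    rw [hI]; apply Nat.le_floor; rw [Nat.cast_one, le_div_iff₀ hx]; linarith
  have hI3' : (1 : ℝ) ≤ I := by exact_mod_cast hI3
  -- contains all `ki + D` and `2ki + D` with `i < I`, and `e^{-jx}` is bounded below on it
  set S := (Finset.range (2 * k * I + D + 1)).filter (fun j => ¬ k ∣ j) with hSdef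
  have hdvd : ∀ a : ℕ, ¬ k ∣ k * a + D := by
    intro a h
    rw [Nat.dvd_add_right (Dvd.intro _ rfl)] at h
    have := Nat.mod_eq_zero_of_dvd h
    omega
  refine (Pk_norm_le k hx y S fun j hj => ?_).trans ?_
  · have := (Finset.mem_filter.1 hj).2
    refine ⟨Nat.one_le_iff_ne_zero.2 ?_, this⟩
    rintro rfl
    simp at this
  refine mul_le_mul_of_nonneg_left (Real.exp_le_exp.2 (neg_le_neg ?_)) (norm_nonneg _)
  set F : ℕ → ℝ := fun j => 1 - Real.cos (j * y) with hF
  have hF0 : ∀ j, 0 ≤ F j := fun j => by have := Real.cos_le_one (j * y); simp only [hF]; linarith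
  set E := Real.exp (-(2 * k + 2)) with hE
  have hE0 : 0 < E := Real.exp_pos _
  have s1 : ∀ a ∈ ({1, 2} : Finset ℕ), ∑ i ∈ Finset.range I, F (k * (a * i) + D) ≤ ∑ j ∈ S, F j := by
    intro a ha
    have ha' : 1 ≤ a ∧ a ≤ 2 := by simp at ha; omega
    have hinj : Set.InjOn (fun i => k * (a * i) + D) (Finset.range I : Set ℕ) := by
      intro i _ j _ h
      have h1 : k * (a * i) = k * (a * j) := by simpa using h
      have h2 := Nat.eq_of_mul_eq_mul_left (by omega) h1
      exact Nat.eq_of_mul_eq_mul_left (by omega) h2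
    rw [← Finset.sum_image (f := F) hinj]
    refine Finset.sum_le_sum_of_subset_of_nonneg (fun j hj => ?_) fun _ _ _ => hF0 _
    obtain ⟨i, hi, rfl⟩ := Finset.mem_image.1 hj
    refine Finset.mem_filter.2 ⟨Finset.mem_range.2 ?_, hdvd _⟩
    have h3 : a * i ≤ 2 * I := Nat.mul_le_mul ha'.2 (Finset.mem_range.1 hi).le
    have := Nat.mul_le_mul_left k h3
    have h4 : k * (2 * I) = 2 * k * I := by ring
    omega
  have s2 : (I : ℝ) * (g0 / 5) ≤ 2 * ∑ j ∈ S, F j := by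
    have h1 := s1 1 (by simp)
    have h2 := s1 2 (by simp)
    have h3 : ∑ i ∈ Finset.range I, (g0 / 5) ≤
        ∑ i ∈ Finset.range I, (F (k * (1 * i) + D) + F (k * (2 * i) + D)) := by
      refine Finset.sum_le_sum fun i _ => ?_
      have h4 := one_sub_cos_sub_le ((k * (1 * i) + D : ℕ) * y) ((k * (2 * i) + D : ℕ) * y)
      have h5 : 2 * (((k * (1 * i) + D : ℕ) : ℝ) * y) - ((k * (2 * i) + D : ℕ) : ℝ) * y = D * y := by
        push_cast; ring
      rw [h5] at h4
      simp only [hF]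
      linarith
    rw [Finset.sum_const, Finset.card_range, nsmul_eq_mul, Finset.sum_add_distrib] at h3
    linarith
  have s3 : ∑ j ∈ S, E * F j / 8 ≤ ∑ j ∈ S, Real.exp (-(j * x)) * F j / 8 := by
    refine Finset.sum_le_sum fun j hj => ?_
    have := hF0 j
    gcongr
    refine Real.exp_le_exp.2 (neg_le_neg ?_)
    have h1 : j ≤ 2 * k * I + D := by
      have := Finset.mem_range.1 (Finset.mem_filter.1 hj).1; omega
    have h2 : (j : ℝ) ≤ 2 * k * I + D := by exact_mod_cast h1
    rw [le_div_iff₀ hx] at hI1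
    calc (j : ℝ) * x ≤ (2 * k * I + D) * x := by gcongr
      _ = 2 * k * (I * x) + D * x := by ring
      _ ≤ 2 * k * 1 + 2 := by gcongr
      _ = _ := by ring
  refine le_trans ?_ s3
  rw [← Finset.sum_div, ← Finset.mul_sum]
  have h9 : 1 / x ≤ 2 * I := by linarith
  calc E * g0 / 160 / x = E * g0 / 160 * (1 / x) := by ring
    _ ≤ E * g0 / 160 * (2 * I) := by gcongr
    _ = E * (I * (g0 / 5)) / 16 := by ring
    _ ≤ E * (2 * ∑ j ∈ S, F j) / 16 := by gcongr
    _ = _ := by ring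

/-! ### The digamma function as a telescoping series -/

lemma gamma_diff {x : ℝ} (hx : 0 < x) : DifferentiableAt ℝ Real.Gamma x :=
  Real.differentiableAt_Gamma fun m h => by
    have : (0 : ℝ) ≤ m := m.cast_nonneg
    linarith

lemma deriv_log_gamma {x : ℝ} (hx : 0 < x) : deriv (Real.log ∘ Real.Gamma) x = digamma x := by
  have := (gamma_diff hx).hasDerivAt.log (Real.Gamma_pos_of_pos hx).ne'
  exact this.deriv

/-- Digamma is the derivative of the convex function `log Γ`. -/
lemma digamma_mono : MonotoneOn digamma (Set.Ioi 0) := by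
  have h := Real.convexOn_log_Gamma.monotoneOn_deriv fun x hx =>
    ((gamma_diff hx).log (Real.Gamma_pos_of_pos hx).ne')
  intro x hx y hy hxy
  have := h hx hy hxy
  rwa [deriv_log_gamma hx, deriv_log_gamma hy] at this

lemma digamma_add_one {x : ℝ} (hx : 0 < x) : digamma (x + 1) = digamma x + 1 / x := by
  have hG := Real.Gamma_pos_of_pos hx
  have h1 : HasDerivAt (fun y => Real.Gamma (y + 1)) (deriv Real.Gamma (x + 1)) x :=
    (gamma_diff (by linarith : 0 < x + 1)).hasDerivAt.comp_add_const x 1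
  have h2 : HasDerivAt (fun y => y * Real.Gamma y) (1 * Real.Gamma x + x * deriv Real.Gamma x) x :=
    (hasDerivAt_id x).mul (gamma_diff hx).hasDerivAt
  have h3 : (fun y => y * Real.Gamma y) =ᶠ[nhds x] fun y => Real.Gamma (y + 1) := by
    filter_upwards [lt_mem_nhds hx] with y hy
    exact (Real.Gamma_add_one hy.ne').symm
  have h4 := (h1.congr_of_eventuallyEq h3).unique h2
  unfold digamma
  rw [h4, Real.Gamma_add_one hx.ne']
  field_simp
  ring

lemma digamma_add_nat {x : ℝ} (hx : 0 < x) (J : ℕ) :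
    digamma (x + J) = digamma x + ∑ j ∈ Finset.range J, 1 / (j + x) := by
  induction J with
  | zero => simp
  | succ J ih =>
    rw [Finset.sum_range_succ, ← add_assoc, ← ih]
    push_cast
    rw [← add_assoc, digamma_add_one (by positivity), add_comm x]

/-- Differences of digamma values as a series. Summing the functional equation leaves the error
`ψ(a + J) - ψ(b + J)`, which is at most `1/J` because `ψ` is monotone. -/
lemma tendsto_digamma_sub {a b : ℝ} (ha : 0 < a) (ha1 : a ≤ 1) (hb : 0 < b) (hb1 : b ≤ 1) :
    Filter.Tendsto (fun J : ℕ => ∑ j ∈ Finset.range J, (1 / ((j : ℝ) + a) - 1 / (j + b)))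
      Filter.atTop (nhds (digamma b - digamma a)) := by
  have h0 : Filter.Tendsto (fun J : ℕ => digamma (a + J) - digamma (b + J)) Filter.atTop
      (nhds 0) := by
    refine squeeze_zero_norm' ?_ tendsto_one_div_atTop_nhds_zero_nat
    filter_upwards [Filter.eventually_ge_atTop 1] with J hJ
    have hJ0 : (0 : ℝ) < J := by exact_mod_cast hJ
    have key : ∀ c : ℝ, 0 < c → c ≤ 1 → digamma J ≤ digamma (c + J) ∧
        digamma (c + J) ≤ digamma J + 1 / J := by
      intro c hc hc1
      rw [← digamma_add_one hJ0]
      constructor <;> apply digamma_mono <;> first | linarith | (rw [Set.mem_Ioi]; linarith)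
    have h1 := key a ha ha1
    have h2 := key b hb hb1
    rw [Real.norm_eq_abs, abs_le]
    constructor <;> linarith [h1.1, h1.2, h2.1, h2.2]
  have h1 := h0.add_const (digamma b - digamma a)
  rw [zero_add] at h1
  refine h1.congr fun J => ?_
  rw [digamma_add_nat ha, digamma_add_nat hb, Finset.sum_sub_distrib]
  ring

/-! ### Sums of `1/(e^u - 1)` along arithmetic progressions -/

/-- The summand `1/(e^u - 1)` of the Lambert series with its pole at `0` removed. -/
noncomputable def hh (u : ℂ) : ℂ := 1 / (Complex.exp u - 1) - 1 / u

/-- The derivative of `hh` on the right half-plane. -/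
noncomputable def hh' (u : ℂ) : ℂ := 1 / u ^ 2 - Complex.exp u / (Complex.exp u - 1) ^ 2

lemma exp_sub_one_ne {u : ℂ} (hu : 0 < u.re) : Complex.exp u - 1 ≠ 0 := by
  intro h
  have h1 : ‖Complex.exp u‖ = 1 := by rw [sub_eq_zero.1 h, norm_one]
  rw [Complex.norm_exp, Real.exp_eq_one_iff] at h1
  linarith

lemma hh_deriv {u : ℂ} (hu : 0 < u.re) : HasDerivAt hh (hh' u) u := by
  have hu0 : u ≠ 0 := by rintro rfl; simp at hu
  have he := exp_sub_one_ne hu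
  have h1 := ((Complex.hasDerivAt_exp u).sub_const 1).inv he
  have h2 := (hasDerivAt_id u).inv hu0
  have h3 := h1.sub h2
  have e : hh = (fun x => Complex.exp x - 1)⁻¹ - (id : ℂ → ℂ)⁻¹ := by
    funext x; simp [hh]
  have e2 : hh' u = -Complex.exp u / (Complex.exp u - 1) ^ 2 - -1 / id u ^ 2 := by
    rw [hh', id]
    ring
  rw [e, e2]
  exact h3

/-- The hyperbolic form `1/u² - 1/(2 sinh (u/2))²` of the derivative, in which the two double poles
visibly cancel. -/
lemma hh'_eq {u : ℂ} (hu : 0 < u.re) : hh' u =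
    1 / u ^ 2 - 1 / (Complex.exp (u / 2) - Complex.exp (-(u / 2))) ^ 2 := by
  have he := exp_sub_one_ne hu
  have h1 : Complex.exp u - 1 =
      Complex.exp (u / 2) * (Complex.exp (u / 2) - Complex.exp (-(u / 2))) := by
    rw [mul_sub, ← Complex.exp_add, ← Complex.exp_add]; simp
  have h2 : Complex.exp u = Complex.exp (u / 2) ^ 2 := by
    rw [← Complex.exp_nat_mul]; congr 1; push_cast; ring
  have h3 := Complex.exp_ne_zero (u / 2)
  rw [hh', h1, h2]
  congr 1
  rw [h1] at he
  have := (mul_ne_zero_iff.1 he).2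
  field_simp

lemma hh'_small {u : ℂ} (hu : 0 < u.re) (h1 : ‖u‖ ≤ 1) : ‖hh' u‖ ≤ 2 / 3 := by
  have hu0 : u ≠ 0 := by rintro rfl; simp at hu
  have hn : 0 < ‖u‖ := norm_pos_iff.2 hu0
  rw [hh'_eq hu]
  have hb : ∀ w : ℂ, ‖w‖ = ‖u‖ / 2 →
      ‖Complex.exp w - (1 + w + w ^ 2 / 2)‖ ≤ ‖u‖ ^ 3 / 36 := by
    intro w hw
    have := Complex.exp_bound (x := w) (by rw [hw]; linarith) (n := 3) (by norm_num)
    simp only [Finset.sum_range_succ, Finset.sum_range_zero, hw, Nat.factorial] at this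
    norm_num at this
    refine this.trans (le_of_eq ?_)
    ring
  have hs1 := hb (u / 2) (by simp)
  have hs2 := hb (-(u / 2)) (by simp)
  set s := Complex.exp (u / 2) - Complex.exp (-(u / 2)) with hs
  have hsu : ‖s - u‖ ≤ ‖u‖ ^ 3 / 18 := by
    have : s - u = (Complex.exp (u / 2) - (1 + u / 2 + (u / 2) ^ 2 / 2)) -
      (Complex.exp (-(u / 2)) - (1 + -(u / 2) + (-(u / 2)) ^ 2 / 2)) := by rw [hs]; ring
    rw [this]
    refine (norm_sub_le _ _).trans ?_
    linarith
  have h3 : ‖u‖ ^ 3 ≤ ‖u‖ := by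
    have : ‖u‖ ^ 2 ≤ 1 := pow_le_one₀ hn.le h1
    calc ‖u‖ ^ 3 = ‖u‖ * ‖u‖ ^ 2 := by ring
      _ ≤ ‖u‖ * 1 := by gcongr
      _ = _ := mul_one _
  have hs_lo : ‖u‖ / 2 ≤ ‖s‖ := by
    have := norm_sub_norm_le u s
    rw [norm_sub_rev u s] at this
    linarith
  have hs_hi : ‖s + u‖ ≤ 3 * ‖u‖ := by
    have : s + u = (s - u) + 2 * u := by ring
    rw [this]
    refine (norm_add_le _ _).trans ?_
    rw [norm_mul]; norm_num
    linarith
  have hs0 : s ≠ 0 := by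
    rw [← norm_pos_iff]; linarith
  have e : 1 / u ^ 2 - 1 / s ^ 2 = (s - u) * (s + u) / (u ^ 2 * s ^ 2) := by
    field_simp; ring
  rw [e, norm_div, norm_mul, norm_mul, norm_pow, norm_pow, div_le_iff₀ (by positivity)]
  have h5 : (‖u‖ / 2) ^ 2 ≤ ‖s‖ ^ 2 := by gcongr
  calc ‖s - u‖ * ‖s + u‖ ≤ ‖u‖ ^ 3 / 18 * (3 * ‖u‖) := by gcongr
    _ = 2 / 3 * (‖u‖ ^ 2 * (‖u‖ / 2) ^ 2) := by ring
    _ ≤ _ := by gcongr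

lemma hh'_large {u : ℂ} (hu : 0 < u.re) : ‖hh' u‖ ≤ 2 / u.re ^ 2 := by
  rw [hh'_eq hu]
  have hu1 : u.re ≤ ‖u‖ := Complex.re_le_norm u
  have hs : u.re ≤ ‖Complex.exp (u / 2) - Complex.exp (-(u / 2))‖ := by
    refine le_trans ?_ (norm_sub_norm_le _ _)
    rw [Complex.norm_exp, Complex.norm_exp]
    have e1 : (u / 2).re = u.re / 2 := by simp
    rw [Complex.neg_re, e1]
    have := Real.self_le_sinh_iff.2 (by linarith : 0 ≤ u.re / 2)
    rw [Real.sinh_eq] at this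
    linarith
  refine (norm_sub_le _ _).trans ?_
  rw [norm_div, norm_div, norm_pow, norm_pow, norm_one]
  have h1 : 1 / ‖u‖ ^ 2 ≤ 1 / u.re ^ 2 := by gcongr
  have h2 : 1 / ‖Complex.exp (u / 2) - Complex.exp (-(u / 2))‖ ^ 2 ≤ 1 / u.re ^ 2 := by gcongr
  have : 2 / u.re ^ 2 = 1 / u.re ^ 2 + 1 / u.re ^ 2 := by ring
  linarith

/-- The derivative is integrable along rays of the cone, uniformly in the ray. -/
lemma hh'_bound {u : ℂ} (hu : u ∈ cone) : ‖hh' u‖ ≤ 18 / (1 + u.re) ^ 2 := by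
  have h0 := hu.1
  rcases le_or_gt (1 / 2) u.re with h | h
  · refine (hh'_large h0).trans ?_
    rw [div_le_div_iff₀ (by positivity) (by positivity)]
    nlinarith
  · refine (hh'_small h0 (by linarith [cone_norm' hu])).trans ?_
    rw [div_le_div_iff₀ (by positivity) (by positivity)]
    nlinarith

lemma cone_smul {z : ℂ} (hz : z ∈ cone) {a : ℝ} (ha : 0 < a) : (a * z : ℂ) ∈ cone := by
  constructor
  · rw [Complex.re_ofReal_mul]; exact mul_pos ha hz.1
  · rw [Complex.re_ofReal_mul, Complex.im_ofReal_mul, abs_mul, abs_of_pos ha]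
    exact mul_le_mul_of_nonneg_left hz.2 ha.le

/-- The mean value inequality along the ray through `z`, on which the parameter is at least `e`. -/
lemma hh_sub_le {z : ℂ} (hz : z ∈ cone) {a b e : ℝ} (he : 0 ≤ e) (ha : 0 < a) (hea : e ≤ a)
    (hb : 0 < b) (heb : e ≤ b) :
    ‖hh (b * z) - hh (a * z)‖ ≤ 36 * z.re / (1 + e * z.re) ^ 2 * |b - a| := by
  have hzr := hz.1
  have hd : ∀ τ ∈ Set.uIcc a b, HasDerivWithinAt (fun τ : ℝ => hh (τ * z)) (hh' (τ * z) * z)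
      (Set.uIcc a b) τ := by
    intro τ hτ
    have hτ0 : 0 < τ := lt_of_lt_of_le (lt_min ha hb) hτ.1
    have h1 := hh_deriv (cone_smul hz hτ0).1
    have h2 : HasDerivAt (fun τ : ℝ => (τ * z : ℂ)) z τ := by
      simpa using (Complex.ofRealCLM.hasDerivAt (x := τ)).mul_const z
    exact (h1.comp τ h2).hasDerivWithinAt
  have hbd : ∀ τ ∈ Set.uIcc a b, ‖hh' (τ * z) * z‖ ≤ 36 * z.re / (1 + e * z.re) ^ 2 := by
    intro τ hτ
    have hτ0 : 0 < τ := lt_of_lt_of_le (lt_min ha hb) hτ.1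
    have hτe : e ≤ τ := le_trans (le_min hea heb) hτ.1
    have h1 := hh'_bound (cone_smul hz hτ0)
    rw [Complex.re_ofReal_mul] at h1
    rw [norm_mul]
    calc _ ≤ 18 / (1 + τ * z.re) ^ 2 * (2 * z.re) := by
          gcongr; exact cone_norm' hz
      _ ≤ 18 / (1 + e * z.re) ^ 2 * (2 * z.re) := by gcongr
      _ = _ := by ring
  have := Convex.norm_image_sub_le_of_norm_hasDerivWithin_le hd hbd (convex_uIcc a b)
    Set.left_mem_uIcc Set.right_mem_uIcc
  simpa using this

/-- A bound uniform in `J`, by comparison with the telescoping series of `1/(1 + jy)`. -/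
lemma sum_telescope {y : ℝ} (hy : 0 < y) (J : ℕ) :
    ∑ j ∈ Finset.range J, y / (1 + j * y) ^ 2 ≤ y + 1 := by
  have : ∀ J : ℕ, ∑ j ∈ Finset.range (J + 1), y / (1 + j * y) ^ 2 ≤ y + 1 - 1 / (1 + J * y) := by
    intro J
    induction J with
    | zero => simp
    | succ J ih =>
      rw [Finset.sum_range_succ]
      have h1 : 0 < 1 + (J : ℝ) * y := by positivity
      have h2 : 1 / (1 + (J : ℝ) * y) - 1 / (1 + ((J + 1 : ℕ) : ℝ) * y) =
          y / ((1 + J * y) * (1 + ((J + 1 : ℕ) : ℝ) * y)) := by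
        push_cast
        have h3 : 0 < 1 + ((J : ℝ) + 1) * y := by positivity
        field_simp; ring
      have h3 : y / (1 + ((J + 1 : ℕ) : ℝ) * y) ^ 2 ≤
          y / ((1 + J * y) * (1 + ((J + 1 : ℕ) : ℝ) * y)) := by
        rw [sq]
        have h4 : (J : ℝ) ≤ (J + 1 : ℕ) := by push_cast; linarith
        gcongr
      linarith
  cases J with
  | zero => simp; linarith
  | succ J =>
    refine (this J).trans ?_
    have : 0 < 1 / (1 + (J : ℝ) * y) := by positivity
    linarith

/-- The summand `1/(e^u - 1)` of the Lambert series. -/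
noncomputable def gg (u : ℂ) : ℂ := 1 / (Complex.exp u - 1)

/-- Two sums of `1/(e^u - 1)` along progressions with the same modulus `t` differ by a digamma
difference divided by `tz`, up to a bounded error. The poles `1/u` produce the digamma values; what
remains is `∑ (hh((tj + a)z) - hh((tj + b)z))`, bounded termwise by the mean value inequality. -/
lemma gg_tsum_asymp {t a b : ℕ} (ht : 1 ≤ t) (ha : 1 ≤ a) (hat : a ≤ t) (hb : 1 ≤ b) (hbt : b ≤ t)
    {z : ℂ} (hz : z ∈ cone) {A B : ℂ}
    (hA : HasSum (fun j : ℕ => gg (((t * j + a : ℕ) : ℝ) * z)) A)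
    (hB : HasSum (fun j : ℕ => gg (((t * j + b : ℕ) : ℝ) * z)) B) :
    ‖(A - B) - ((digamma (b / t) - digamma (a / t)) / t : ℝ) / z‖ ≤ 36 * (t * z.re + 1) := by
  have hz0 : z ≠ 0 := by rintro rfl; simp [cone] at hz
  have ht0 : (0 : ℝ) < t := by exact_mod_cast ht
  have ha0 : (0 : ℝ) < a := by exact_mod_cast ha
  have hb0 : (0 : ℝ) < b := by exact_mod_cast hb
  have hat' : (a : ℝ) ≤ t := by exact_mod_cast hat
  have hbt' : (b : ℝ) ≤ t := by exact_mod_cast hbt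
  have h1 := (hA.sub hB).tendsto_sum_nat
  have h2 := tendsto_digamma_sub (a := a / t) (b := b / t) (by positivity)
    ((div_le_one ht0).2 hat') (by positivity) ((div_le_one ht0).2 hbt')
  have h3 := ((Complex.continuous_ofReal.tendsto _).comp (h2.div_const (t : ℝ))).div_const z
  have h4 := (h1.sub h3).norm
  refine le_of_tendsto h4 (Filter.Eventually.of_forall fun J => ?_)
  simp only [Function.comp_apply]
  rw [Finset.sum_div]
  push_cast
  rw [Finset.sum_div, ← Finset.sum_sub_distrib]
  refine (norm_sum_le _ _).trans ?_
  have hterm : ∀ j ∈ Finset.range J, ‖gg ((t * j + a) * z) - gg ((t * j + b) * z) -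
      (1 / ((j : ℂ) + a / t) - 1 / (j + b / t)) / t / z‖ ≤
      36 * (t * z.re / (1 + j * (t * z.re)) ^ 2) := by
    intro j _
    have hj : (0 : ℝ) ≤ t * j := by positivity
    have e : gg ((t * j + a) * z) - gg ((t * j + b) * z) -
      (1 / ((j : ℂ) + a / t) - 1 / (j + b / t)) / t / z =
        hh ((t * j + a : ℝ) * z) - hh ((t * j + b : ℝ) * z) := by
      have f1 : ((t : ℂ) * j + a) ≠ 0 := by exact_mod_cast (by positivity : (t * j + a : ℝ) ≠ 0)
      have f2 : ((t : ℂ) * j + b) ≠ 0 := by exact_mod_cast (by positivity : (t * j + b : ℝ) ≠ 0)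
      have f3 : (t : ℂ) ≠ 0 := by exact_mod_cast ht0.ne'
      have g1 : 1 / ((j : ℂ) + a / t) / t = 1 / ((t : ℂ) * j + a) := by
        rw [div_div, add_mul, div_mul_cancel₀ _ f3, mul_comm (j : ℂ)]
      have g2 : 1 / ((j : ℂ) + b / t) / t = 1 / ((t : ℂ) * j + b) := by
        rw [div_div, add_mul, div_mul_cancel₀ _ f3, mul_comm (j : ℂ)]
      rw [sub_div, g1, g2]
      unfold gg hh
      push_cast
      rw [← div_div 1 (_ : ℂ) z, ← div_div 1 (_ : ℂ) z, sub_div]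
      ring
    rw [e]
    refine (hh_sub_le hz (e := t * j) hj (by linarith) (by linarith) (by linarith)
      (by linarith)).trans ?_
    have hab : |(t * j + a : ℝ) - (t * j + b)| ≤ t := by
      rw [abs_le]; constructor <;> linarith
    have hzr := hz.1
    calc _ ≤ 36 * z.re / (1 + t * j * z.re) ^ 2 * t := by gcongr
      _ = _ := by rw [show (j : ℝ) * (t * z.re) = t * j * z.re by ring]; ring
  refine (Finset.sum_le_sum hterm).trans ?_
  rw [← Finset.mul_sum]
  have := sum_telescope (mul_pos ht0 hz.1) J
  gcongr

/-! ### Lambert series -/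

/-- The Lambert series identity `∑ c_m q^m/(1 - q^m) = ∑_N (∑_{m ∣ N} c_m) q^N`; the index on the
left is shifted so that it starts at `m = 1`. -/
lemma lambert (c : ℕ → ℂ) (hc : ∀ m, ‖c m‖ ≤ 1) {q : ℂ} (hq : ‖q‖ < 1) :
    HasSum (fun m : ℕ => c (m + 1) * (q ^ (m + 1) / (1 - q ^ (m + 1))))
      (∑' N : ℕ, (∑ m ∈ N.divisors, c m) * q ^ N) := by
  set F : ℕ+ × ℕ+ → ℂ := fun p => c p.1 * q ^ (p.1 * p.2 : ℕ) with hFdef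
  have hF : Summable F := by
    refine Summable.of_norm_bounded (summable_prod_mul_pow 0 hq).norm fun p => ?_
    simp only [hFdef, pow_zero, one_mul, norm_mul]
    exact mul_le_of_le_one_left (norm_nonneg _) (hc _)
  obtain ⟨S, hS⟩ := hF
  have h1 : HasSum (fun N : ℕ => (∑ m ∈ N.divisors, c m) * q ^ N) S := by
    have h2 := sigmaAntidiagonalEquivProd.hasSum_iff.2 hS
    have h3 := h2.sigma (fun n => hasSum_fintype _)
    refine (Function.Injective.hasSum_iff PNat.coe_injective ?_).1 (h3.congr_fun ?_)
    · intro n hn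
      have : n = 0 := by
        by_contra h
        exact hn ⟨⟨n, Nat.pos_of_ne_zero h⟩, rfl⟩
      subst this
      simp
    · intro n
      simp only [Function.comp_apply, sigmaAntidiagonalEquivProd, divisorsAntidiagonalFactors,
        PNat.mk_coe, Equiv.coe_fn_mk, hFdef]
      rw [Finset.univ_eq_attach, (n : ℕ).divisorsAntidiagonal.sum_attach
        fun x : ℕ × ℕ => c x.1 * q ^ (x.1 * x.2), Nat.sum_divisorsAntidiagonal
        fun x y => c x * q ^ (x * y), Finset.sum_mul]
      refine Finset.sum_congr rfl fun i hi => ?_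
      rw [Nat.mul_div_cancel' (Nat.dvd_of_mem_divisors hi)]
  rw [h1.tsum_eq]
  have h4 : HasSum (fun m : ℕ+ => c m * (q ^ (m : ℕ) / (1 - q ^ (m : ℕ)))) S := by
    refine hS.prod_fiberwise fun m => ?_
    have hm : ‖q ^ (m : ℕ)‖ < 1 := by
      rw [norm_pow]; exact pow_lt_one₀ (norm_nonneg _) hq m.ne_zero
    have h5 := ((hasSum_geometric_of_norm_lt_one hm).mul_left (q ^ (m : ℕ))).mul_left (c m)
    rw [← div_eq_mul_inv] at h5
    refine (Equiv.pnatEquivNat.symm.hasSum_iff).1 (h5.congr_fun fun n => ?_)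
    simp only [Function.comp_apply, hFdef]
    rw [← pow_mul, ← pow_add]
    simp [mul_add, add_comm]
  exact (Equiv.pnatEquivNat.symm.hasSum_iff).2 h4

/-! ### Divisor generating functions -/

/-- The number of divisors of `N` that are congruent to `r` mod `t` and not divisible by `k`. -/
def nd (k t r N : ℕ) : ℕ := ∑ m ∈ N.divisors, if ¬ k ∣ m ∧ m % t = r % t then 1 else 0

/-- The generating function of `nd k t r` at `e^{-z}`. -/
noncomputable def LL (k t r : ℕ) (z : ℂ) : ℂ := ∑' N : ℕ, (nd k t r N : ℂ) * Complex.exp (-z) ^ N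

lemma pow_div_eq_gg {z : ℂ} {m : ℕ} :
    Complex.exp (-z) ^ m / (1 - Complex.exp (-z) ^ m) = gg ((m : ℝ) * z) := by
  have e : Complex.exp (-z) ^ m = (Complex.exp ((m : ℝ) * z))⁻¹ := by
    rw [← Complex.exp_nat_mul, ← Complex.exp_neg]; congr 1; push_cast; ring
  rw [e, gg]
  have := Complex.exp_ne_zero ((m : ℝ) * z)
  rw [← mul_div_mul_left _ _ this, mul_sub, mul_inv_cancel₀ this, mul_one]

/-- Inclusion-exclusion: the `m ≡ r` not divisible by `k` are all `m ≡ r` except the `m = kl`, for which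
`m ≡ r` amounts to `l ≡ r̄` because `k` is invertible modulo `t`. -/
lemma LL_decomp {k t r rbar : ℕ} (hk : 2 ≤ k) (hcop : Nat.Coprime k t)
    (hr1 : 1 ≤ r) (hrt : r ≤ t) (hb1 : 1 ≤ rbar) (hbt : rbar ≤ t) (hrb : k * rbar ≡ r [MOD t])
    {z : ℂ} (hz : 0 < z.re) : ∃ A B : ℂ,
      HasSum (fun j : ℕ => gg (((t * j + r : ℕ) : ℝ) * z)) A ∧
      HasSum (fun j : ℕ => gg (((t * j + rbar : ℕ) : ℝ) * (k * z))) B ∧ LL k t r z = A - B := by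
  classical
  have hq := norm_exp_lt_one hz
  have h1 := lambert (fun m => if m % t = r % t then 1 else 0)
    (fun m => by split_ifs <;> simp) hq
  have h2 := lambert (fun m => if k ∣ m ∧ m % t = r % t then 1 else 0)
    (fun m => by split_ifs <;> simp) hq
  have h3 := lambert (fun m => if ¬ k ∣ m ∧ m % t = r % t then 1 else 0)
    (fun m => by split_ifs <;> simp) hq
  simp only [pow_div_eq_gg] at h1 h2 h3
  set S1 := ∑' N : ℕ, (∑ m ∈ N.divisors, if m % t = r % t then (1 : ℂ) else 0) *
    Complex.exp (-z) ^ N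
  set S2 := ∑' N : ℕ, (∑ m ∈ N.divisors, if k ∣ m ∧ m % t = r % t then (1 : ℂ) else 0) *
    Complex.exp (-z) ^ N
  have hLL : LL k t r z = ∑' N : ℕ, (∑ m ∈ N.divisors,
      if ¬ k ∣ m ∧ m % t = r % t then (1 : ℂ) else 0) * Complex.exp (-z) ^ N := by
    unfold LL nd; push_cast; rfl
  have hmod : ∀ a b : ℕ, 1 ≤ b → b ≤ t → ∀ m, 1 ≤ m → m ≡ b [MOD t] → ∃ j, m = t * j + b := by
    intro a b hb1 hbt m hm h
    have hbm : b ≤ m := by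
      by_contra! hc
      have h5 := (Nat.modEq_iff_dvd' hc.le).1 h
      have := Nat.le_of_dvd (by omega) h5
      omega
    obtain ⟨j, hj⟩ := (Nat.modEq_iff_dvd' hbm).1 h.symm
    exact ⟨j, by omega⟩
  refine ⟨S1, S2, ?_, ?_, ?_⟩
  · have hinj : Function.Injective (fun j : ℕ => t * j + r - 1) := by
      intro i j h
      have h4 : t * i = t * j := by dsimp only at h; omega
      exact Nat.eq_of_mul_eq_mul_left (by omega) h4
    have h5 := (hinj.hasSum_iff ?_).2 h1
    · refine h5.congr_fun fun j => ?_
      have e : t * j + r - 1 + 1 = t * j + r := by omega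
      simp only [Function.comp_apply, e]
      rw [if_pos (Nat.mul_add_mod _ _ _), one_mul]
    · intro m hm
      rw [if_neg, zero_mul]
      intro h
      obtain ⟨j, hj⟩ := hmod 0 r hr1 hrt (m + 1) (by omega) h
      exact hm ⟨j, by dsimp only; omega⟩
  · have hpos : ∀ j, 1 ≤ k * (t * j + rbar) := fun j =>
      Nat.mul_pos (by omega) (by omega)
    have hinj : Function.Injective (fun j : ℕ => k * (t * j + rbar) - 1) := by
      intro i j h
      have h4 : k * (t * i + rbar) = k * (t * j + rbar) := by
        have := hpos i; have := hpos j; dsimp only at h; omega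
      have h5 := Nat.eq_of_mul_eq_mul_left (by omega) h4
      exact Nat.eq_of_mul_eq_mul_left (by omega : 0 < t) (by omega)
    have h5 := (hinj.hasSum_iff ?_).2 h2
    · refine h5.congr_fun fun j => ?_
      have e : k * (t * j + rbar) - 1 + 1 = k * (t * j + rbar) := by have := hpos j; omega
      simp only [Function.comp_apply, e]
      rw [if_pos, one_mul]
      · congr 1; push_cast; ring
      · refine ⟨Dvd.intro _ rfl, ?_⟩
        have : k * (t * j + rbar) ≡ k * rbar [MOD t] :=
          Nat.ModEq.mul_left k (Nat.mul_add_mod _ _ _)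
        exact this.trans hrb
    · intro m hm
      rw [if_neg, zero_mul]
      rintro ⟨⟨l, hl⟩, h⟩
      have h6 : k * l ≡ k * rbar [MOD t] := by rw [← hl]; exact Nat.ModEq.trans h hrb.symm
      have h7 : l ≡ rbar [MOD t] :=
        Nat.ModEq.cancel_left_of_coprime (by rwa [Nat.gcd_comm]) h6
      have hl1 : 1 ≤ l := by
        rcases Nat.eq_zero_or_pos l with rfl | h
        · simp at hl
        · exact h
      obtain ⟨j, hj⟩ := hmod 0 rbar hb1 hbt l hl1 h7
      refine hm ⟨j, ?_⟩
      dsimp only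
      rw [← hj, ← hl]
      omega
  · rw [hLL]
    refine h3.unique ((h1.sub h2).congr_fun fun m => ?_)
    rw [← sub_mul]
    congr 1
    by_cases h4 : k ∣ m + 1 <;> by_cases h5 : (m + 1) % t = r % t <;> simp [h4, h5]

/-- On the cone, two divisor generating functions differ by a multiple of `1/z` up to a bounded error;
the coefficient is the difference of the `psikt` divided by `t`. -/
lemma LL_asymp {k t r s rbar sbar : ℕ} (hk : 2 ≤ k) (hcop : Nat.Coprime k t) (ht : 1 ≤ t)
    (hr1 : 1 ≤ r) (hrt : r ≤ t) (hs1 : 1 ≤ s) (hst : s ≤ t)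
    (hrb1 : 1 ≤ rbar) (hrbt : rbar ≤ t) (hrb : k * rbar ≡ r [MOD t])
    (hsb1 : 1 ≤ sbar) (hsbt : sbar ≤ t) (hsb : k * sbar ≡ s [MOD t]) :
    ∃ C > (0 : ℝ), ∀ z ∈ cone, z.re ≤ 1 →
      ‖LL k t r z - LL k t s z - ((psikt k t r rbar - psikt k t s sbar) / t : ℝ) / z‖ ≤ C := by
  have hk0 : (0 : ℝ) < k := by positivity
  refine ⟨36 * (t + 1) + 36 * (t * k + 1), by positivity, fun z hz hz1 => ?_⟩
  obtain ⟨A, B, hA, hB, e⟩ := LL_decomp hk hcop hr1 hrt hrb1 hrbt hrb hz.1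
  obtain ⟨A', B', hA', hB', e'⟩ := LL_decomp hk hcop hs1 hst hsb1 hsbt hsb hz.1
  have hkz := cone_smul hz hk0
  rw [Complex.ofReal_natCast] at hkz
  have h1 := gg_tsum_asymp ht hr1 hrt hs1 hst hz hA hA'
  have h2 := gg_tsum_asymp ht hrb1 hrbt hsb1 hsbt hkz hB hB'
  have e3 : ((k : ℂ) * z).re = k * z.re := by
    rw [← Complex.ofReal_natCast, Complex.re_ofReal_mul]
  rw [e3] at h2
  have hz0 : z ≠ 0 := by rintro rfl; simp [cone] at hz
  have ht0 : (t : ℂ) ≠ 0 := by exact_mod_cast (by omega : t ≠ 0)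
  have hkc : (k : ℂ) ≠ 0 := by exact_mod_cast hk0.ne'
  have e4 : LL k t r z - LL k t s z - ((psikt k t r rbar - psikt k t s sbar) / t : ℝ) / z =
    ((A - A') - ((digamma (s / t) - digamma (r / t)) / t : ℝ) / z) -
    ((B - B') - ((digamma (sbar / t) - digamma (rbar / t)) / t : ℝ) / (k * z)) := by
    rw [e, e']
    unfold psikt
    push_cast
    field_simp
    ring
  rw [e4]
  refine (norm_sub_le _ _).trans ?_
  have h3 : (t : ℝ) * z.re ≤ t * 1 := by gcongr
  have h4 : (t : ℝ) * (k * z.re) ≤ t * (k * 1) := by gcongr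
  linarith

/-! ### Cauchy's formula for the difference of part counts -/

lemma nd_le (k t r N : ℕ) : nd k t r N ≤ N := by
  unfold nd
  calc _ ≤ ∑ m ∈ N.divisors, 1 := Finset.sum_le_sum fun m _ => by split_ifs <;> simp
    _ ≤ N := by simpa using Nat.card_divisors_le_self N

lemma nd_summable (k t r : ℕ) {ρ : ℝ} (h0 : 0 ≤ ρ) (h1 : ρ < 1) :
    Summable (fun N : ℕ => (nd k t r N : ℝ) * ρ ^ N) := by
  have h := summable_pow_mul_geometric_of_norm_lt_one 1
    (by rwa [Real.norm_of_nonneg h0] : ‖ρ‖ < 1)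
  refine Summable.of_nonneg_of_le (fun N => by positivity) (fun N => ?_) h
  rw [pow_one]
  gcongr
  exact nd_le k t r N

lemma norm_exp_neg (z : ℂ) : ‖Complex.exp (-z)‖ = Real.exp (-z.re) := by
  rw [Complex.norm_exp, Complex.neg_re]

/-- The trivial bound, from `nd k t r N ≤ N`. -/
lemma LL_crude (k t r : ℕ) {z : ℂ} (hz : 0 < z.re) (hz1 : z.re ≤ 1) :
    ‖LL k t r z‖ ≤ 4 / z.re ^ 2 := by
  set ρ := Real.exp (-z.re) with hρ
  have h0 : 0 < ρ := Real.exp_pos _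
  have h1 : ρ < 1 := by rw [hρ, Real.exp_lt_one_iff]; linarith
  have hs := hasSum_coe_mul_geometric_of_norm_lt_one
    (by rwa [Real.norm_of_nonneg h0.le] : ‖ρ‖ < 1)
  have h2 : ‖LL k t r z‖ ≤ ρ / (1 - ρ) ^ 2 := by
    refine tsum_of_norm_bounded hs fun N => ?_
    rw [norm_mul, norm_pow, norm_exp_neg, Complex.norm_natCast]
    gcongr
    exact nd_le k t r N
  refine h2.trans ?_
  have h3 : z.re / 2 ≤ 1 - ρ := by
    have h4 : ρ ≤ (1 + z.re)⁻¹ := by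
      rw [hρ, Real.exp_neg]
      exact inv_anti₀ (by linarith) (by linarith [Real.add_one_le_exp z.re])
    have h5 : (1 + z.re)⁻¹ ≤ 1 - z.re / 2 := by
      rw [inv_le_iff_one_le_mul₀ (by linarith)]
      nlinarith
    linarith
  calc ρ / (1 - ρ) ^ 2 ≤ 1 / (z.re / 2) ^ 2 := by gcongr
    _ = _ := by field_simp; norm_num

/-- The difference of part counts, as a complex number. -/
noncomputable def dd (k t r s n : ℕ) : ℂ := (Dkx k t r n : ℂ) - (Dkx k t s n : ℂ)

lemma dd_eq (k t r s n : ℕ) : dd k t r s n = ∑ x ∈ Finset.HasAntidiagonal.antidiagonal n,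
    ((nd k t r x.1 : ℂ) - nd k t s x.1) * rp k x.2 := by
  unfold dd
  rw [Dkx_eq, Dkx_eq]
  push_cast
  rw [← Finset.sum_sub_distrib]
  refine Finset.sum_congr rfl fun x _ => ?_
  rw [← sub_mul]
  congr 1
  unfold nd
  push_cast
  rfl

/-- The generating function of the difference factors, and it converges absolutely. -/
lemma dd_gen (k t r s : ℕ) {z : ℂ} (hz : 0 < z.re) :
    Summable (fun n => ‖dd k t r s n * Complex.exp (-z) ^ n‖) ∧
    ∑' n, dd k t r s n * Complex.exp (-z) ^ n =
      (LL k t r z - LL k t s z) * Pk k (Complex.exp (-z)) := by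
  set q := Complex.exp (-z) with hq
  have hρ1 : ‖q‖ < 1 := norm_exp_lt_one hz
  have hsn : ∀ r, Summable (fun N : ℕ => ‖(nd k t r N : ℂ) * q ^ N‖) := fun r =>
    (nd_summable k t r (norm_nonneg q) hρ1).congr fun N => by simp
  have hP : Summable (fun N : ℕ => ‖(rp k N : ℂ) * q ^ N‖) :=
    (rp_summable k (norm_nonneg q) hρ1).congr fun N => by simp
  set f : ℕ → ℂ := fun N => ((nd k t r N : ℂ) - nd k t s N) * q ^ N with hf
  set g : ℕ → ℂ := fun N => (rp k N : ℂ) * q ^ N with hg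
  have hfs : Summable (fun N => ‖f N‖) := by
    refine Summable.of_nonneg_of_le (fun N => norm_nonneg _) (fun N => ?_) ((hsn r).add (hsn s))
    simp only [hf]
    rw [sub_mul]
    exact norm_sub_le _ _
  have hfe : ∑' N, f N = LL k t r z - LL k t s z := by
    unfold LL
    rw [← Summable.tsum_sub (hsn r).of_norm (hsn s).of_norm]
    refine tsum_congr fun N => ?_
    simp only [hf]; ring
  have hterm : ∀ n, ∑ x ∈ Finset.HasAntidiagonal.antidiagonal n, f x.1 * g x.2 =
      dd k t r s n * q ^ n := by
    intro n
    rw [dd_eq, Finset.sum_mul]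
    refine Finset.sum_congr rfl fun x hx => ?_
    have : x.1 + x.2 = n := Finset.HasAntidiagonal.mem_antidiagonal.1 hx
    simp only [hf, hg]
    rw [← this, pow_add]; ring
  constructor
  · have := summable_norm_sum_mul_antidiagonal_of_summable_norm (f := f) (g := g) hfs hP
    exact this.congr fun n => by rw [hterm]
  · have := tsum_mul_tsum_eq_tsum_sum_antidiagonal_of_summable_norm (f := f) (g := g) hfs hP
    rw [hfe] at this
    unfold Pk
    rw [this]
    exact tsum_congr fun n => (hterm n).symm

/-- Orthogonality of the characters of the circle. -/
lemma integral_exp_int (j : ℤ) :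
    ∫ y in (-π)..π, Complex.exp ((j : ℂ) * Complex.I * (y : ℂ)) = if j = 0 then 2 * π else 0 := by
  split_ifs with h
  · subst h
    simp
    ring
  · have hc : (j : ℂ) * Complex.I ≠ 0 := mul_ne_zero (by exact_mod_cast h) Complex.I_ne_zero
    rw [integral_exp_mul_complex hc]
    have : Complex.exp ((j : ℂ) * Complex.I * (π : ℝ)) =
        Complex.exp ((j : ℂ) * Complex.I * ((-π : ℝ) : ℂ)) := by
      rw [Complex.exp_eq_exp_iff_exists_int]
      exact ⟨j, by push_cast; ring⟩
    rw [this, sub_self, zero_div, Complex.ofReal_zero]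

/-- Cauchy's formula for the coefficients of an absolutely convergent power series in `e^{-z}`, on the
vertical segment `z = x + iy`, `|y| ≤ π`. -/
lemma coeff_extract (d : ℕ → ℂ) {x : ℝ}
    (hs : Summable (fun n => ‖d n * Complex.exp (-(x : ℂ)) ^ n‖)) (n : ℕ) :
    ∫ y in (-π)..π, (∑' m, d m * Complex.exp (-(x + y * Complex.I)) ^ m) *
      Complex.exp (n * (x + y * Complex.I)) = 2 * π * d n := by
  have hF : ∀ m : ℕ, ∀ y : ℝ, d m * Complex.exp (-(x + y * Complex.I)) ^ m *
      Complex.exp (n * (x + y * Complex.I)) = d m * Complex.exp (((n : ℤ) - (m : ℤ) : ℤ) * (x : ℂ)) *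
        Complex.exp ((((n : ℤ) - (m : ℤ) : ℤ) : ℂ) * Complex.I * y) := by
    intro m y
    rw [← Complex.exp_nat_mul, mul_assoc, mul_assoc, ← Complex.exp_add, ← Complex.exp_add]
    congr 2
    push_cast
    ring
  have hnorm : ∀ m : ℕ, ∀ y : ℝ, ‖d m * Complex.exp (-(x + y * Complex.I)) ^ m *
      Complex.exp (n * (x + y * Complex.I))‖ =
        ‖d m * Complex.exp (-(x : ℂ)) ^ m‖ * Real.exp (n * x) := by
    intro m y
    simp only [norm_mul, norm_pow, Complex.norm_exp]
    congr 2 <;> simp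
  have h := intervalIntegral.hasSum_integral_of_dominated_convergence (μ := MeasureTheory.volume)
    (a := -π) (b := π)
    (F := fun m (y : ℝ) => d m * Complex.exp (-(x + y * Complex.I)) ^ m *
      Complex.exp (n * (x + y * Complex.I)))
    (f := fun y : ℝ => (∑' m, d m * Complex.exp (-(x + y * Complex.I)) ^ m) *
      Complex.exp (n * (x + y * Complex.I)))
    (fun m _ => ‖d m * Complex.exp (-(x : ℂ)) ^ m‖ * Real.exp (n * x))
    (fun m => Continuous.aestronglyMeasurable (by fun_prop))
    (fun m => Filter.Eventually.of_forall fun y _ => (hnorm m y).le)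
    (Filter.Eventually.of_forall fun y _ => hs.mul_right _)
    (by simp)
    (Filter.Eventually.of_forall fun y _ => by
      refine HasSum.mul_right _ (Summable.hasSum ?_)
      refine Summable.of_norm (hs.congr fun m => ?_)
      simp only [norm_mul, norm_pow, Complex.norm_exp]
      congr 2; simp)
  rw [← h.tsum_eq, tsum_eq_single n]
  · simp only [hF]
    rw [intervalIntegral.integral_const_mul, integral_exp_int]
    simp
    ring
  · intro m hm
    simp only [hF]
    rw [intervalIntegral.integral_const_mul, integral_exp_int, if_neg, Complex.ofReal_zero, mul_zero]
    omega

lemma dd_integral (k t r s n : ℕ) {x : ℝ} (hx : 0 < x) :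
    2 * π * dd k t r s n = ∫ y in (-π)..π, (LL k t r (x + y * Complex.I) -
      LL k t s (x + y * Complex.I)) * Pk k (Complex.exp (-(x + y * Complex.I))) *
      Complex.exp (n * (x + y * Complex.I)) := by
  rw [← coeff_extract (dd k t r s) (dd_gen k t r s (z := x) (by simpa using hx)).1 n]
  refine intervalIntegral.integral_congr fun y _ => ?_
  rw [(dd_gen k t r s (z := x + y * Complex.I) (by simpa using hx)).2]

/-! ### The saddle point integral -/

open MeasureTheory in
lemma gauss_interval {c : ℝ} (hc : 0 < c) {a b : ℝ} (hab : a ≤ b) :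
    ∫ v in a..b, Real.exp (-c * v ^ 2) ≤ √(π / c) := by
  rw [intervalIntegral.integral_of_le hab, ← integral_gaussian c]
  exact setIntegral_le_integral (integrable_exp_neg_mul_sq hc)
    (Filter.Eventually.of_forall fun v => (Real.exp_pos _).le)

open MeasureTheory in
lemma gauss_tail {N : ℝ} (hN : 1 ≤ N) :
    |(∫ v in (-1 : ℝ)..1, Real.exp (-N * v ^ 2)) - √(π / N)| ≤ 4 / N * √(π / N) := by
  have hN0 : 0 < N := by linarith
  have hi := integrable_exp_neg_mul_sq hN0
  have hi2 := integrable_exp_neg_mul_sq (by linarith : 0 < N / 2)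
  rw [intervalIntegral.integral_of_le (by norm_num), ← integral_gaussian N]
  have h1 := integral_add_compl (measurableSet_Ioc (a := (-1 : ℝ)) (b := 1)) hi
  have h2 : ∫ v in (Set.Ioc (-1 : ℝ) 1)ᶜ, Real.exp (-N * v ^ 2) ≤
      ∫ v in (Set.Ioc (-1 : ℝ) 1)ᶜ, Real.exp (-(N / 2)) * Real.exp (-(N / 2) * v ^ 2) := by
    refine setIntegral_mono_on hi.integrableOn (hi2.const_mul _).integrableOn
      measurableSet_Ioc.compl fun v hv => ?_
    rw [← Real.exp_add]
    refine Real.exp_le_exp.2 ?_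
    have hv1 : 1 ≤ v ^ 2 := by
      simp only [Set.mem_compl_iff, Set.mem_Ioc, not_and_or, not_lt, not_le] at hv
      rcases hv with h | h <;> nlinarith
    nlinarith
  have h3 : ∫ v in (Set.Ioc (-1 : ℝ) 1)ᶜ, Real.exp (-(N / 2)) * Real.exp (-(N / 2) * v ^ 2) ≤
      ∫ v, Real.exp (-(N / 2)) * Real.exp (-(N / 2) * v ^ 2) :=
    setIntegral_le_integral (hi2.const_mul _)
      (Filter.Eventually.of_forall fun v => by positivity)
  have h3' : ∫ v, Real.exp (-(N / 2)) * Real.exp (-(N / 2) * v ^ 2) =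
      Real.exp (-(N / 2)) * √(π / (N / 2)) := by rw [integral_const_mul, integral_gaussian]
  rw [h3'] at h3
  have h4 : 0 ≤ ∫ v in (Set.Ioc (-1 : ℝ) 1)ᶜ, Real.exp (-N * v ^ 2) :=
    integral_nonneg fun v => (Real.exp_pos _).le
  have h5 : Real.exp (-(N / 2)) ≤ 2 / N := by
    rw [Real.exp_neg, inv_le_comm₀ (Real.exp_pos _) (by positivity), inv_div]
    linarith [Real.add_one_le_exp (N / 2)]
  have h6 : √(π / (N / 2)) ≤ 2 * √(π / N) := by
    rw [Real.sqrt_le_left (by positivity), mul_pow, Real.sq_sqrt (by positivity)]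
    have : 0 < π / N := by positivity
    rw [show π / (N / 2) = 2 * (π / N) by field_simp]
    linarith
  have h7 : Real.exp (-(N / 2)) * √(π / (N / 2)) ≤ 2 / N * (2 * √(π / N)) := by gcongr
  have h8 : 2 / N * (2 * √(π / N)) = 4 / N * √(π / N) := by ring
  rw [← integral_gaussian N] at h7 h8
  rw [abs_le]
  constructor <;> linarith

lemma integral_odd {f : ℝ → ℂ} (hf : ∀ v, f (-v) = -f v) (a : ℝ) : ∫ v in (-a)..a, f v = 0 := by
  have h := intervalIntegral.integral_comp_neg (a := -a) (b := a) f
  rw [neg_neg] at h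
  simp only [hf, intervalIntegral.integral_neg] at h
  exact self_eq_neg.1 h.symm

/-- The integrand of the rescaled saddle point integral: `e^{A/z + nz}/z` on the line
`z = x(1 + iv)` is `e^{2N}/x` times this function, if `A = Nx` and `nx = N`. -/
noncomputable def EE (N v : ℝ) : ℂ :=
  Complex.exp (-(N * v ^ 2) / (1 + v * Complex.I)) / (1 + v * Complex.I)

lemma one_add_ne (v : ℝ) : (1 + v * Complex.I : ℂ) ≠ 0 := by
  intro h
  have := congrArg Complex.re h
  simp at this

lemma one_add_normSq (v : ℝ) : ‖(1 + v * Complex.I : ℂ)‖ ^ 2 = 1 + v ^ 2 := by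
  rw [Complex.sq_norm, Complex.normSq_apply]
  simp
  ring

/-- The first-order expansion of the integrand at the saddle point. It comes from
`-Nv²/(1 + iv) = -Nv² + δ` with `δ = Nv² · iv/(1 + iv)`. Here `|δ| ≤ 3s/4` where `s = Nv²`, so the
remainder of `e^δ` costs `e^{3s/4}`, which the Gaussian `e^{-s}` absorbs along with every power
of `s`. -/
lemma EE_expand {N v : ℝ} (hN : 1 ≤ N) (hv : |v| ≤ 1) :
    ‖EE N v - Real.exp (-N * v ^ 2) * (1 - v * Complex.I + N * v ^ 2 * (v * Complex.I))‖ ≤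
      3464 / N * Real.exp (-(N / 8) * v ^ 2) := by
  have hN0 : 0 < N := by linarith
  set w : ℂ := v * Complex.I with hw
  have hw1 : ‖w‖ = |v| := by rw [hw, norm_mul, Complex.norm_I, mul_one, Complex.norm_real]; rfl
  have h1w : (1 + w) ≠ 0 := one_add_ne v
  have hnsq : ‖1 + w‖ ^ 2 = 1 + v ^ 2 := one_add_normSq v
  have hn1 : 1 ≤ ‖1 + w‖ := by nlinarith [norm_nonneg (1 + w), sq_nonneg v]
  have hn0 : 0 < ‖1 + w‖ := by linarith
  have hv2 : v ^ 2 ≤ 1 := by rw [← sq_abs]; exact pow_le_one₀ (abs_nonneg _) hv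
  set δ : ℂ := N * v ^ 2 * w / (1 + w) with hδ
  have hδn : ‖δ‖ = N * v ^ 2 * (|v| / ‖1 + w‖) := by
    rw [hδ, norm_div, norm_mul, norm_mul, norm_pow, Complex.norm_real, Complex.norm_real, hw1,
      Real.norm_of_nonneg hN0.le, Real.norm_eq_abs, sq_abs]
    ring
  have hr1 : |v| / ‖1 + w‖ ≤ |v| := div_le_self (abs_nonneg _) hn1
  have hr2 : |v| / ‖1 + w‖ ≤ 3 / 4 := by
    rw [div_le_iff₀ hn0]
    have : |v| ^ 2 ≤ (3 / 4 * ‖1 + w‖) ^ 2 := by rw [mul_pow, hnsq, sq_abs]; nlinarith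
    exact le_of_sq_le_sq this (by positivity)
  set s := N * v ^ 2 with hs
  have hs0 : 0 ≤ s := by positivity
  have hδ1 : ‖δ‖ ≤ s * |v| := by rw [hδn]; gcongr
  have hδ2 : ‖δ‖ ≤ 3 / 4 * s := by rw [hδn, mul_comm]; gcongr
  have hEE : EE N v = Real.exp (-N * v ^ 2) * (Complex.exp δ / (1 + w)) := by
    rw [EE, ← hw, mul_div_assoc', Complex.ofReal_exp, ← Complex.exp_add]
    congr 2
    rw [hδ]; push_cast; field_simp; ring
  have hs1 : ‖Complex.exp δ - 1 - δ‖ ≤ (s * |v|) ^ 2 * Real.exp (3 / 4 * s) := by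
    have := Complex.norm_exp_sub_sum_le_norm_mul_exp δ 2
    simp only [Finset.sum_range_succ, Finset.sum_range_zero, Nat.factorial] at this
    norm_num at this
    rw [← sub_sub] at this
    refine this.trans ?_
    gcongr
  have key : Complex.exp δ / (1 + w) - (1 - w + N * v ^ 2 * w) =
      (Complex.exp δ - 1 - δ) / (1 + w) + (w ^ 2 / (1 + w) -
        (N * v ^ 2 * w * (w * (2 + w))) / (1 + w) ^ 2) := by
    rw [hδ]; field_simp; ring
  have b1 : ‖(Complex.exp δ - 1 - δ) / (1 + w)‖ ≤ (s * |v|) ^ 2 * Real.exp (3 / 4 * s) := by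
    rw [norm_div]
    exact (div_le_self (norm_nonneg _) hn1).trans hs1
  have b2 : ‖w ^ 2 / (1 + w)‖ ≤ v ^ 2 := by
    rw [norm_div, norm_pow, hw1, sq_abs]
    exact div_le_self (sq_nonneg _) hn1
  have b3 : ‖(N * v ^ 2 * w * (w * (2 + w))) / (1 + w) ^ 2‖ ≤ 3 * (s * v ^ 2) := by
    rw [norm_div, norm_pow]
    refine (div_le_self (norm_nonneg _) (one_le_pow₀ hn1)).trans ?_
    have h2w : ‖2 + w‖ ≤ 3 := by
      refine (norm_add_le _ _).trans ?_
      rw [hw1]; norm_num; linarith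
    rw [norm_mul _ (w * (2 + w)), norm_mul w, norm_mul _ w, norm_mul (N : ℂ), norm_pow,
      Complex.norm_real, Complex.norm_real, hw1, Real.norm_of_nonneg hN0.le, Real.norm_eq_abs, sq_abs]
    calc N * v ^ 2 * |v| * (|v| * ‖2 + w‖) ≤ N * v ^ 2 * |v| * (|v| * 3) := by gcongr
      _ = 3 * (s * |v| ^ 2) := by rw [hs]; ring
      _ = _ := by rw [sq_abs]
  have hexp1 : 1 ≤ Real.exp (3 / 4 * s) := Real.one_le_exp (by positivity)
  have hvs : v ^ 2 = s / N := by rw [hs]; field_simp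
  have total : ‖Complex.exp δ / (1 + w) - (1 - w + N * v ^ 2 * w)‖ ≤
      (s + 3 * s ^ 2 + s ^ 3) / N * Real.exp (3 / 4 * s) := by
    rw [key]
    refine (norm_add_le _ _).trans ?_
    have := norm_sub_le (w ^ 2 / (1 + w)) ((N * v ^ 2 * w * (w * (2 + w))) / (1 + w) ^ 2)
    have e1 : (s * |v|) ^ 2 = s ^ 3 / N := by rw [mul_pow, sq_abs, hvs]; ring
    have e2 : 3 * (s * v ^ 2) = 3 * s ^ 2 / N := by rw [hvs]; ring
    rw [e1] at b1
    rw [e2] at b3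
    rw [hvs] at b2
    have h3 : s / N + 3 * s ^ 2 / N ≤ (s / N + 3 * s ^ 2 / N) * Real.exp (3 / 4 * s) :=
      le_mul_of_one_le_right (by positivity) hexp1
    calc _ ≤ s ^ 3 / N * Real.exp (3 / 4 * s) + (s / N + 3 * s ^ 2 / N) := by linarith
      _ ≤ s ^ 3 / N * Real.exp (3 / 4 * s) + (s / N + 3 * s ^ 2 / N) * Real.exp (3 / 4 * s) := by
        linarith
      _ = _ := by ring
  -- `3464 = 1 · 8 + 3 · 128 + 3072`, from `sⁱ ≤ i! 8ⁱ e^{s/8}`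
  have hpoly : s + 3 * s ^ 2 + s ^ 3 ≤ 3464 * Real.exp (s / 8) := by
    have p1 := Real.pow_div_factorial_le_exp (s / 8) (by positivity) 1
    have p2 := Real.pow_div_factorial_le_exp (s / 8) (by positivity) 2
    have p3 := Real.pow_div_factorial_le_exp (s / 8) (by positivity) 3
    norm_num [Nat.factorial] at p1 p2 p3
    nlinarith
  rw [hEE, ← mul_sub, norm_mul, Complex.norm_real, Real.norm_of_nonneg (Real.exp_pos _).le]
  calc _ ≤ Real.exp (-N * v ^ 2) * ((s + 3 * s ^ 2 + s ^ 3) / N * Real.exp (3 / 4 * s)) := by gcongr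
    _ ≤ Real.exp (-N * v ^ 2) * (3464 * Real.exp (s / 8) / N * Real.exp (3 / 4 * s)) := by gcongr
    _ = 3464 / N * (Real.exp (-N * v ^ 2) * Real.exp (s / 8) * Real.exp (3 / 4 * s)) := by ring
    _ = _ := by
      rw [← Real.exp_add, ← Real.exp_add]
      congr 2
      rw [hs]; ring

lemma EE_cont (N : ℝ) : Continuous (EE N) := by
  unfold EE
  refine Continuous.div ?_ (by fun_prop) fun v => one_add_ne v
  exact Complex.continuous_exp.comp
    (Continuous.div (by fun_prop) (by fun_prop) fun v => one_add_ne v)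

/-- The saddle point integral. In the first-order expansion of the integrand the correction terms are
odd in `v` and integrate to `0`, so the relative error is `O(1/N)` rather than `O(N^{-1/2})`. -/
lemma saddle : ∃ C > (0 : ℝ), ∀ N : ℝ, 1 ≤ N →
    ‖(∫ v in (-1 : ℝ)..1, EE N v) - (√(π / N) : ℝ)‖ ≤ C / N * √(π / N) := by
  refine ⟨3464 * 3 + 4, by norm_num, fun N hN => ?_⟩
  have hN0 : 0 < N := by linarith
  set G : ℝ → ℂ := fun v =>
    Real.exp (-N * v ^ 2) * (1 - v * Complex.I + N * v ^ 2 * (v * Complex.I)) with hG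
  have hGc : Continuous G := by fun_prop
  have h1 : ‖(∫ v in (-1 : ℝ)..1, EE N v) - ∫ v in (-1 : ℝ)..1, G v‖ ≤
      3464 / N * (3 * √(π / N)) := by
    rw [← intervalIntegral.integral_sub ((EE_cont N).intervalIntegrable _ _)
      (hGc.intervalIntegrable _ _)]
    have h2 : ‖∫ v in (-1 : ℝ)..1, (EE N v - G v)‖ ≤
        ∫ v in (-1 : ℝ)..1, 3464 / N * Real.exp (-(N / 8) * v ^ 2) := by
      refine intervalIntegral.norm_integral_le_of_norm_le (by norm_num) ?_
        (Continuous.intervalIntegrable (by fun_prop) _ _)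
      refine Filter.Eventually.of_forall fun v hv => EE_expand hN ?_
      rw [abs_le]; exact ⟨hv.1.le, hv.2⟩
    refine h2.trans ?_
    rw [intervalIntegral.integral_const_mul]
    have h3 := gauss_interval (by positivity : 0 < N / 8) (by norm_num : (-1 : ℝ) ≤ 1)
    have h4 : √(π / (N / 8)) ≤ 3 * √(π / N) := by
      rw [Real.sqrt_le_left (by positivity), mul_pow, Real.sq_sqrt (by positivity)]
      have : 0 < π / N := by positivity
      rw [show π / (N / 8) = 8 * (π / N) by field_simp]
      linarith
    gcongr
    exact h3.trans h4
  have h5 : ∫ v in (-1 : ℝ)..1, G v = ((∫ v in (-1 : ℝ)..1, Real.exp (-N * v ^ 2) : ℝ) : ℂ) := by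
    set O : ℝ → ℂ := fun v =>
      Real.exp (-N * v ^ 2) * (- (v * Complex.I) + N * v ^ 2 * (v * Complex.I)) with hO
    have hO' : ∫ v in (-1 : ℝ)..1, O v = 0 := by
      refine integral_odd (fun v => ?_) 1
      simp only [hO, Complex.ofReal_neg, neg_sq]
      ring
    have e : G = fun v => ((Real.exp (-N * v ^ 2) : ℝ) : ℂ) + O v := by
      funext v; simp only [hG, hO]; ring
    rw [e, intervalIntegral.integral_add (Continuous.intervalIntegrable (by fun_prop) _ _)
      (Continuous.intervalIntegrable (by fun_prop) _ _), hO', add_zero,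
      intervalIntegral.integral_ofReal]
  rw [h5] at h1
  have h6 := gauss_tail hN
  rw [← Real.norm_eq_abs, ← Complex.norm_real, Complex.ofReal_sub] at h6
  calc _ ≤ 3464 / N * (3 * √(π / N)) + 4 / N * √(π / N) :=
        (norm_sub_le_norm_sub_add_norm_sub _ _ _).trans (add_le_add h1 h6)
    _ = _ := by ring

/-! ### Estimates on the major and minor arcs -/

/-- The integrand of Cauchy's formula is continuous, as a uniformly convergent series. -/
lemma integrand_cont (k t r s n : ℕ) {x : ℝ} (hx : 0 < x) :
    Continuous fun y : ℝ => (LL k t r (x + y * Complex.I) - LL k t s (x + y * Complex.I)) *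
      Pk k (Complex.exp (-(x + y * Complex.I))) * Complex.exp (n * (x + y * Complex.I)) := by
  have hre : ∀ y : ℝ, 0 < ((x : ℂ) + y * Complex.I).re := fun y => by simpa using hx
  have e : (fun y : ℝ => (LL k t r (x + y * Complex.I) - LL k t s (x + y * Complex.I)) *
      Pk k (Complex.exp (-(x + y * Complex.I))) * Complex.exp (n * (x + y * Complex.I))) =
      fun y : ℝ => (∑' m, dd k t r s m * Complex.exp (-(x + y * Complex.I)) ^ m) *
        Complex.exp (n * (x + y * Complex.I)) := by
    funext y
    rw [(dd_gen k t r s (hre y)).2]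
  rw [e]
  have h0 : 0 < (x : ℂ).re := by simpa using hx
  refine Continuous.mul (continuous_tsum (u := fun m => ‖dd k t r s m * Complex.exp (-(x : ℂ)) ^ m‖)
    (fun m => by fun_prop) (dd_gen k t r s h0).1 fun m y => ?_) (by fun_prop)
  simp only [norm_mul, norm_pow, Complex.norm_exp]
  refine le_of_eq ?_
  congr 2
  simp

/-- On the major arc `A / z + n z` has real part at most `2N - N y² / (2 x²)`, where
`A = N x` and `n x = N`. -/
lemma arc_norm {x N y : ℝ} (hx : 0 < x) (hN : 0 ≤ N) (hy : |y| ≤ x) :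
    ‖Complex.exp ((N * x : ℝ) / (x + y * Complex.I))‖ * Real.exp N ≤
      Real.exp (2 * N) * Real.exp (-(N / (2 * x ^ 2)) * y ^ 2) := by
  rw [Complex.norm_exp, ← Real.exp_add, ← Real.exp_add, Real.exp_le_exp, Complex.div_re]
  simp only [Complex.ofReal_re, Complex.ofReal_im, Complex.normSq_apply, Complex.add_re,
    Complex.mul_re, Complex.I_re, Complex.I_im, Complex.add_im, Complex.mul_im]
  have hy2 : y ^ 2 ≤ x ^ 2 := by rw [← sq_abs]; gcongr
  have h1 : y ^ 2 / (2 * x ^ 2) ≤ y ^ 2 / (x ^ 2 + y ^ 2) := by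
    gcongr; linarith
  have h2 : N * (y ^ 2 / (2 * x ^ 2)) ≤ N * (y ^ 2 / (x ^ 2 + y ^ 2)) := by gcongr
  have h3 : N * x * x / (x ^ 2 + y ^ 2) = N - N * (y ^ 2 / (x ^ 2 + y ^ 2)) := by
    have : x ^ 2 + y ^ 2 ≠ 0 := by positivity
    field_simp; ring
  have h4 : -(N / (2 * x ^ 2)) * y ^ 2 = -(N * (y ^ 2 / (2 * x ^ 2))) := by ring
  rw [h4]
  simp
  rw [← pow_two, ← pow_two, h3]
  linarith

/-- The substitution `y = xv` in the main term on the major arc, where `A = Nx` and `nx = N`; it uses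
`1/(1 + w) + (1 + w) = 2 + w²/(1 + w)` with `w = iv`. -/
lemma arc_integral {x N : ℝ} {n : ℕ} (hx : 0 < x) (hn : n * x = N) :
    ∫ y in (-x)..x, Complex.exp ((N * x : ℝ) / (x + y * Complex.I)) *
      Complex.exp (n * (x + y * Complex.I)) / (x + y * Complex.I) =
      Real.exp (2 * N) * ∫ v in (-1 : ℝ)..1, EE N v := by
  have hxc : (x : ℂ) ≠ 0 := by exact_mod_cast hx.ne'
  have h := intervalIntegral.smul_integral_comp_mul_left (a := -1) (b := 1)
    (fun y : ℝ => Complex.exp ((N * x : ℝ) / (x + y * Complex.I)) *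
      Complex.exp (n * (x + y * Complex.I)) / (x + y * Complex.I)) x
  rw [mul_neg, mul_one] at h
  rw [← h, ← intervalIntegral.integral_const_mul, ← intervalIntegral.integral_smul]
  refine intervalIntegral.integral_congr fun v _ => ?_
  have hw := one_add_ne v
  have e1 : (x : ℂ) + ((x * v : ℝ) : ℂ) * Complex.I = x * (1 + v * Complex.I) := by
    push_cast; ring
  have hI : (v * Complex.I : ℂ) ^ 2 = - (v : ℂ) ^ 2 := by rw [mul_pow, Complex.I_sq]; ring
  have hnc : (n : ℂ) * x = N := by exact_mod_cast hn
  have key : Complex.exp ((N * x : ℝ) / (x * (1 + v * Complex.I))) *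
      Complex.exp (n * (x * (1 + v * Complex.I))) =
      Real.exp (2 * N) * Complex.exp (-(N * v ^ 2) / (1 + v * Complex.I)) := by
    rw [Complex.ofReal_exp, ← Complex.exp_add, ← Complex.exp_add, ← mul_assoc, hnc]
    congr 1
    push_cast
    field_simp
    linear_combination (N : ℂ) * hI
  rw [e1, key, EE, Complex.real_smul]
  field_simp

/-- The minor arc gain beats the factor `x^{-2}` lost to the trivial bound for `LL`. -/
lemma minor_arc_exp {c x : ℝ} (hc : 0 < c) (hx : 0 < x) :
    Real.exp (-(c / x)) ≤ 24 / c ^ 4 * x ^ 4 := by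
  have h := Real.pow_div_factorial_le_exp (c / x) (by positivity) 4
  rw [Real.exp_neg, inv_le_comm₀ (Real.exp_pos _) (by positivity)]
  refine le_trans (le_of_eq ?_) h
  norm_num [Nat.factorial]
  field_simp

/-- On the cone, the generating function of the difference is its main term up to an error without
the factor `1/z`. -/
lemma major_err {k t r s rbar sbar : ℕ} (hk : 2 ≤ k) (ht : 2 ≤ t) (hcop : Nat.Coprime k t)
    (hr1 : 1 ≤ r) (hrt : r ≤ t) (hs1 : 1 ≤ s) (hst : s ≤ t)
    (hrb1 : 1 ≤ rbar) (hrbt : rbar ≤ t) (hrb : k * rbar ≡ r [MOD t])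
    (hsb1 : 1 ≤ sbar) (hsbt : sbar ≤ t) (hsb : k * sbar ≡ s [MOD t]) :
    ∃ C > (0 : ℝ), ∃ x0 > (0 : ℝ), ∀ z ∈ cone, z.re < x0 →
      ‖Pk k (Complex.exp (-z))‖ ≤ C * ‖Complex.exp ((π ^ 2 * (1 - 1 / k) / 6 : ℝ) / z)‖ ∧
      ‖(LL k t r z - LL k t s z) * Pk k (Complex.exp (-z)) -
        ((psikt k t r rbar - psikt k t s sbar) / t * (√(k : ℝ))⁻¹ : ℝ) *
          (Complex.exp ((π ^ 2 * (1 - 1 / k) / 6 : ℝ) / z) / z)‖ ≤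
        C * ‖Complex.exp ((π ^ 2 * (1 - 1 / k) / 6 : ℝ) / z)‖ := by
  obtain ⟨C1, hC1, h1⟩ := LL_asymp hk hcop (by omega) hr1 hrt hs1 hst hrb1 hrbt hrb hsb1 hsbt hsb
  obtain ⟨C2, hC2, x0, hx0, h2⟩ := Pk_major (k := k) (by omega)
  set κ : ℝ := (psikt k t r rbar - psikt k t s sbar) / t with hκ
  refine ⟨1 + 2 * C2 + (C1 * (1 + 2 * C2) + |κ| * C2), by positivity, min x0 1, by positivity,
    fun z hz hzx => ?_⟩
  have hz0 : 0 < z.re := hz.1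
  have hz1 : z.re ≤ 1 := (hzx.trans_le (min_le_right _ _)).le
  have hzn : ‖z‖ ≤ 2 := by linarith [cone_norm' hz]
  have hzne : z ≠ 0 := by rintro rfl; simp at hz0
  have hzpos : 0 < ‖z‖ := norm_pos_iff.2 hzne
  have a1 := h1 z hz hz1
  have a2 := h2 z hz (hzx.trans_le (min_le_left _ _))
  generalize Complex.exp ((π ^ 2 * (1 - 1 / k) / 6 : ℝ) / z) = E at a2 ⊢
  generalize Pk k (Complex.exp (-z)) = P at a2 ⊢
  generalize LL k t r z - LL k t s z = D at a1 ⊢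
  have hc : ‖((√(k : ℝ) : ℝ) : ℂ)⁻¹‖ ≤ 1 := by
    rw [norm_inv, Complex.norm_real, Real.norm_of_nonneg (Real.sqrt_nonneg _)]
    refine inv_le_one_of_one_le₀ (Real.one_le_sqrt.2 ?_)
    exact_mod_cast (by omega : 1 ≤ k)
  have hP : ‖P‖ ≤ (1 + 2 * C2) * ‖E‖ := by
    have : P = ((√(k : ℝ) : ℝ) : ℂ)⁻¹ * E + (P - ((√(k : ℝ) : ℝ) : ℂ)⁻¹ * E) := by ring
    rw [this]
    refine (norm_add_le _ _).trans ?_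
    rw [norm_mul]
    calc _ ≤ 1 * ‖E‖ + C2 * 2 * ‖E‖ := by
          refine add_le_add (by gcongr) (a2.trans (by gcongr))
      _ = _ := by ring
  constructor
  · refine hP.trans (mul_le_mul_of_nonneg_right ?_ (norm_nonneg _))
    have : 0 ≤ C1 * (1 + 2 * C2) + |κ| * C2 := by positivity
    linarith
  · have e : D * P - (κ * (√(k : ℝ))⁻¹ : ℝ) * (E / z) = (D - (κ : ℝ) / z) * P +
        κ / z * (P - ((√(k : ℝ) : ℝ) : ℂ)⁻¹ * E) := by
      push_cast; field_simp; ring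
    rw [e]
    refine (norm_add_le _ _).trans ?_
    rw [norm_mul, norm_mul, norm_div, Complex.norm_real, Real.norm_eq_abs]
    calc _ ≤ C1 * ((1 + 2 * C2) * ‖E‖) + |κ| / ‖z‖ * (C2 * ‖z‖ * ‖E‖) := by gcongr
      _ = (C1 * (1 + 2 * C2) + |κ| * C2) * ‖E‖ := by field_simp
      _ ≤ _ := mul_le_mul_of_nonneg_right (by linarith) (norm_nonneg _)

/-! ### The asymptotics of the difference -/

/-- The asymptotics of the difference in terms of the saddle point parameter `N`, which satisfies
`N² = An`; the circle of integration has radius `e^{-x}` with `x = A/N`. -/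
lemma dd_asymp {k t r s rbar sbar : ℕ} (hk : 2 ≤ k) (ht : 2 ≤ t) (hcop : Nat.Coprime k t)
    (hr1 : 1 ≤ r) (hrt : r ≤ t) (hs1 : 1 ≤ s) (hst : s ≤ t)
    (hrb1 : 1 ≤ rbar) (hrbt : rbar ≤ t) (hrb : k * rbar ≡ r [MOD t])
    (hsb1 : 1 ≤ sbar) (hsbt : sbar ≤ t) (hsb : k * sbar ≡ s [MOD t]) :
    ∃ C > (0 : ℝ), ∃ N0 ≥ (1 : ℝ), ∀ (n : ℕ) (N : ℝ), N0 ≤ N →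
      N ^ 2 = (π ^ 2 * (1 - 1 / k) / 6 : ℝ) * n →
      ‖2 * π * dd k t r s n -
        ((psikt k t r rbar - psikt k t s sbar) / t * (√(k : ℝ))⁻¹ *
          (Real.exp (2 * N) * √(π / N)) : ℝ)‖ ≤ C / N * (Real.exp (2 * N) * √(π / N)) := by
  obtain ⟨C1, hC1, x0, hx0, hmaj⟩ :=
    major_err hk ht hcop hr1 hrt hs1 hst hrb1 hrbt hrb hsb1 hsbt hsb
  obtain ⟨c, hc, hmin⟩ := Pk_minor hk
  obtain ⟨C2, hC2, hsad⟩ := saddle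
  have hA : 0 < (π ^ 2 * (1 - 1 / k) / 6 : ℝ) := by
    have : (1 : ℝ) / k < 1 := by
      rw [div_lt_one (by positivity)]
      exact_mod_cast (by omega : 1 < k)
    have : 0 < 1 - (1 : ℝ) / k := by linarith
    positivity
  generalize (π ^ 2 * (1 - 1 / k) / 6 : ℝ) = A at hA hmaj ⊢
  generalize (psikt k t r rbar - psikt k t s sbar) / t * (√(k : ℝ))⁻¹ = κ at hmaj ⊢
  refine ⟨2 * π * (8 * C1 * (24 / c ^ 4)) * A ^ 2 + C1 * (2 * A) + |κ| * C2, by positivity,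
    max (max 1 A) (A / x0 + 1), by simp, fun n N hN hNn => ?_⟩
  have hN1 : 1 ≤ N := (le_max_left _ _).trans ((le_max_left _ _).trans hN)
  have hNA : A ≤ N := (le_max_right _ _).trans ((le_max_left _ _).trans hN)
  have hNx : A / x0 < N := by linarith [(le_max_right _ _).trans hN]
  have hN0 : 0 < N := by linarith
  obtain ⟨x, hxdef⟩ : ∃ x, x = A / N := ⟨_, rfl⟩
  have hx : 0 < x := by rw [hxdef]; positivity
  have hx1 : x ≤ 1 := by rw [hxdef]; exact div_le_one_of_le₀ hNA hN0.le
  have hxx0 : x < x0 := by rw [hxdef, div_lt_comm₀ hN0 hx0]; exact hNx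
  have hnx : n * x = N := by rw [hxdef]; field_simp; linarith
  have hNxA : N * x = A := by rw [hxdef]; field_simp
  have hAx : A / x = N := by rw [← hNxA]; field_simp
  have hpi : x < π := by linarith [Real.pi_gt_three]
  set Φ : ℝ → ℂ := fun y => (LL k t r (x + y * Complex.I) - LL k t s (x + y * Complex.I)) *
      Pk k (Complex.exp (-(x + y * Complex.I))) * Complex.exp (n * (x + y * Complex.I)) with hΦ
  have hΦc : Continuous Φ := integrand_cont k t r s n hx
  have hint : ∀ a b, IntervalIntegrable Φ MeasureTheory.volume a b :=
    fun a b => hΦc.intervalIntegrable _ _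
  have hexpn : ∀ y : ℝ, ‖Complex.exp (n * (x + y * Complex.I))‖ = Real.exp N := by
    intro y
    rw [Complex.norm_exp]
    congr 1
    rw [← hnx]; simp
  have hre : ∀ y : ℝ, ((x : ℂ) + y * Complex.I).re = x := fun y => by simp
  have him : ∀ y : ℝ, ((x : ℂ) + y * Complex.I).im = y := fun y => by simp
  have hcone : ∀ y : ℝ, |y| ≤ x → (x : ℂ) + y * Complex.I ∈ cone := by
    intro y hy
    constructor
    · rw [hre]; exact hx
    · rw [hre, him]; exact hy
  set E := Real.exp (2 * N) with hE
  have hEpos : 0 < E := Real.exp_pos _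
  -- On `x ≤ |y| ≤ π` the integrand is `O(x² e^{2N})`: the gain `e^{-c/x}` is `O(x⁴)`, and
  -- `P_k(e^{-x}) e^{nx}` is `O(e^{2N})` since `A/x = nx = N`.
  have hP0 : ‖Pk k (Complex.exp (-(x : ℂ)))‖ ≤ C1 * Real.exp N := by
    have h := (hmaj (x + (0 : ℝ) * Complex.I) (hcone 0 (by simpa using hx.le))
      (by rw [hre]; exact hxx0)).1
    rw [Complex.ofReal_zero, zero_mul, add_zero, Complex.norm_exp] at h
    rw [← Complex.ofReal_div, Complex.ofReal_re, hAx] at h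
    exact h
  have hminor : ∀ y : ℝ, x ≤ |y| → |y| ≤ π → ‖Φ y‖ ≤ 8 * C1 * (24 / c ^ 4) * x ^ 2 * E := by
    intro y hy1 hy2
    have l1 := LL_crude k t r (z := x + y * Complex.I) (by rwa [hre]) (by rwa [hre])
    have l2 := LL_crude k t s (z := x + y * Complex.I) (by rwa [hre]) (by rwa [hre])
    rw [hre] at l1 l2
    have l3 : ‖LL k t r (x + y * Complex.I) - LL k t s (x + y * Complex.I)‖ ≤ 8 / x ^ 2 :=
      (norm_sub_le _ _).trans ((add_le_add l1 l2).trans (le_of_eq (by ring)))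
    have l4 := hmin x y hx hx1 hy1 hy2
    have l5 := minor_arc_exp hc hx
    simp only [hΦ]
    rw [norm_mul, norm_mul, hexpn]
    have l6 : ‖Pk k (Complex.exp (-(x + y * Complex.I)))‖ ≤
        C1 * Real.exp N * (24 / c ^ 4 * x ^ 4) := by
      refine l4.trans ?_
      gcongr
    calc _ ≤ 8 / x ^ 2 * (C1 * Real.exp N * (24 / c ^ 4 * x ^ 4)) * Real.exp N := by gcongr
      _ = 8 * C1 * (24 / c ^ 4) * x ^ 2 * (Real.exp N * Real.exp N) := by field_simp
      _ = _ := by rw [← Real.exp_add, hE, two_mul]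
  set B := 8 * C1 * (24 / c ^ 4) * x ^ 2 * E with hB
  have hB0 : 0 ≤ B := by positivity
  have hm1 : ‖∫ y in (-π)..(-x), Φ y‖ ≤ B * π := by
    refine (intervalIntegral.norm_integral_le_of_norm_le_const (C := B) fun y hy => ?_).trans ?_
    · rw [Set.uIoc_of_le (by linarith)] at hy
      have : |y| = -y := abs_of_nonpos (by linarith [hy.2])
      exact hminor y (by rw [this]; linarith [hy.2]) (by rw [this]; linarith [hy.1])
    · gcongr
      rw [abs_of_nonneg (by linarith)]; linarith
  have hm2 : ‖∫ y in x..π, Φ y‖ ≤ B * π := by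
    refine (intervalIntegral.norm_integral_le_of_norm_le_const (C := B) fun y hy => ?_).trans ?_
    · rw [Set.uIoc_of_le hpi.le] at hy
      have : |y| = y := abs_of_nonneg (by linarith [hy.1])
      exact hminor y (by rw [this]; linarith [hy.1]) (by rw [this]; linarith [hy.2])
    · gcongr
      rw [abs_of_nonneg (by linarith)]; linarith
  -- On `|y| ≤ x` the integrand is compared with `κ M`; the error has no factor `1/z` and is
  -- dominated by a Gaussian of width `x/√N`, which saves a factor `x` over the main term.
  set M : ℝ → ℂ := fun y => Complex.exp ((N * x : ℝ) / (x + y * Complex.I)) *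
      Complex.exp (n * (x + y * Complex.I)) / (x + y * Complex.I) with hM
  have hzne : ∀ y : ℝ, (x : ℂ) + y * Complex.I ≠ 0 := by
    intro y h
    have := hre y
    rw [h] at this
    simp at this
    linarith
  have hMc : Continuous M := by
    refine Continuous.div (Continuous.mul (Complex.continuous_exp.comp
      (Continuous.div (by fun_prop) (by fun_prop) hzne)) (by fun_prop)) (by fun_prop) hzne
  have hmajor : ‖(∫ y in (-x)..x, Φ y) - κ * ∫ y in (-x)..x, M y‖ ≤
      C1 * E * (x * (2 * √(π / N))) := by
    rw [← intervalIntegral.integral_const_mul,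
      ← intervalIntegral.integral_sub (hint _ _) ((hMc.intervalIntegrable _ _).const_mul _)]
    have h2 : ‖∫ y in (-x)..x, (Φ y - κ * M y)‖ ≤
        ∫ y in (-x)..x, C1 * E * Real.exp (-(N / (2 * x ^ 2)) * y ^ 2) := by
      refine intervalIntegral.norm_integral_le_of_norm_le (by linarith) ?_
        (Continuous.intervalIntegrable (by fun_prop) _ _)
      refine Filter.Eventually.of_forall fun y hy => ?_
      have hyx : |y| ≤ x := abs_le.2 ⟨hy.1.le, hy.2⟩
      have h3 := (hmaj _ (hcone y hyx) (by rw [hre]; exact hxx0)).2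
      have h4 := arc_norm hx hN0.le hyx
      rw [← hNxA] at h3
      have e : Φ y - κ * M y = ((LL k t r (x + y * Complex.I) - LL k t s (x + y * Complex.I)) *
          Pk k (Complex.exp (-(x + y * Complex.I))) - κ *
          (Complex.exp ((N * x : ℝ) / (x + y * Complex.I)) / (x + y * Complex.I))) *
          Complex.exp (n * (x + y * Complex.I)) := by
        simp only [hΦ, hM]; ring
      rw [e, norm_mul, hexpn]
      calc _ ≤ C1 * ‖Complex.exp ((N * x : ℝ) / (x + y * Complex.I))‖ * Real.exp N := by gcongr
        _ = C1 * (‖Complex.exp ((N * x : ℝ) / (x + y * Complex.I))‖ * Real.exp N) := by ring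
        _ ≤ C1 * (E * Real.exp (-(N / (2 * x ^ 2)) * y ^ 2)) := by gcongr
        _ = _ := by ring
    refine h2.trans ?_
    rw [intervalIntegral.integral_const_mul]
    have h5 := gauss_interval (by positivity : 0 < N / (2 * x ^ 2)) (by linarith : -x ≤ x)
    have h6 : √(π / (N / (2 * x ^ 2))) ≤ x * (2 * √(π / N)) := by
      rw [Real.sqrt_le_left (by positivity), mul_pow, mul_pow, Real.sq_sqrt (by positivity)]
      have : 0 < π / N := by positivity
      rw [show π / (N / (2 * x ^ 2)) = x ^ 2 * (2 * (π / N)) by field_simp]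
      gcongr
      linarith
    gcongr
    exact h5.trans h6
  rw [arc_integral hx hnx] at hmajor
  have hs := hsad N hN1
  have hsplit : 2 * π * dd k t r s n = (∫ y in (-π)..(-x), Φ y) + (∫ y in (-x)..x, Φ y) +
      ∫ y in x..π, Φ y := by
    rw [intervalIntegral.integral_add_adjacent_intervals (hint _ _) (hint _ _),
      intervalIntegral.integral_add_adjacent_intervals (hint _ _) (hint _ _)]
    exact dd_integral k t r s n hx
  set S := √(π / N) with hS
  generalize (∫ v in (-1 : ℝ)..1, EE N v) = J at hmajor hs
  generalize (∫ y in (-π)..(-x), Φ y) = I1 at hm1 hsplit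
  generalize (∫ y in (-x)..x, Φ y) = I2 at hmajor hsplit
  generalize (∫ y in x..π, Φ y) = I3 at hm2 hsplit
  -- turns the minor arc bound `O(x² e^{2N})`, with `x² = A²/N²`, into `O(e^{2N} √(π/N) / N)`
  have hNS : 1 / N ≤ S := by
    rw [hS]
    refine Real.le_sqrt_of_sq_le ?_
    rw [div_pow, div_le_div_iff₀ (by positivity) hN0]
    nlinarith [Real.pi_gt_three]
  have hBS : B ≤ 8 * C1 * (24 / c ^ 4) * A ^ 2 / N * (E * S) := by
    have : x ^ 2 = A ^ 2 / N * (1 / N) := by rw [hxdef]; field_simp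
    rw [hB, this]
    calc _ ≤ 8 * C1 * (24 / c ^ 4) * (A ^ 2 / N * S) * E := by gcongr
      _ = _ := by ring
  have hfin : 2 * π * dd k t r s n - (κ * (E * S) : ℝ) =
      I1 + I3 + (I2 - κ * (E * J)) + κ * E * (J - S) := by
    rw [hsplit]; push_cast; ring
  rw [hfin]
  have hk4 : ‖(κ : ℂ) * E * (J - S)‖ ≤ |κ| * E * (C2 / N * S) := by
    rw [norm_mul, norm_mul, Complex.norm_real, Complex.norm_real, Real.norm_of_nonneg hEpos.le,
      Real.norm_eq_abs]
    gcongr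
  calc _ ≤ B * π + B * π + C1 * E * (x * (2 * S)) + |κ| * E * (C2 / N * S) := by
        refine (norm_add_le _ _).trans (add_le_add ((norm_add_le _ _).trans (add_le_add
          ((norm_add_le _ _).trans (add_le_add hm1 hm2)) hmajor)) hk4)
    _ = 2 * π * B + C1 * E * (x * (2 * S)) + |κ| * E * (C2 / N * S) := by ring
    _ ≤ 2 * π * (8 * C1 * (24 / c ^ 4) * A ^ 2 / N * (E * S)) + C1 * E * (x * (2 * S)) +
        |κ| * E * (C2 / N * S) := by gcongr
    _ = _ := by rw [hxdef]; ring

/-- The front factor in terms of `N`, by `2N = π√(2Kn/3)`. -/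
lemma Fkt_eq {k t n : ℕ} (hk : 2 ≤ k) (ht : 2 ≤ t) {N : ℝ} (hN : 0 < N)
    (hNn : N ^ 2 = (π ^ 2 * (1 - 1 / k) / 6 : ℝ) * n) :
    2 * π * Fkt k t n = (t : ℝ)⁻¹ * (√(k : ℝ))⁻¹ * (Real.exp (2 * N) * √(π / N)) := by
  have hK : 0 < 1 - (1 : ℝ) / k := by
    have : (1 : ℝ) / k < 1 := by
      rw [div_lt_one (by positivity)]
      exact_mod_cast (by omega : 1 < k)
    linarith
  have hk0 : 0 < √(k : ℝ) := Real.sqrt_pos.2 (by positivity)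
  unfold Fkt
  generalize (1 - (1 : ℝ) / k) = K at *
  have hn : 0 < (n : ℝ) := by
    rcases Nat.eq_zero_or_pos n with h | h
    · subst h; simp at hNn; linarith
    · exact_mod_cast h
  have e1 : π * √(2 * K * n / 3) = 2 * N := by
    have : 2 * K * n / 3 = (2 * N / π) ^ 2 := by
      rw [div_pow, mul_pow, hNn]; field_simp; ring
    rw [this, Real.sqrt_sq (by positivity)]
    field_simp
  rw [e1]
  -- both sides are positive, so it suffices to compare fourth powers
  have e2 : (3 : ℝ) ^ ((1 : ℝ) / 4) * (2 * √N * π) =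
      √π * ((2 : ℝ) ^ ((3 : ℝ) / 4) * K ^ ((1 : ℝ) / 4) * (n : ℝ) ^ ((1 : ℝ) / 4) * π) := by
    have q : ∀ a : ℝ, 0 ≤ a → (a ^ ((1 : ℝ) / 4)) ^ 4 = a := fun a ha => by
      rw [← Real.rpow_natCast, ← Real.rpow_mul ha]; norm_num
    have q2 : ((2 : ℝ) ^ ((3 : ℝ) / 4)) ^ 4 = 8 := by
      rw [← Real.rpow_natCast, ← Real.rpow_mul (by norm_num)]; norm_num
    have q3 : ∀ a : ℝ, 0 ≤ a → √a ^ 4 = a ^ 2 := fun a ha => by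
      rw [show 4 = 2 * 2 from rfl, pow_mul, Real.sq_sqrt ha]
    refine (pow_left_inj₀ (by positivity) (by positivity) (by norm_num : 4 ≠ 0)).1 ?_
    simp only [mul_pow]
    rw [q 3 (by norm_num), q2, q K hK.le, q n hn.le, q3 N hN.le, q3 π Real.pi_pos.le, hNn]
    ring
  have hsN : 0 < √N := Real.sqrt_pos.2 hN
  rw [Real.sqrt_div Real.pi_pos.le]
  have hD : 0 < (2 : ℝ) ^ ((3 : ℝ) / 4) * K ^ ((1 : ℝ) / 4) * (n : ℝ) ^ ((1 : ℝ) / 4) * π := by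
    positivity
  generalize (2 : ℝ) ^ ((3 : ℝ) / 4) * K ^ ((1 : ℝ) / 4) * (n : ℝ) ^ ((1 : ℝ) / 4) * π = D at *
  have ht0 : (0 : ℝ) < t := by positivity
  field_simp
  linear_combination e2

theorem stmt1 (k t r s : ℕ) (hk : 2 ≤ k) (ht : 2 ≤ t) (hcop : Nat.Coprime k t)
    (hr1 : 1 ≤ r) (hrt : r ≤ t) (hs1 : 1 ≤ s) (hst : s ≤ t)
    (rbar : ℕ) (hrbar1 : 1 ≤ rbar) (hrbar2 : rbar ≤ t)
    (hrbar : k * rbar ≡ r [MOD t])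
    (sbar : ℕ) (hsbar1 : 1 ≤ sbar) (hsbar2 : sbar ≤ t)
    (hsbar : k * sbar ≡ s [MOD t]) :
    (∃ C > (0 : ℝ), ∃ N : ℕ, ∀ n ≥ N,
      |((Dkx k t r n : ℝ) - (Dkx k t s n : ℝ)) / Fkt k t n -
          (psikt k t r rbar - psikt k t s sbar)|
        ≤ C * (n : ℝ) ^ (-(1 : ℝ)/2) * Real.log n) ∧
    (psikt k t r rbar > psikt k t s sbar →
      ∃ N : ℕ, ∀ n ≥ N, Dkx k t r n > Dkx k t s n) := by
  obtain ⟨C, hC, N0, hN0, hmain⟩ :=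
    dd_asymp hk ht hcop hr1 hrt hs1 hst hrbar1 hrbar2 hrbar hsbar1 hsbar2 hsbar
  have hA : 0 < (π ^ 2 * (1 - 1 / k) / 6 : ℝ) := by
    have : (1 : ℝ) / k < 1 := by
      rw [div_lt_one (by positivity)]
      exact_mod_cast (by omega : 1 < k)
    have : 0 < 1 - (1 : ℝ) / k := by linarith
    positivity
  have hF := fun (n : ℕ) (N : ℝ) => Fkt_eq (n := n) (N := N) hk ht
  generalize (π ^ 2 * (1 - 1 / k) / 6 : ℝ) = A at hA hmain hF
  have ht0 : (0 : ℝ) < t := by positivity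
  have hk0 : 0 < √(k : ℝ) := Real.sqrt_pos.2 (by positivity)
  set κ := psikt k t r rbar - psikt k t s sbar with hκ
  have hst : ∀ n : ℕ, N0 ^ 2 / A ≤ n → 0 < Fkt k t n ∧
      |((Dkx k t r n : ℝ) - (Dkx k t s n : ℝ)) / Fkt k t n - κ| ≤
        C * t * √(k : ℝ) / √A * (n : ℝ) ^ (-(1 : ℝ) / 2) := by
    intro n hn
    rw [div_le_iff₀ hA] at hn
    have hn0 : 0 < (n : ℝ) := by
      by_contra h
      have : (n : ℝ) * A ≤ 0 := mul_nonpos_of_nonpos_of_nonneg (not_lt.1 h) hA.le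
      nlinarith
    have hNn : √(A * n) ^ 2 = A * n := Real.sq_sqrt (by positivity)
    have hN1 : N0 ≤ √(A * n) := Real.le_sqrt_of_sq_le (by linarith)
    have hNpos : 0 < √(A * n) := by linarith
    have h1 := hmain n _ hN1 hNn
    have h2 := hF n _ hNpos hNn
    have hNe : √(A * n) = √A * √n := Real.sqrt_mul hA.le _
    -- the relative error `C/N` is `C/√A` times `n^{-1/2}`
    have hrp : (n : ℝ) ^ (-(1 : ℝ) / 2) = (√(n : ℝ))⁻¹ := by
      rw [neg_div, Real.rpow_neg hn0.le, Real.sqrt_eq_rpow]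
    have hFpos : 0 < Fkt k t n := by
      have : 0 < 2 * π * Fkt k t n := by
        rw [h2]
        have := Real.exp_pos (2 * √(A * n))
        have : 0 < √(π / √(A * n)) := Real.sqrt_pos.2 (by positivity)
        positivity
      exact pos_of_mul_pos_right this (by positivity)
    refine ⟨hFpos, ?_⟩
    have h3 : Real.exp (2 * √(A * n)) * √(π / √(A * n)) =
        t * √(k : ℝ) * (2 * π * Fkt k t n) := by
      rw [h2]; field_simp
    rw [h3] at h1
    have h4 : 2 * π * dd k t r s n - (κ / t * (√(k : ℝ))⁻¹ *
        (t * √(k : ℝ) * (2 * π * Fkt k t n)) : ℝ) =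
        ((2 * π * (((Dkx k t r n : ℝ) - Dkx k t s n) - κ * Fkt k t n) : ℝ) : ℂ) := by
      have : κ / t * (√(k : ℝ))⁻¹ * (t * √(k : ℝ) * (2 * π * Fkt k t n)) =
        κ * (2 * π * Fkt k t n) := by field_simp
      rw [this, dd]; push_cast; ring
    rw [h4, Complex.norm_real, Real.norm_eq_abs, abs_mul, abs_of_pos (by positivity)] at h1
    have h5 : |((Dkx k t r n : ℝ) - Dkx k t s n) - κ * Fkt k t n| ≤
        C / √(A * n) * (t * √(k : ℝ) * Fkt k t n) := by
      have : C / √(A * n) * (t * √(k : ℝ) * (2 * π * Fkt k t n)) =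
        2 * π * (C / √(A * n) * (t * √(k : ℝ) * Fkt k t n)) := by ring
      rw [this] at h1
      exact le_of_mul_le_mul_left h1 (by positivity)
    have h6 : ((Dkx k t r n : ℝ) - Dkx k t s n) / Fkt k t n - κ =
        (((Dkx k t r n : ℝ) - Dkx k t s n) - κ * Fkt k t n) / Fkt k t n := by field_simp
    rw [h6, abs_div, abs_of_pos hFpos, div_le_iff₀ hFpos]
    refine h5.trans (le_of_eq ?_)
    rw [hrp, hNe]
    field_simp
  set C' := C * t * √(k : ℝ) / √A with hC'
  have hC'pos : 0 < C' := by
    have := Real.sqrt_pos.2 hA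
    positivity
  obtain ⟨n0, hn0⟩ := exists_nat_ge (N0 ^ 2 / A)
  refine ⟨⟨C', hC'pos, max n0 3, fun n hn => ?_⟩, fun hpos => ?_⟩
  · have hnn : N0 ^ 2 / A ≤ n := hn0.trans (by exact_mod_cast (le_max_left _ _).trans hn)
    have h3 : (3 : ℝ) ≤ n := by exact_mod_cast (le_max_right _ _).trans hn
    refine (hst n hnn).2.trans (le_mul_of_one_le_right (by positivity) ?_)
    -- the bound holds without the logarithm, and `log n ≥ 1` for `n ≥ 3`
    rw [Real.le_log_iff_exp_le (by linarith)]
    linarith [Real.exp_one_lt_d9]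
  · have hκpos : 0 < κ := by rw [hκ]; linarith
    have hlim : Filter.Tendsto (fun n : ℕ => C' * (n : ℝ) ^ (-(1 : ℝ) / 2)) Filter.atTop
        (nhds 0) := by
      have h := (tendsto_rpow_neg_atTop (by norm_num : (0 : ℝ) < 1 / 2)).comp
        tendsto_natCast_atTop_atTop
      have := h.const_mul C'
      rw [mul_zero] at this
      refine this.congr fun n => ?_
      simp only [Function.comp]
      norm_num
    have hev := (hlim.eventually (gt_mem_nhds hκpos)).and (Filter.eventually_ge_atTop n0)
    obtain ⟨N, hN⟩ := Filter.eventually_atTop.1 hev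
    refine ⟨N, fun n hn => ?_⟩
    obtain ⟨h1, h2⟩ := hN n hn
    obtain ⟨hFp, h3⟩ := hst n (hn0.trans (by exact_mod_cast h2))
    have h4 := (abs_le.1 h3).1
    have h5 : 0 < ((Dkx k t r n : ℝ) - Dkx k t s n) / Fkt k t n := by linarith
    have h6 : 0 < (Dkx k t r n : ℝ) - Dkx k t s n := by
      by_contra h
      exact absurd h5 (not_lt.2 (div_nonpos_of_nonpos_of_nonneg (not_lt.1 h) hFp.le))
    have h7 : (Dkx k t s n : ℝ) < Dkx k t r n := by linarith
    exact_mod_cast h7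
end

section
/- Let k, t ≥ 2 be coprime integers with k ≥ 6(t² − 1)/π². Then for all 1 ≤ r < s ≤ t, D_k^×(r,t;n) > D_k^×(s,t;n) for all sufficiently large n. -/
/-!
Write `a n` for the number of partitions of `n` into parts not divisible by `k`, and
`F m = ∑_{j ≥ 1} a (n - j m)` for fixed `n`. When `k ∤ m`, `F m` is the total number of parts
equal to `m` in these partitions (`sum_count`), so if `k r' ≡ r [MOD t]` with `1 ≤ r' ≤ t` then
`Dkx k t r n = ∑ i, F (i t + r) - ∑ i, F (k (i t + r'))` (`Dkx_add`).

No circle method is needed. Since `k ≥ 2`, a part `1` may be added to a partition, so `a` is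
nondecreasing, `F` is antitone, and comparing `F m` with `S = F 1 = ∑_{N < n} a N` in blocks of
length `m` gives `S / m - a n ≤ F m ≤ S / m`. Hence `F m ~ S / m` for every fixed `m` as soon as
`S / a n → ∞`. That holds because `S` is at least the total number of distinct part sizes over
all partitions counted by `a n` (`sum_distinct_le`): only polynomially many of them have a bounded
number of distinct part sizes (`card_few`), whereas `a n` grows faster than every polynomial
(`pow_le_card`).

By monotonicity, `Dkx k t r n - Dkx k t s n` is at least
`∑_{i < I} (F (i t + r) - F (i t + s))` minus
`∑_{i < I} (F (k (i t + 1)) - F (k (i t + t))) + F (k (I t + 1))`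
for every `I ≤ n`, which is at least `c S - 2 I a n` with `c` the same expression with `F m`
replaced by `1 / m`. For large `I` the constant `c` is positive (`exists_pos_const`): the first sum
tends to a limit larger than `∑ 1 / (t (i + 1))² = π² / (6 t²)`, and the second is at most
`(t² - 1) / (k t²)` by telescoping, so the hypothesis on `k` is what this estimate needs.
-/

open scoped Real

/-! ### Counting parts of a given size -/

/-- The partitions of `n` into parts not divisible by `k`. -/
def reg (k n : ℕ) : Finset n.Partition :=
  Finset.univ.filter (fun p => ∀ i ∈ p.parts, ¬ k ∣ i)

/-- `regShift k n N` is the number of partitions of `n - N` into parts not divisible by `k`,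
and `0` if `N > n`. -/
def regShift (k n N : ℕ) : ℕ := if N ≤ n then (reg k (n - N)).card else 0

/-- `∑_{j ≥ 1} regShift k n (j * m)`, where for `m ≥ 1` the terms with `j > n` vanish. It is the
total multiplicity of the part `m` in the partitions of `reg k n` when `k ∤ m`, and is also used
for `k ∣ m`, where it has no such meaning. -/
def mult (k n m : ℕ) : ℕ := ∑ j ∈ Finset.range n, regShift k n ((j + 1) * m)

lemma mem_reg {k n : ℕ} {p : n.Partition} : p ∈ reg k n ↔ ∀ i ∈ p.parts, ¬ k ∣ i := by
  simp [reg]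

/-- Removing `j` copies of `m` is a bijection onto the partitions of `n - j * m`. -/
lemma card_le_count (k n m j : ℕ) (hm : 1 ≤ m) (hkm : ¬ k ∣ m) :
    ((reg k n).filter (fun p => j ≤ p.parts.count m)).card = regShift k n (j * m) := by
  unfold regShift
  split_ifs with h
  · symm
    refine Finset.card_bij
      (fun (q : (n - j * m).Partition) _ =>
        (⟨q.parts + Multiset.replicate j m, ?_, ?_⟩ : n.Partition)) ?_ ?_ ?_
    · intro i hi
      rcases Multiset.mem_add.1 hi with hi | hi
      · exact q.parts_pos hi
      · rw [Multiset.eq_of_mem_replicate hi]; exact hm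
    · rw [Multiset.sum_add, q.parts_sum, Multiset.sum_replicate, smul_eq_mul]; omega
    · intro q hq
      rw [mem_reg] at hq
      simp only [Finset.mem_filter, mem_reg]
      refine ⟨fun i hi => ?_, ?_⟩
      · rcases Multiset.mem_add.1 hi with hi | hi
        · exact hq i hi
        · rw [Multiset.eq_of_mem_replicate hi]; exact hkm
      · simp
    · intro q _ q' _ h
      have := congrArg Nat.Partition.parts h
      exact Nat.Partition.ext (add_right_cancel this)
    · intro p hp
      simp only [Finset.mem_filter, mem_reg] at hp
      have hle := Multiset.le_count_iff_replicate_le.1 hp.2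
      have hadd := tsub_add_cancel_of_le hle
      refine ⟨⟨p.parts - Multiset.replicate j m, ?_, ?_⟩, ?_, ?_⟩
      · intro i hi
        exact p.parts_pos (Multiset.mem_of_le tsub_le_self hi)
      · have := congrArg Multiset.sum hadd
        rw [Multiset.sum_add, p.parts_sum, Multiset.sum_replicate, smul_eq_mul] at this
        omega
      · rw [mem_reg]
        intro i hi
        exact hp.1 i (Multiset.mem_of_le tsub_le_self hi)
      · exact Nat.Partition.ext hadd
  · rw [Finset.card_eq_zero, Finset.filter_eq_empty_iff]
    intro p _ hj
    have hle := Multiset.le_count_iff_replicate_le.1 hj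
    have hadd := congrArg Multiset.sum (tsub_add_cancel_of_le hle)
    rw [Multiset.sum_add, p.parts_sum, Multiset.sum_replicate, smul_eq_mul] at hadd
    omega

/-- Adding `N - N'` parts equal to `1`, which `k ≥ 2` does not divide, is injective. -/
lemma regShift_anti {k : ℕ} (hk : 2 ≤ k) (n : ℕ) {N N' : ℕ} (h : N' ≤ N) :
    regShift k n N ≤ regShift k n N' := by
  have h1 : ¬ k ∣ 1 := by rw [Nat.dvd_one]; omega
  by_cases hN : N ≤ n
  · have := card_le_count k (n - N') 1 (N - N') le_rfl h1
    have h2 : regShift k n N = regShift k (n - N') ((N - N') * 1) := by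
      simp only [regShift]
      rw [if_pos hN, if_pos (by omega), mul_one, show n - N' - (N - N') = n - N by omega]
    rw [h2, ← this]
    simp only [regShift]
    rw [if_pos (by omega)]
    exact Finset.card_filter_le _ _
  · simp [regShift, hN]

lemma mult_anti {k : ℕ} (hk : 2 ≤ k) (n : ℕ) {m m' : ℕ} (h : m' ≤ m) :
    mult k n m ≤ mult k n m' :=
  Finset.sum_le_sum fun _ _ => regShift_anti hk n (Nat.mul_le_mul_left _ h)

lemma regShift_zero_of_lt {k n N : ℕ} (h : n < N) : regShift k n N = 0 := by
  simp [regShift, h]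

lemma mult_zero_of_lt {k n m : ℕ} (h : n < m) : mult k n m = 0 :=
  Finset.sum_eq_zero fun j _ => regShift_zero_of_lt (by nlinarith)

lemma count_le_self {n m : ℕ} (hm : 1 ≤ m) (p : n.Partition) : p.parts.count m ≤ n := by
  have hle := Multiset.le_count_iff_replicate_le.1 (le_refl (p.parts.count m))
  have hadd := congrArg Multiset.sum (tsub_add_cancel_of_le hle)
  rw [Multiset.sum_add, p.parts_sum, Multiset.sum_replicate, smul_eq_mul] at hadd
  have := Nat.le_mul_of_pos_right (p.parts.count m) hm
  omega

/-- The number of parts equal to `m` is obtained by counting, for each `j`, the partitions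
in which `m` occurs at least `j + 1` times. -/
lemma sum_count (k n m : ℕ) (hm : 1 ≤ m) (hkm : ¬ k ∣ m) :
    ∑ p ∈ reg k n, p.parts.count m = mult k n m := by
  unfold mult
  simp_rw [← card_le_count k n m _ hm hkm, Finset.card_filter]
  rw [Finset.sum_comm]
  refine Finset.sum_congr rfl fun p _ => ?_
  rw [← Finset.card_filter]
  have : (Finset.range n).filter (fun j => j + 1 ≤ p.parts.count m)
      = Finset.range (p.parts.count m) := by
    ext j
    have := count_le_self hm p
    simp only [Finset.mem_filter, Finset.mem_range]
    omega
  rw [this, Finset.card_range]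

/-! ### Parts in a residue class -/

lemma part_le {n : ℕ} (p : n.Partition) {i : ℕ} (hi : i ∈ p.parts) : i ≤ n := by
  have := Multiset.single_le_sum (fun x _ => Nat.zero_le x) i hi
  rwa [p.parts_sum] at this

lemma Dkx_eq_s4 (k t r n : ℕ) :
    Dkx k t r n = ∑ m ∈ (Finset.Icc 1 n).filter (fun m => m % t = r % t ∧ ¬ k ∣ m),
      mult k n m := by
  have h1 : ∀ m ∈ (Finset.Icc 1 n).filter (fun m => m % t = r % t ∧ ¬ k ∣ m),
      mult k n m = ∑ p ∈ reg k n, p.parts.count m := by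
    intro m hm
    simp only [Finset.mem_filter, Finset.mem_Icc] at hm
    rw [sum_count k n m hm.1.1 hm.2.2]
  rw [Finset.sum_congr rfl h1, Finset.sum_comm]
  unfold Dkx
  rw [← Finset.sum_filter]
  refine Finset.sum_congr rfl fun p hp => ?_
  have hp' : ∀ i ∈ p.parts, ¬ k ∣ i := mem_reg.1 hp
  rw [← Multiset.toFinset_sum_count_eq]
  have hs : (p.parts.filter (fun i => i % t = r % t)).toFinset ⊆
      (Finset.Icc 1 n).filter (fun m => m % t = r % t ∧ ¬ k ∣ m) := by
    intro i hi
    simp only [Multiset.mem_toFinset, Multiset.mem_filter] at hi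
    simp only [Finset.mem_filter, Finset.mem_Icc]
    exact ⟨⟨p.parts_pos hi.1, part_le p hi.1⟩, hi.2, hp' i hi.1⟩
  rw [Finset.sum_subset hs]
  · refine Finset.sum_congr rfl fun m hm => ?_
    simp only [Finset.mem_filter] at hm
    rw [Multiset.count_filter, if_pos hm.2.1]
  · intro x _ hx
    simpa using hx

lemma sum_residue (t r n : ℕ) (hr : 1 ≤ r) (hrt : r ≤ t) (g : ℕ → ℕ)
    (hg : ∀ m, n < m → g m = 0) :
    ∑ m ∈ (Finset.Icc 1 n).filter (fun m => m % t = r % t), g m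
      = ∑ i ∈ Finset.range n, g (i * t + r) := by
  have hinj : Set.InjOn (fun i => i * t + r) (Finset.range n : Set ℕ) := by
    intro a _ b _ h
    simp only [add_left_inj] at h
    exact Nat.eq_of_mul_eq_mul_right (by omega) h
  rw [← Finset.sum_image (f := g) hinj]
  refine Finset.sum_subset ?_ ?_
  · intro m hm
    simp only [Finset.mem_filter, Finset.mem_Icc] at hm
    simp only [Finset.mem_image, Finset.mem_range]
    have hrm : r ≤ m := by
      by_contra hlt
      push Not at hlt
      rw [Nat.mod_eq_of_lt (show m < t by omega)] at hm
      rcases hrt.lt_or_eq with h | h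
      · rw [Nat.mod_eq_of_lt h] at hm; omega
      · subst h; simp at hm; omega
    obtain ⟨c, hc⟩ := (Nat.modEq_iff_dvd' hrm).1 (show r ≡ m [MOD t] from hm.2.symm)
    have hc' : m = c * t + r := by rw [mul_comm c t]; omega
    refine ⟨c, ?_, hc'.symm⟩
    nlinarith
  · intro m hm hm'
    apply hg
    simp only [Finset.mem_image, Finset.mem_range] at hm
    obtain ⟨i, _, rfl⟩ := hm
    by_contra hlt
    apply hm'
    simp only [Finset.mem_filter, Finset.mem_Icc]
    refine ⟨by omega, by simp⟩

/-- `r'` represents `r / k` in `ℤ / t`, normalised to `1 ≤ r' ≤ t` rather than `0 ≤ r' < t`. -/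
lemma exists_inv (k t r : ℕ) (ht : 2 ≤ t) (hcop : Nat.Coprime k t) :
    ∃ r' : ℕ, 1 ≤ r' ∧ r' ≤ t ∧ ∀ m, (k * m) % t = r % t ↔ m % t = r' % t := by
  obtain ⟨u, hu⟩ := Nat.exists_mul_mod_eq_one_of_coprime hcop (by omega)
  have h1 : k * u ≡ 1 [MOD t] := by
    rw [Nat.ModEq, hu.2, Nat.mod_eq_of_lt (by omega)]
  have key : ∃ r', 1 ≤ r' ∧ r' ≤ t ∧ r' ≡ u * r [MOD t] := by
    rcases Nat.eq_zero_or_pos ((u * r) % t) with h | h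
    · exact ⟨t, by omega, le_rfl, by simp [Nat.ModEq, h]⟩
    · exact ⟨(u * r) % t, h, (Nat.mod_lt _ (by omega)).le, Nat.mod_modEq _ _⟩
  obtain ⟨r', h2, h3, h4⟩ := key
  have h5 : k * r' ≡ r [MOD t] := by
    calc k * r' ≡ k * (u * r) [MOD t] := h4.mul_left k
      _ = (k * u) * r := by ring
      _ ≡ 1 * r [MOD t] := h1.mul_right r
      _ = r := one_mul r
  refine ⟨r', h2, h3, fun m => ⟨fun h => ?_, fun h => ?_⟩⟩
  · have : k * m ≡ k * r' [MOD t] := Nat.ModEq.trans h h5.symm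
    exact Nat.ModEq.cancel_left_of_coprime (by rw [Nat.gcd_comm]; exact hcop) this
  · exact Nat.ModEq.trans (Nat.ModEq.mul_left k h) h5

/-- The multiples `k * m'` of `k` in the class of `r` are those with `m'` in the class of `r'`;
`mult` summed over the whole class counts them in addition to the genuine parts. -/
lemma Dkx_add (k t r r' n : ℕ) (hk : 2 ≤ k) (hr : 1 ≤ r) (hrt : r ≤ t) (hr' : 1 ≤ r')
    (hrt' : r' ≤ t) (h : ∀ m, (k * m) % t = r % t ↔ m % t = r' % t) :
    Dkx k t r n + ∑ i ∈ Finset.range n, mult k n (k * (i * t + r'))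
      = ∑ i ∈ Finset.range n, mult k n (i * t + r) := by
  rw [← sum_residue t r n hr hrt _ (fun m hm => mult_zero_of_lt hm),
    ← sum_residue t r' n hr' hrt' (fun m => mult k n (k * m))
      (fun m hm => mult_zero_of_lt (by nlinarith)), Dkx_eq_s4,
    ← Finset.sum_filter_add_sum_filter_not
      ((Finset.Icc 1 n).filter (fun m => m % t = r % t)) (fun m => ¬ k ∣ m),
    Finset.filter_filter, Finset.filter_filter]
  congr 1
  have hinj : Set.InjOn (fun i => k * i)
      ((Finset.Icc 1 n).filter (fun m => m % t = r' % t) : Set ℕ) := by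
    intro a _ b _ h
    exact Nat.eq_of_mul_eq_mul_left (by omega) h
  rw [← Finset.sum_image (f := mult k n) hinj]
  symm
  refine Finset.sum_subset ?_ ?_
  · intro m hm
    simp only [Finset.mem_filter, Finset.mem_Icc, not_not] at hm
    obtain ⟨h1, h2, c, rfl⟩ := hm
    simp only [Finset.mem_image, Finset.mem_filter, Finset.mem_Icc]
    refine ⟨c, ⟨⟨Nat.pos_of_mul_pos_left h1.1, by nlinarith⟩, (h c).1 h2⟩, rfl⟩
  · intro m hm hm'
    apply mult_zero_of_lt
    simp only [Finset.mem_image, Finset.mem_filter, Finset.mem_Icc] at hm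
    obtain ⟨c, ⟨h1, h2⟩, rfl⟩ := hm
    by_contra hlt
    apply hm'
    simp only [Finset.mem_filter, Finset.mem_Icc, not_not]
    exact ⟨⟨by nlinarith, by omega⟩, (h c).2 h2, dvd_mul_right _ _⟩

/-! ### Comparison of `mult k n m` with `mult k n 1 / m` -/

lemma tail_zero (k n m J : ℕ) (hm : 1 ≤ m) (hJ : n ≤ J) :
    ∑ j ∈ Finset.range J, regShift k n ((j + 1) * m) = mult k n m := by
  unfold mult
  symm
  refine Finset.sum_subset (Finset.range_mono hJ) ?_
  intro j _ hj
  simp only [Finset.mem_range, not_lt] at hj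
  exact regShift_zero_of_lt (by nlinarith)

lemma sum_range_mul (g : ℕ → ℕ) (m n : ℕ) :
    ∑ x ∈ Finset.range (n * m), g x
      = ∑ j ∈ Finset.range n, ∑ i ∈ Finset.range m, g (j * m + i) := by
  induction n with
  | zero => simp
  | succ n ih => rw [Nat.succ_mul, Finset.sum_range_add, ih, Finset.sum_range_succ]

lemma mul_mult_le {k : ℕ} (hk : 2 ≤ k) (n m : ℕ) (hm : 1 ≤ m) :
    m * mult k n m ≤ mult k n 1 := by
  rw [← tail_zero k n 1 (n * m) le_rfl (by nlinarith), sum_range_mul, mult, Finset.mul_sum]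
  refine Finset.sum_le_sum fun j _ => ?_
  -- the block `j m + 1, …, j m + m` lies to the left of `(j + 1) m`
  have : ∀ i ∈ Finset.range m,
      regShift k n ((j + 1) * m) ≤ regShift k n ((j * m + i + 1) * 1) := by
    intro i hi
    rw [Finset.mem_range] at hi
    exact regShift_anti hk n (by nlinarith)
  simpa using Finset.sum_le_sum this

lemma le_mul_mult {k : ℕ} (hk : 2 ≤ k) (n m : ℕ) (hm : 1 ≤ m) :
    mult k n 1 ≤ m * mult k n m + m * (reg k n).card := by
  rw [← tail_zero k n 1 (n * m) le_rfl (by nlinarith), sum_range_mul]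
  have h1 : ∀ j ∈ Finset.range n, ∑ i ∈ Finset.range m, regShift k n ((j * m + i + 1) * 1)
      ≤ m * regShift k n (j * m) := by
    intro j _
    have : ∀ i ∈ Finset.range m,
        regShift k n ((j * m + i + 1) * 1) ≤ regShift k n (j * m) := by
      intro i hi
      exact regShift_anti hk n (by omega)
    simpa using Finset.sum_le_sum this
  refine (Finset.sum_le_sum h1).trans ?_
  rw [← Finset.mul_sum, ← Nat.mul_add]
  refine Nat.mul_le_mul_left _ ?_
  calc ∑ j ∈ Finset.range n, regShift k n (j * m)
      ≤ ∑ j ∈ Finset.range (n + 1), regShift k n (j * m) :=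
        Finset.sum_le_sum_of_subset (Finset.range_mono (Nat.le_succ n))
    _ = mult k n m + (reg k n).card := by
        rw [Finset.sum_range_succ']
        rw [show regShift k n (0 * m) = (reg k n).card by rw [zero_mul]; simp [regShift], mult]

/-! ### The average number of parts equal to `1` tends to infinity -/

/-- The partitions containing a part `d` with `k ∤ d` are counted by `a (n - d)`, a term of
`mult k n 1 = ∑_{d ≥ 1} a (n - d)`. -/
lemma sum_distinct_le {k : ℕ} (n : ℕ) :
    ∑ p ∈ reg k n, p.parts.toFinset.card ≤ mult k n 1 := by
  have h1 : ∀ p ∈ reg k n, p.parts.toFinset.card =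
      ∑ j ∈ Finset.range n, if j + 1 ∈ p.parts then 1 else 0 := by
    intro p _
    rw [← Finset.card_filter]
    symm
    refine Finset.card_bij (fun j _ => j + 1) ?_ ?_ ?_
    · intro j hj; simpa using (Finset.mem_filter.1 hj).2
    · intro a _ b _ h; simpa using h
    · intro b hb
      rw [Multiset.mem_toFinset] at hb
      have := p.parts_pos hb
      have := part_le p hb
      refine ⟨b - 1, ?_, by omega⟩
      rw [Finset.mem_filter, Finset.mem_range, Nat.sub_add_cancel (by omega)]
      exact ⟨by omega, hb⟩
  rw [Finset.sum_congr rfl h1, Finset.sum_comm]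
  refine Finset.sum_le_sum fun j _ => ?_
  rw [← Finset.card_filter]
  by_cases hkj : k ∣ j + 1
  · rw [Finset.filter_eq_empty_iff.2]
    · simp
    · intro p hp hj
      exact mem_reg.1 hp _ hj hkj
  · have := card_le_count k n (j + 1) 1 (by omega) hkj
    simp only [Multiset.one_le_count_iff_mem] at this
    rw [this, mul_one, one_mul]

/-- A partition is determined by the set of pairs (part, multiplicity), a subset of
`{0, …, n}²` with at most `M` elements. -/
lemma card_few (k n M : ℕ) :
    ((reg k n).filter (fun p => p.parts.toFinset.card ≤ M)).card
      ≤ (M + 1) * (n + 1) ^ (2 * M) := by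
  set X := Finset.range (n + 1) ×ˢ Finset.range (n + 1) with hX
  set T := (Finset.range (M + 1)).biUnion (fun i => X.powersetCard i) with hT
  have hTc : T.card ≤ (M + 1) * (n + 1) ^ (2 * M) := by
    refine Finset.card_biUnion_le.trans ?_
    have : ∀ i ∈ Finset.range (M + 1), (X.powersetCard i).card ≤ (n + 1) ^ (2 * M) := by
      intro i hi
      rw [Finset.mem_range] at hi
      rw [Finset.card_powersetCard]
      refine (Nat.choose_le_pow _ _).trans ?_
      rw [hX, Finset.card_product, Finset.card_range, ← pow_two, ← pow_mul]
      exact Nat.pow_le_pow_right (by omega) (by omega)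
    simpa using Finset.sum_le_sum this
  refine le_trans ?_ hTc
  refine Finset.card_le_card_of_injOn
    (fun p => p.parts.toFinset.image (fun d => (d, p.parts.count d))) ?_ ?_
  · intro p hp
    simp only [Finset.coe_filter, Set.mem_ofPred_eq] at hp
    simp only [hT, Finset.coe_biUnion, Set.mem_iUnion, Finset.mem_coe, Finset.mem_powersetCard,
      Finset.mem_range]
    refine ⟨_, ?_, ?_, rfl⟩
    · exact Nat.lt_succ_of_le (Finset.card_image_le.trans hp.2)
    · intro x hx
      simp only [Finset.mem_image, Multiset.mem_toFinset] at hx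
      obtain ⟨d, hd, rfl⟩ := hx
      simp only [hX, Finset.mem_product, Finset.mem_range]
      exact ⟨Nat.lt_succ_of_le (part_le p hd),
        Nat.lt_succ_of_le (count_le_self (p.parts_pos hd) p)⟩
  · intro p _ q _ h
    have aux : ∀ p q : n.Partition,
        p.parts.toFinset.image (fun d => (d, p.parts.count d)) =
        q.parts.toFinset.image (fun d => (d, q.parts.count d)) →
        ∀ d ∈ p.parts, p.parts.count d = q.parts.count d := by
      intro p q h d hd
      have : (d, p.parts.count d) ∈ q.parts.toFinset.image (fun d => (d, q.parts.count d)) := by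
        rw [← h]
        exact Finset.mem_image_of_mem _ (Multiset.mem_toFinset.2 hd)
      simp only [Finset.mem_image, Prod.mk.injEq] at this
      obtain ⟨e, _, rfl, h2⟩ := this
      exact h2.symm
    apply Nat.Partition.ext
    ext d
    by_cases hd : d ∈ p.parts
    · exact aux p q h d hd
    by_cases hd' : d ∈ q.parts
    · exact (aux q p h.symm d hd').symm
    rw [Multiset.count_eq_zero_of_notMem hd, Multiset.count_eq_zero_of_notMem hd']

/-- The parts `1 + k (i + 1)`, `i < L`, are not divisible by `k`; choose their multiplicities freely
below `h` and fill up with parts `1`. -/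
lemma pow_le_card {k : ℕ} (hk : 2 ≤ k) (n L h : ℕ)
    (hn : h * ∑ i : Fin L, (1 + k * (i + 1)) ≤ n) :
    h ^ L ≤ (reg k n).card := by
  let W : (Fin L → Fin h) → Multiset ℕ := fun c =>
    ∑ i : Fin L, Multiset.replicate (c i : ℕ) (1 + k * ((i : ℕ) + 1))
  have hmem : ∀ c, ∀ x ∈ W c, ∃ i : Fin L, x = 1 + k * ((i : ℕ) + 1) := by
    intro c x hx
    obtain ⟨i, _, hi⟩ := Multiset.mem_sum.1 hx
    exact ⟨i, Multiset.eq_of_mem_replicate hi⟩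
  have hsum : ∀ c, (W c).sum ≤ n := by
    intro c
    refine le_trans ?_ hn
    simp only [W, Multiset.sum_sum, Multiset.sum_replicate, smul_eq_mul, Finset.mul_sum]
    exact Finset.sum_le_sum fun i _ => Nat.mul_le_mul_right _ (c i).2.le
  have hcount : ∀ c (j : Fin L), (W c).count (1 + k * ((j : ℕ) + 1)) = c j := by
    intro c j
    simp only [W, Multiset.count_sum', Multiset.count_replicate]
    rw [Finset.sum_eq_single j]
    · simp
    · intro b _ hb
      rw [if_neg]
      intro he
      apply hb
      have h3 : k * ((b : ℕ) + 1) = k * ((j : ℕ) + 1) := by omega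
      have := Nat.eq_of_mul_eq_mul_left (by omega) h3
      ext; omega
    · simp
  have hkd : ∀ x : ℕ, ¬ k ∣ 1 + k * x := by
    intro x hx
    have := (Nat.dvd_add_left (dvd_mul_right k x)).1 hx
    rw [Nat.dvd_one] at this
    omega
  have hcard : (Finset.univ : Finset (Fin L → Fin h)).card = h ^ L := by simp
  rw [← hcard]
  refine Finset.card_le_card_of_injOn (fun c =>
    (⟨W c + Multiset.replicate (n - (W c).sum) 1, ?_, ?_⟩ : n.Partition)) ?_ ?_
  · intro x hx
    rcases Multiset.mem_add.1 hx with hx | hx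
    · obtain ⟨i, rfl⟩ := hmem c x hx; omega
    · rw [Multiset.eq_of_mem_replicate hx]; exact one_pos
  · have := hsum c
    simp only [Multiset.sum_add, Multiset.sum_replicate, smul_eq_mul, mul_one]; omega
  · intro c _
    rw [Finset.mem_coe, mem_reg]
    intro x hx
    rcases Multiset.mem_add.1 hx with hx | hx
    · obtain ⟨i, rfl⟩ := hmem c x hx; exact hkd _
    · rw [Multiset.eq_of_mem_replicate hx]; exact hkd 0
  · intro c _ c' _ he
    have he' := congrArg Nat.Partition.parts he
    funext j
    have h4 := congrArg (Multiset.count (1 + k * ((j : ℕ) + 1))) he'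
    have h5 : 1 ≠ 1 + k * ((j : ℕ) + 1) := by
      have : 0 < k * ((j : ℕ) + 1) := by positivity
      omega
    simp only [Multiset.count_add, hcount, Multiset.count_replicate, if_neg h5, add_zero] at h4
    exact Fin.ext h4

/-- The bound of `card_few` is of degree `2 M` in `n`, and `pow_le_card` with `L = 2 M + 1`
exceeds it. -/
lemma few_le_card {k : ℕ} (hk : 2 ≤ k) (M : ℕ) : ∃ N : ℕ, ∀ n ≥ N,
    2 * ((M + 1) * (n + 1) ^ (2 * M)) ≤ (reg k n).card := by
  set Q := ∑ i : Fin (2 * M + 1), (1 + k * ((i : ℕ) + 1)) with hQ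
  have hQ1 : 1 ≤ Q := by
    have : ∀ i ∈ (Finset.univ : Finset (Fin (2 * M + 1))), 1 ≤ 1 + k * ((i : ℕ) + 1) :=
      fun i _ => by omega
    have := Finset.sum_le_sum this
    simp only [Finset.sum_const, Finset.card_univ, Fintype.card_fin, smul_eq_mul] at this
    omega
  set B := 2 * (M + 1) * (2 * Q) ^ (2 * M) with hB
  refine ⟨Q * (B + 1), fun n hn => ?_⟩
  set h := n / Q with hh
  have hBh : B + 1 ≤ h := by
    rw [hh, Nat.le_div_iff_mul_le (by omega), mul_comm]; exact hn
  have h1 : n + 1 ≤ 2 * Q * h := by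
    have := Nat.lt_mul_div_succ n (show 0 < Q by omega)
    rw [← hh] at this
    nlinarith
  refine le_trans ?_ (pow_le_card hk n (2 * M + 1) h (Nat.div_mul_le_self n Q))
  calc 2 * ((M + 1) * (n + 1) ^ (2 * M)) ≤ 2 * ((M + 1) * (2 * Q * h) ^ (2 * M)) := by gcongr
    _ = B * h ^ (2 * M) := by rw [hB, mul_pow]; ring
    _ ≤ h * h ^ (2 * M) := by gcongr; omega
    _ = h ^ (2 * M + 1) := by ring

/-- For large `n`, at least half of the partitions in `reg k n` have more than `2 M` distinct
part sizes. -/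
lemma card_mul_le_mult {k : ℕ} (hk : 2 ≤ k) (M : ℕ) : ∃ N : ℕ, ∀ n ≥ N,
    0 < (reg k n).card ∧ M * (reg k n).card ≤ mult k n 1 := by
  obtain ⟨N, hN⟩ := few_le_card hk (2 * M)
  refine ⟨N, fun n hn => ?_⟩
  have h1 := hN n hn
  have h2 := card_few k n (2 * M)
  refine ⟨lt_of_lt_of_le (by positivity) h1, le_trans ?_ (sum_distinct_le n)⟩
  have h3 := Finset.card_filter_add_card_filter_not (s := reg k n)
    (fun p => p.parts.toFinset.card ≤ 2 * M)
  have h4 : ((reg k n).filter (fun p => ¬ p.parts.toFinset.card ≤ 2 * M)).card * (2 * M)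
      ≤ ∑ p ∈ reg k n, p.parts.toFinset.card := by
    refine le_trans ?_ (Finset.sum_le_sum_of_subset (Finset.filter_subset
      (fun p => ¬ p.parts.toFinset.card ≤ 2 * M) _))
    rw [← smul_eq_mul]
    refine Finset.card_nsmul_le_sum _ _ _ fun p hp => ?_
    have := (Finset.mem_filter.1 hp).2
    omega
  refine le_trans ?_ h4
  have : (reg k n).card ≤
    2 * ((reg k n).filter (fun p => ¬ p.parts.toFinset.card ≤ 2 * M)).card := by omega
  nlinarith

/-! ### Positivity of the leading constant -/

/-- The constant `c` in the lower bound `c S - 2 I a n` for the difference of the two counts. -/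
lemma exists_pos_const (k t r s : ℕ) (hk : 2 ≤ k) (ht : 2 ≤ t)
    (hkt : (k : ℝ) ≥ 6 * ((t : ℝ)^2 - 1) / π^2) (hr : 1 ≤ r) (hrs : r < s) (hst : s ≤ t) :
    ∃ I : ℕ, 0 < ∑ i ∈ Finset.range I, (1 / ((i * t + r : ℕ) : ℝ) - 1 / ((i * t + s : ℕ) : ℝ))
      - (∑ i ∈ Finset.range I, (1 / ((k * (i * t + 1) : ℕ) : ℝ) - 1 / ((k * (i * t + t) : ℕ) : ℝ))
        + 1 / ((k * (I * t + 1) : ℕ) : ℝ)) := by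
  have hk0 : (0 : ℝ) < k := by exact_mod_cast (by omega : 0 < k)
  have ht0 : (0 : ℝ) < t := by exact_mod_cast (by omega : 0 < t)
  have ht2 : (2 : ℝ) ≤ t := by exact_mod_cast ht
  have hr1 : (1 : ℝ) ≤ r := by exact_mod_cast hr
  have hrs1 : (r : ℝ) + 1 ≤ s := by exact_mod_cast hrs
  have hst1 : (s : ℝ) ≤ t := by exact_mod_cast hst
  -- `s - r ≥ 1` and `r, s ≤ t` compare the first sum termwise with `∑ 1 / (t (i + 1))²`
  have hA : ∀ i : ℕ, 1 / (t : ℝ)^2 * (1 / ((i : ℝ) + 1)^2) ≤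
      1 / ((i * t + r : ℕ) : ℝ) - 1 / ((i * t + s : ℕ) : ℝ) := by
    intro i
    push_cast
    have hi : (0 : ℝ) ≤ i * t := by positivity
    have hir : (0 : ℝ) < i * t + r := by linarith
    have his : (0 : ℝ) < i * t + s := by linarith
    rw [div_sub_div _ _ hir.ne' his.ne', div_mul_div_comm,
      div_le_div_iff₀ (by positivity) (mul_pos hir his)]
    have h1 : ((i : ℝ) * t + r) * (i * t + s) ≤ (i * t + t) * (i * t + t) := by
      gcongr; linarith
    have h2 : ((i : ℝ) * t + t) * (i * t + t) * 1
        ≤ ((i : ℝ) * t + t) * (i * t + t) * (s - r) := by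
      gcongr; linarith
    nlinarith
  -- the gain at `i = 0`, positive as `r < s ≤ t`, which makes the final inequality strict
  set δ : ℝ := (1 / (r : ℝ) - 1 / s) - 1 / (t : ℝ)^2 with hδ
  have hδ0 : 0 < δ := by
    have hr0 : (0 : ℝ) < r := by linarith
    have hs0 : (0 : ℝ) < s := by linarith
    have hrt : (r : ℝ) * s < (t : ℝ)^2 := by nlinarith
    have : 1 / (t : ℝ)^2 < 1 / ((r : ℝ) * s) :=
      one_div_lt_one_div_of_lt (by positivity) hrt
    have h2 : 1 / ((r : ℝ) * s) ≤ 1 / (r : ℝ) - 1 / s := by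
      rw [div_sub_div _ _ hr0.ne' hs0.ne']
      gcongr; linarith
    rw [hδ]; linarith
  have hAI : ∀ I : ℕ, 1 ≤ I →
      1 / (t : ℝ)^2 * ∑ i ∈ Finset.range I, 1 / ((i : ℝ) + 1)^2 + δ ≤
      ∑ i ∈ Finset.range I, (1 / ((i * t + r : ℕ) : ℝ) - 1 / ((i * t + s : ℕ) : ℝ)) := by
    intro I hI
    obtain ⟨J, rfl⟩ := Nat.exists_eq_add_of_le' hI
    rw [Finset.mul_sum, Finset.sum_range_succ', Finset.sum_range_succ']
    have := Finset.sum_le_sum (fun i (_ : i ∈ Finset.range J) => hA (i + 1))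
    simp only [hδ]
    norm_num at this ⊢
    linarith
  -- the terms with `i ≥ 1` are at most `(t - 1) / t² * (1 / i - 1 / (i + 1))`
  have hB : ∀ I : ℕ, ∑ i ∈ Finset.range (I + 1),
      (1 / ((i * t + 1 : ℕ) : ℝ) - 1 / ((i * t + t : ℕ) : ℝ))
      ≤ ((t : ℝ)^2 - 1) / t^2 - ((t : ℝ) - 1) / t^2 * (1 / ((I : ℝ) + 1)) := by
    intro I
    induction I with
    | zero =>
      simp only [zero_add, Finset.sum_range_one]
      push_cast
      apply le_of_eq
      field_simp
      ring
    | succ I ih =>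
      rw [Finset.sum_range_succ]
      have : 1 / (((I + 1) * t + 1 : ℕ) : ℝ) - 1 / (((I + 1) * t + t : ℕ) : ℝ) ≤
          ((t : ℝ) - 1) / t^2 * (1 / ((I : ℝ) + 1) - 1 / ((I : ℝ) + 1 + 1)) := by
        push_cast
        have e1 : 1 / ((I : ℝ) + 1) - 1 / ((I : ℝ) + 1 + 1)
            = 1 / (((I : ℝ) + 1) * ((I : ℝ) + 1 + 1)) := by field_simp; ring
        have e2 : 1 / (((I : ℝ) + 1) * t + 1) - 1 / (((I : ℝ) + 1) * t + t)
            = ((t : ℝ) - 1) / ((((I : ℝ) + 1) * t + 1) * (((I : ℝ) + 1) * t + t)) := by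
          rw [div_sub_div _ _ (by positivity) (by positivity)]; ring
        rw [e1, e2, div_mul_div_comm, mul_one]
        have : (0 : ℝ) ≤ I := by positivity
        apply div_le_div_of_nonneg_left (by linarith) (by positivity)
        have : (t : ℝ) ^ 2 * ((I + 1) * (I + 1 + 1)) = ((I + 1) * t) * ((I + 1) * t + t) := by ring
        rw [this]
        gcongr
        linarith
      push_cast at this ih ⊢
      linarith
  have hlim1 : Filter.Tendsto (fun I : ℕ => ∑ i ∈ Finset.range I, 1 / ((i : ℝ) + 1)^2)
      Filter.atTop (nhds (π^2 / 6)) := by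
    have h := (hasSum_nat_add_iff' 1).2 hasSum_zeta_two
    have h' := h.tendsto_sum_nat
    simpa using h'
  have hlim2 : Filter.Tendsto (fun I : ℕ => 1 / ((k * (I * t + 1) : ℕ) : ℝ))
      Filter.atTop (nhds 0) := by
    refine squeeze_zero (fun I => by positivity) (fun I => ?_)
      (tendsto_one_div_add_atTop_nhds_zero_nat (𝕜 := ℝ))
    push_cast
    apply one_div_le_one_div_of_le (by positivity)
    have : (1 : ℝ) ≤ k := by exact_mod_cast (by omega : 1 ≤ k)
    have h0 : (0 : ℝ) ≤ I := by positivity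
    have h1 : (I : ℝ) + 1 ≤ I * t + 1 := by nlinarith
    nlinarith
  have hlim3 : Filter.Tendsto (fun I : ℕ =>
      1 / (t : ℝ)^2 * ∑ i ∈ Finset.range I, 1 / ((i : ℝ) + 1)^2
        - 1 / ((k * (I * t + 1) : ℕ) : ℝ)) Filter.atTop
      (nhds (1 / (t : ℝ)^2 * (π^2 / 6) - 0)) := (hlim1.const_mul _).sub hlim2
  have hev := hlim3.eventually (lt_mem_nhds (show 1 / (t : ℝ)^2 * (π^2 / 6) - 0 - δ
    < 1 / (t : ℝ)^2 * (π^2 / 6) - 0 by linarith))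
  obtain ⟨I, hI, hI1⟩ := (hev.and (Filter.eventually_ge_atTop 1)).exists
  refine ⟨I, ?_⟩
  have hBk : ∑ i ∈ Finset.range I,
      (1 / ((k * (i * t + 1) : ℕ) : ℝ) - 1 / ((k * (i * t + t) : ℕ) : ℝ)) ≤
      1 / k * (((t : ℝ)^2 - 1) / t^2) := by
    obtain ⟨J, rfl⟩ := Nat.exists_eq_add_of_le' hI1
    have h1 : ∑ i ∈ Finset.range (J + 1),
      (1 / ((k * (i * t + 1) : ℕ) : ℝ) - 1 / ((k * (i * t + t) : ℕ) : ℝ)) =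
      1 / k * ∑ i ∈ Finset.range (J + 1),
      (1 / ((i * t + 1 : ℕ) : ℝ) - 1 / ((i * t + t : ℕ) : ℝ)) := by
      rw [Finset.mul_sum]
      refine Finset.sum_congr rfl fun i _ => ?_
      rw [Nat.cast_mul, Nat.cast_mul, mul_sub, one_div_mul_one_div, one_div_mul_one_div]
    rw [h1]
    have h2 : 0 ≤ ((t : ℝ) - 1) / t^2 * (1 / ((J : ℝ) + 1)) :=
      mul_nonneg (div_nonneg (by linarith) (by positivity)) (by positivity)
    gcongr
    linarith [hB J]
  have hfin : 1 / k * (((t : ℝ)^2 - 1) / t^2) ≤ 1 / (t : ℝ)^2 * (π^2 / 6) := by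
    have hpi : 0 < π ^ 2 := by positivity
    have h1 : 6 * ((t : ℝ)^2 - 1) ≤ k * π^2 := by
      rwa [ge_iff_le, div_le_iff₀ hpi] at hkt
    rw [div_mul_div_comm, div_mul_div_comm, div_le_div_iff₀ (by positivity) (by positivity)]
    have : 0 ≤ (t : ℝ) ^ 2 := by positivity
    nlinarith
  have := hAI I hI1
  linarith

/-! ### The comparison of two residue classes -/

theorem stmt4 (k t : ℕ) (hk : 2 ≤ k) (ht : 2 ≤ t) (hcop : Nat.Coprime k t)
    (hkt : (k : ℝ) ≥ 6 * ((t : ℝ)^2 - 1) / π^2) :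
    ∀ r s : ℕ, 1 ≤ r → r < s → s ≤ t →
      ∃ N : ℕ, ∀ n ≥ N, Dkx k t r n > Dkx k t s n := by
  intro r s hr hrs hst
  obtain ⟨I, hc⟩ := exists_pos_const k t r s hk ht hkt hr hrs hst
  set c := ∑ i ∈ Finset.range I, (1 / ((i * t + r : ℕ) : ℝ) - 1 / ((i * t + s : ℕ) : ℝ))
      - (∑ i ∈ Finset.range I, (1 / ((k * (i * t + 1) : ℕ) : ℝ) - 1 / ((k * (i * t + t) : ℕ) : ℝ))
        + 1 / ((k * (I * t + 1) : ℕ) : ℝ)) with hcdef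
  obtain ⟨r', hr1, hrt', hrinv⟩ := exists_inv k t r ht hcop
  obtain ⟨s', hs1, hst', hsinv⟩ := exists_inv k t s ht hcop
  obtain ⟨M, hM⟩ := exists_nat_gt (2 * I / c)
  obtain ⟨N, hN⟩ := card_mul_le_mult hk M
  refine ⟨max N I, fun n hn => ?_⟩
  obtain ⟨ha, hMa⟩ := hN n ((le_max_left _ _).trans hn)
  have hIn : I ≤ n := (le_max_right _ _).trans hn
  have hDr := Dkx_add k t r r' n hk hr (by omega) hr1 hrt' hrinv
  have hDs := Dkx_add k t s s' n hk (by omega) hst hs1 hst' hsinv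
  set S : ℝ := (mult k n 1 : ℝ) with hS
  set a : ℝ := ((reg k n).card : ℝ) with haa
  have ha0 : 0 < a := by rw [haa]; exact_mod_cast ha
  let F : ℕ → ℝ := fun m => (mult k n m : ℝ)
  have hanti : ∀ {m m' : ℕ}, m' ≤ m → F m ≤ F m' := fun h => by
    simp only [F]; exact_mod_cast mult_anti hk n h
  have hup : ∀ m : ℕ, 1 ≤ m → F m ≤ S * (1 / (m : ℝ)) := by
    intro m hm
    have h1 : (m : ℝ) * F m ≤ S := by
      simp only [F, hS]; exact_mod_cast mul_mult_le hk n m hm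
    have : (0 : ℝ) < m := by exact_mod_cast hm
    rw [mul_one_div, le_div_iff₀ this]; linarith
  have hlo : ∀ m : ℕ, 1 ≤ m → S * (1 / (m : ℝ)) - a ≤ F m := by
    intro m hm
    have h1 : S ≤ (m : ℝ) * F m + m * a := by
      simp only [F, hS, haa]; exact_mod_cast le_mul_mult hk n m hm
    have : (0 : ℝ) < m := by exact_mod_cast hm
    rw [mul_one_div, sub_le_iff_le_add, div_le_iff₀ this]; linarith
  have hDr' : (Dkx k t r n : ℝ) + ∑ i ∈ Finset.range n, F (k * (i * t + r'))
      = ∑ i ∈ Finset.range n, F (i * t + r) := by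
    simp only [F]; exact_mod_cast hDr
  have hDs' : (Dkx k t s n : ℝ) + ∑ i ∈ Finset.range n, F (k * (i * t + s'))
      = ∑ i ∈ Finset.range n, F (i * t + s) := by
    simp only [F]; exact_mod_cast hDs
  have h1 : ∑ i ∈ Finset.range I, (F (i * t + r) - F (i * t + s)) ≤
      ∑ i ∈ Finset.range n, (F (i * t + r) - F (i * t + s)) :=
    Finset.sum_le_sum_of_subset_of_nonneg (Finset.range_mono hIn)
      fun i _ _ => sub_nonneg.2 (hanti (by omega))
  -- `r'` and `s'` come in no particular order: only `1 ≤ r'` and `s' ≤ t` are used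
  have h2 : ∑ i ∈ Finset.range n, (F (k * (i * t + r')) - F (k * (i * t + s'))) ≤
      ∑ i ∈ Finset.range n, (F (k * (i * t + 1)) - F (k * (i * t + t))) :=
    Finset.sum_le_sum fun i _ => sub_le_sub (hanti (by gcongr)) (hanti (by gcongr))
  -- beyond `I` the differences telescope, since `k (i t + t) ≤ k ((i + 1) t + 1)`
  have h3 : ∀ J : ℕ, ∑ i ∈ Finset.range (I + J), (F (k * (i * t + 1)) - F (k * (i * t + t))) ≤
      ∑ i ∈ Finset.range I, (F (k * (i * t + 1)) - F (k * (i * t + t)))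
        + (F (k * (I * t + 1)) - F (k * ((I + J) * t + 1))) := by
    intro J
    induction J with
    | zero => simp
    | succ J ih =>
      rw [← add_assoc, Finset.sum_range_succ]
      have : F (k * ((I + J + 1) * t + 1)) ≤ F (k * ((I + J) * t + t)) :=
        hanti (Nat.mul_le_mul_left _ (by nlinarith))
      linarith
  obtain ⟨J, rfl⟩ := Nat.exists_eq_add_of_le hIn
  have h4 := h3 J
  have h5 : 0 ≤ F (k * ((I + J) * t + 1)) := Nat.cast_nonneg _
  have h6 : ∑ i ∈ Finset.range I, (S * (1 / ((i * t + r : ℕ) : ℝ) - 1 / ((i * t + s : ℕ) : ℝ)) - a)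
      ≤ ∑ i ∈ Finset.range I, (F (i * t + r) - F (i * t + s)) := by
    refine Finset.sum_le_sum fun i _ => ?_
    have := hlo (i * t + r) (by omega)
    have := hup (i * t + s) (by omega)
    linarith
  have h7 : ∑ i ∈ Finset.range I, (F (k * (i * t + 1)) - F (k * (i * t + t))) ≤
      ∑ i ∈ Finset.range I,
        (S * (1 / ((k * (i * t + 1) : ℕ) : ℝ) - 1 / ((k * (i * t + t) : ℕ) : ℝ)) + a) := by
    refine Finset.sum_le_sum fun i _ => ?_
    have := hup (k * (i * t + 1)) (Nat.mul_pos (by omega) (by omega))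
    have := hlo (k * (i * t + t)) (Nat.mul_pos (by omega) (by omega))
    linarith
  have h8 := hup (k * (I * t + 1)) (Nat.mul_pos (by omega) (by omega))
  rw [Finset.sum_sub_distrib, ← Finset.mul_sum] at h6
  rw [Finset.sum_add_distrib, ← Finset.mul_sum] at h7
  simp only [Finset.sum_const, Finset.card_range, nsmul_eq_mul] at h6 h7
  have e1 := Finset.sum_sub_distrib (s := Finset.range (I + J))
    (fun i => F (i * t + r)) (fun i => F (i * t + s))
  have e2 := Finset.sum_sub_distrib (s := Finset.range (I + J))
    (fun i => F (k * (i * t + r'))) (fun i => F (k * (i * t + s')))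
  have h9 : 2 * I * a < S * c := by
    have h10 : 2 * (I : ℝ) < M * c := by rwa [div_lt_iff₀ hc] at hM
    have h11 : (M : ℝ) * a ≤ S := by rw [haa, hS]; exact_mod_cast hMa
    calc 2 * I * a < M * c * a := by gcongr
      _ = M * a * c := by ring
      _ ≤ S * c := by gcongr
  rw [hcdef, mul_sub, mul_add] at h9
  have : (Dkx k t s (I + J) : ℝ) < Dkx k t r (I + J) := by linarith
  exact_mod_cast this
end
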